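/- Let $1<\alpha,\beta<\infty$ and $0<p\leqslant q<\infty$ with $q\geqslant 2$ and $\beta p\leqslant \alpha q$. Let $0\leqslant r<1$ satisfy $r^2\leqslant \beta p/(\alpha q)$. Then for every function $f$ analytic on the open unit disk $\mathbb{D}$, $\left((\beta-1)\int_{\mathbb{D}}|f(rz)|^q(1-|z|^2)^{\beta-2}\,dA(z)\right)^{1/q}\leqslant\left((\alpha-1)\int_{\mathbb{D}}|f(z)|^p(1-|z|^2)^{\alpha-2}\,dA(z)\right)^{1/p}$, i.e. $\|T_r f\|_{A_\beta^q(\mathbb{D})}\leqslant\|f\|_{A_\alpha^p(\mathbb{D})}$. -/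

import Mathlib

open MeasureTheory Metric

/-- The weighted Bergman measure `dA_α(z) = (α-1)(1-|z|²)^(α-2) dA(z)` on the unit disk,
where `dA = dx dy / π` is the normalized area measure. -/
noncomputable def bergmanMeasure (α : ℝ) : Measure ℂ :=
  ((volume : Measure ℂ).restrict (ball (0 : ℂ) 1)).withDensity
    fun z => ENNReal.ofReal ((α - 1) * (1 - ‖z‖ ^ 2) ^ (α - 2) / Real.pi)

open Set Filter
open Complex (I)
open scoped Topology ComplexConjugate ENNReal Real

/-!
Put `γ = αq/p`, so that `β ≤ γ` and `r² ≤ β/γ`. The inequality splits into the contractive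
embedding `A_α^p ⊆ A_γ^q` and the contractivity of `T_r` from `A_γ^q` to `A_β^q`.

For the embedding, let `u = |f|ᵖ (1 - |z|²)^α` and let `μ(s)` be the hyperbolic area of the
superlevel set `{u > s}`. Away from the zeros of `f` the hyperbolic Laplacian of `log u` is
constant, so the Cauchy–Schwarz inequality turns the hyperbolic isoperimetric inequality into a
differential inequality for `μ`, with equality for constant `f`. Hence `μ` crosses the extremal
distribution only once, and among distributions with the same first moment the extremal one
maximizes the moments of higher order. The isoperimetric inequality itself is used for functions:
by the Cauchy–Pompeiu formula it follows from a bound for the Cauchy transform of a set of given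
hyperbolic area, which is largest for a disk.

For the dilation, `|z|²` has law `Beta(1, β - 1)` under `dA_β`, and the circle means of `|f|^q` are
increasing and, as `q ≥ 2`, convex in the squared radius. The law of `(β/γ) X` with
`X ~ Beta(1, β - 1)` is dominated in the convex order by `Beta(1, γ - 1)`.

A function which is merely analytic in the disk is first dilated and replaced by Taylor polynomials,
and the dilation is then removed by Fatou's lemma.
-/

/-- The Cauchy–Riemann operator `∂̄ = (∂ₓ + i ∂_y) / 2`. -/
noncomputable def dbar (F : ℂ → ℂ) (z : ℂ) : ℂ :=
  (fderiv ℝ F z 1 + I * fderiv ℝ F z I) / 2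

section Wirtinger

variable {F G : ℂ → ℂ} {z : ℂ}

lemma dbar_eq_of_hasFDerivAt {L : ℂ →L[ℝ] ℂ} (h : HasFDerivAt F L z) :
    dbar F z = (L 1 + I * L I) / 2 := by
  rw [dbar, h.fderiv]

lemma dbar_congr (h : F =ᶠ[𝓝 z] G) : dbar F z = dbar G z := by
  rw [dbar, dbar, h.fderiv_eq]

lemma dbar_add (hF : DifferentiableAt ℝ F z) (hG : DifferentiableAt ℝ G z) :
    dbar (fun w => F w + G w) z = dbar F z + dbar G z := by
  have h : HasFDerivAt (fun w => F w + G w) _ z := hF.hasFDerivAt.add hG.hasFDerivAt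
  rw [dbar_eq_of_hasFDerivAt h]
  simp only [dbar, add_apply]
  ring

lemma dbar_mul (hF : DifferentiableAt ℝ F z) (hG : DifferentiableAt ℝ G z) :
    dbar (fun w => F w * G w) z = dbar F z * G z + F z * dbar G z := by
  have h : HasFDerivAt (fun w => F w * G w) _ z := hF.hasFDerivAt.mul hG.hasFDerivAt
  rw [dbar_eq_of_hasFDerivAt h]
  simp only [dbar, add_apply, smul_apply, smul_eq_mul]
  ring

lemma dbar_eq_zero_of_differentiableAt (h : DifferentiableAt ℂ F z) : dbar F z = 0 := by
  have hI : fderiv ℂ F z I = I * fderiv ℂ F z 1 := by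
    rw [← smul_eq_mul I (fderiv ℂ F z 1), ← map_smul, smul_eq_mul, mul_one]
  rw [dbar_eq_of_hasFDerivAt (h.hasFDerivAt.restrictScalars ℝ),
    ContinuousLinearMap.coe_restrictScalars', hI, ← mul_assoc, Complex.I_mul_I]
  ring

lemma dbar_conj_of_hasDerivAt {F' : ℂ} (h : HasDerivAt F F' z) :
    dbar (fun w => conj (F w)) z = conj F' := by
  have h' : HasFDerivAt (fun w => conj (F w)) _ z :=
    Complex.conjCLE.toContinuousLinearMap.hasFDerivAt.comp z (h.hasFDerivAt.restrictScalars ℝ)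
  rw [dbar_eq_of_hasFDerivAt h']
  simp [← mul_assoc, mul_comm]

lemma dbar_const_mul (c : ℂ) (hF : DifferentiableAt ℝ F z) :
    dbar (fun w => c * F w) z = c * dbar F z := by
  rw [dbar_mul (differentiableAt_const c) hF,
    dbar_eq_zero_of_differentiableAt (differentiableAt_const c), zero_mul, zero_add]

lemma dbar_ofReal_comp {h : ℝ → ℝ} {h' : ℝ} {X : ℂ → ℝ} (hh : HasDerivAt h h' (X z))
    (hX : DifferentiableAt ℝ X z) :
    dbar (fun w => (h (X w) : ℂ)) z = h' * dbar (fun w => (X w : ℂ)) z := by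
  have hXc : HasFDerivAt (fun w => (X w : ℂ)) _ z :=
    Complex.ofRealCLM.hasFDerivAt.comp z hX.hasFDerivAt
  have hhX : HasFDerivAt (fun w => (h (X w) : ℂ)) _ z :=
    Complex.ofRealCLM.hasFDerivAt.comp z (hh.comp_hasFDerivAt z hX.hasFDerivAt)
  rw [dbar_eq_of_hasFDerivAt hXc, dbar_eq_of_hasFDerivAt hhX]
  simp
  ring

lemma dbar_ofReal_norm_sq (hF : DifferentiableAt ℂ F z) :
    dbar (fun w => ((‖F w‖ ^ 2 : ℝ) : ℂ)) z = F z * conj (deriv F z) := by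
  have hd := hF.restrictScalars ℝ
  have hconj : DifferentiableAt ℝ (fun w => conj (F w)) z :=
    Complex.conjCLE.differentiableAt.comp z hd
  have hfun : (fun w => ((‖F w‖ ^ 2 : ℝ) : ℂ)) = fun w => F w * conj (F w) := by
    ext w
    rw [Complex.mul_conj, Complex.normSq_eq_norm_sq]
  rw [hfun, dbar_mul hd hconj, dbar_eq_zero_of_differentiableAt hF,
    dbar_conj_of_hasDerivAt hF.hasDerivAt, zero_mul, zero_add]

lemma dbar_ofReal_comp_norm_sq {h : ℝ → ℝ} {h' : ℝ} (hF : DifferentiableAt ℂ F z)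
    (hh : HasDerivAt h h' (‖F z‖ ^ 2)) :
    dbar (fun w => (h (‖F w‖ ^ 2) : ℂ)) z = h' * (F z * conj (deriv F z)) := by
  rw [dbar_ofReal_comp (X := fun w => ‖F w‖ ^ 2) hh ((hF.restrictScalars ℝ).norm_sq ℝ),
    dbar_ofReal_norm_sq hF]

lemma dbar_ofReal_comp_one_sub_norm_sq {h : ℝ → ℝ} {h' : ℝ} (hh : HasDerivAt h h' (1 - ‖z‖ ^ 2)) :
    dbar (fun w => (h (1 - ‖w‖ ^ 2) : ℂ)) z = -h' * z := by
  have hh' : HasDerivAt (fun x => h (1 - x)) (-h') (‖z‖ ^ 2) := by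
    simpa [Function.comp_def] using hh.comp (‖z‖ ^ 2) ((hasDerivAt_id _).const_sub 1)
  simpa using dbar_ofReal_comp_norm_sq (F := id) (h := fun x => h (1 - x)) differentiableAt_id hh'

lemma dbar_eq_zero_of_notMem_tsupport (hz : z ∉ tsupport F) : dbar F z = 0 := by
  simp [dbar, fderiv_of_notMem_tsupport ℝ hz]

lemma hasCompactSupport_dbar (hF : HasCompactSupport F) : HasCompactSupport (dbar F) :=
  HasCompactSupport.intro hF fun _ => dbar_eq_zero_of_notMem_tsupport

lemma continuous_dbar (hF : ContDiff ℝ 1 F) : Continuous (dbar F) := by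
  have := hF.continuous_fderiv one_ne_zero
  unfold dbar
  fun_prop

lemma integral_fderiv_apply_eq_zero (hF : ContDiff ℝ 1 F) (hc : HasCompactSupport F) (v : ℂ) :
    Integrable (fun z => fderiv ℝ F z v) ∧ ∫ z, fderiv ℝ F z v = 0 := by
  have := hF.continuous_fderiv one_ne_zero
  have hint : Integrable fun z => fderiv ℝ F z v :=
    Continuous.integrable_of_hasCompactSupport (by fun_prop)
      (HasCompactSupport.intro hc fun z hz => by simp [fderiv_of_notMem_tsupport ℝ hz])
  refine ⟨hint, ?_⟩
  simpa using integral_mul_fderiv_eq_neg_fderiv_mul_of_integrable (𝕜 := ℂ) (μ := volume)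
    (f := fun _ : ℂ => (1 : ℂ)) (g := F) (v := v) (by simp) (by simpa using hint)
    (by simpa using hF.continuous.integrable_of_hasCompactSupport hc) (by simp)
    (fun z _ => hF.differentiable one_ne_zero z)

lemma integral_dbar_eq_zero (hF : ContDiff ℝ 1 F) (hc : HasCompactSupport F) :
    ∫ z, dbar F z = 0 := by
  obtain ⟨hint₁, hzero₁⟩ := integral_fderiv_apply_eq_zero hF hc 1
  obtain ⟨hintI, hzeroI⟩ := integral_fderiv_apply_eq_zero hF hc I
  unfold dbar
  rw [integral_div, integral_add hint₁ (hintI.const_mul _), integral_const_mul, hzero₁, hzeroI]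
  simp

lemma integral_dbar_mul (hF : ContDiff ℝ 1 F) (hc : HasCompactSupport F) (hG : ContDiff ℝ 1 G) :
    ∫ z, dbar F z * G z = -∫ z, F z * dbar G z := by
  have hsum : ∫ z, (dbar F z * G z + F z * dbar G z) = 0 := by
    simp_rw [← dbar_mul (hF.differentiable one_ne_zero _) (hG.differentiable one_ne_zero _)]
    exact integral_dbar_eq_zero (hF.mul hG) (hc.mul_right (f' := G))
  rw [integral_add] at hsum
  · exact eq_neg_of_add_eq_zero_left hsum
  · exact ((continuous_dbar hF).mul hG.continuous).integrable_of_hasCompactSupport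
      ((hasCompactSupport_dbar hc).mul_right (f' := G))
  · exact (hF.continuous.mul (continuous_dbar hG)).integrable_of_hasCompactSupport
      (hc.mul_right (f' := dbar G))

end Wirtinger

lemma lintegral_polar {F : ℂ → ℝ≥0∞} (hF : Measurable F) :
    ∫⁻ z, F z = ∫⁻ t in Ioi (0 : ℝ), ENNReal.ofReal t *
      ∫⁻ θ in Ioo (-π) π, F (t * Complex.exp (θ * I)) := by
  rw [← Complex.lintegral_comp_polarCoord_symm, polarCoord_target, Measure.volume_eq_prod,
    ← Measure.prod_restrict, lintegral_prod]
  · refine lintegral_congr fun t => ?_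
    rw [← lintegral_const_mul]
    · refine lintegral_congr fun θ => ?_
      rw [Complex.polarCoord_symm_apply, smul_eq_mul, Complex.exp_mul_I]
      simp only [Complex.ofReal_cos, Complex.ofReal_sin]
    · exact hF.comp (by fun_prop)
  · refine (Measurable.smul (ENNReal.measurable_ofReal.comp measurable_fst)
      (hF.comp ?_)).aemeasurable
    have hcont : Continuous fun p : ℝ × ℝ => (p.1 : ℂ) * (Real.cos p.2 + Real.sin p.2 * I) := by
      fun_prop
    exact (funext Complex.polarCoord_symm_apply : (Complex.polarCoord.symm : ℝ × ℝ → ℂ) = _) ▸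
      hcont.measurable

section CauchyPompeiu

variable {F : ℂ → ℂ}

lemma tendsto_inv_one_add_sq_atTop : Tendsto (fun y : ℝ => (1 + y ^ 2)⁻¹) atTop (𝓝 0) :=
  (tendsto_atTop_add_const_left _ _ (tendsto_pow_atTop two_ne_zero)).inv_tendsto_atTop

lemma integral_one_div_one_add_norm_sq_sq :
    ∫ z : ℂ, 1 / (π * (1 + ‖z‖ ^ 2) ^ 2) = 1 := by
  rw [integral_fun_norm_addHaar volume (fun y : ℝ => 1 / (π * (1 + y ^ 2) ^ 2))]
  have hderiv : ∀ y ∈ Ici (0 : ℝ), HasDerivAt (fun y : ℝ => -(1 / (2 * π)) * (1 + y ^ 2)⁻¹)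
      (y ^ (Module.finrank ℝ ℂ - 1) • (1 / (π * (1 + y ^ 2) ^ 2))) y := by
    intro y _
    have hne : (1 + y ^ 2) ≠ 0 := by positivity
    refine ((((hasDerivAt_pow 2 y).const_add 1).inv hne).const_mul (-(1 / (2 * π)))).congr_deriv ?_
    simp only [Complex.finrank_real_complex, smul_eq_mul]
    field_simp
    norm_num
  rw [integral_Ioi_of_hasDerivAt_of_nonneg' hderiv (fun y (hy : 0 < y) => by positivity)
    (tendsto_inv_one_add_sq_atTop.const_mul _)]
  simp [Complex.volume_ball, Measure.real, Real.pi_ne_zero]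

lemma integrableOn_ball_inv_norm_sub (z : ℂ) (R : ℝ) :
    IntegrableOn (fun ζ : ℂ => ‖ζ - z‖⁻¹) (ball z R) := by
  have hzero : IntegrableOn (fun ζ : ℂ => ‖ζ‖⁻¹) (ball 0 R) := by
    rw [integrableOn_fun_norm_addHaar (μ := volume) (f := fun y : ℝ => y⁻¹)]
    refine IntegrableOn.congr_fun (f := fun _ => (1 : ℝ)) (by simp) (fun y hy => ?_)
      measurableSet_Ioo
    simp [hy.1.ne']
  rw [← integrable_indicator_iff measurableSet_ball] at hzero ⊢
  refine (hzero.comp_sub_right z).congr (.of_forall fun ζ => ?_)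
  simp only [indicator, mem_ball, dist_eq_norm, sub_zero]

/-- A smooth regularization of the Cauchy kernel: `smoothCauchyKernel c ζ → 1 / ζ` as `c → ∞`,
while its `∂̄`-derivatives form `π` times an approximate identity. -/
noncomputable def smoothCauchyKernel (c : ℝ) (ζ : ℂ) : ℂ :=
  (c ^ 2 * (1 + c ^ 2 * ‖ζ‖ ^ 2)⁻¹ : ℝ) * conj ζ

lemma contDiff_smoothCauchyKernel (c : ℝ) : ContDiff ℝ 1 (smoothCauchyKernel c) := by
  have hden : ContDiff ℝ 1 fun ζ : ℂ => 1 + c ^ 2 * ‖ζ‖ ^ 2 :=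
    contDiff_const.add (contDiff_const.mul (contDiff_id.norm_sq ℝ))
  exact (Complex.ofRealCLM.contDiff.comp
    (contDiff_const.mul (hden.inv fun ζ => by positivity))).mul Complex.conjCLE.contDiff

lemma dbar_smoothCauchyKernel (c : ℝ) (ζ : ℂ) :
    dbar (smoothCauchyKernel c) ζ = ((c ^ 2 / (1 + c ^ 2 * ‖ζ‖ ^ 2) ^ 2 : ℝ) : ℂ) := by
  have hne : 1 + c ^ 2 * ‖ζ‖ ^ 2 ≠ 0 := by positivity
  have hderiv : HasDerivAt (fun x : ℝ => c ^ 2 * (1 + c ^ 2 * x)⁻¹) _ (‖id ζ‖ ^ 2) :=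
    ((((hasDerivAt_id _).const_mul (c ^ 2)).const_add 1).inv hne).const_mul (c ^ 2)
  have hradial := dbar_ofReal_comp_norm_sq differentiableAt_id hderiv
  have hconj : dbar (fun w => conj w) ζ = 1 := by
    simpa using dbar_conj_of_hasDerivAt (hasDerivAt_id ζ)
  have hdiff_conj : DifferentiableAt ℝ (fun w : ℂ => conj w) ζ :=
    Complex.conjCLE.differentiableAt
  have hdiff : DifferentiableAt ℝ
      (fun w : ℂ => ((c ^ 2 * (1 + c ^ 2 * ‖w‖ ^ 2)⁻¹ : ℝ) : ℂ)) ζ :=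
    Complex.ofRealCLM.differentiableAt.comp ζ (by
      have := (differentiableAt_id (𝕜 := ℝ) (x := ζ)).norm_sq ℝ
      exact (((this.const_mul _).const_add 1).inv hne).const_mul _)
  simp only [id_eq, deriv_id', map_one, mul_one] at hradial
  unfold smoothCauchyKernel
  rw [dbar_mul hdiff hdiff_conj, hradial, hconj, mul_one, mul_assoc, Complex.mul_conj,
    Complex.normSq_eq_norm_sq, ← Complex.ofReal_mul, ← Complex.ofReal_add]
  congr 1
  field_simp
  ring

lemma norm_smoothCauchyKernel_le (c : ℝ) (ζ : ℂ) : ‖smoothCauchyKernel c ζ‖ ≤ ‖ζ‖⁻¹ := by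
  have hden : 0 < 1 + c ^ 2 * ‖ζ‖ ^ 2 := by positivity
  rw [smoothCauchyKernel, norm_mul, Complex.norm_real, RCLike.norm_conj,
    Real.norm_of_nonneg (by positivity)]
  rcases (norm_nonneg ζ).eq_or_lt with hζ | hζ
  · simp [← hζ]
  · rw [← div_eq_mul_inv, inv_eq_one_div, div_mul_eq_mul_div, div_le_div_iff₀ hden hζ]
    linarith

lemma tendsto_smoothCauchyKernel {ζ : ℂ} (hζ : ζ ≠ 0) :
    Tendsto (fun c => smoothCauchyKernel c ζ) atTop (𝓝 ζ⁻¹) := by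
  have hcoef : Tendsto (fun c : ℝ => ((c ^ 2)⁻¹ + ‖ζ‖ ^ 2)⁻¹) atTop (𝓝 (0 + ‖ζ‖ ^ 2)⁻¹) :=
    ((tendsto_pow_atTop two_ne_zero).inv_tendsto_atTop.add_const _).inv₀ (by simpa using hζ)
  have hlim := ((Complex.continuous_ofReal.tendsto _).comp hcoef).mul_const (conj ζ)
  rw [zero_add, mul_comm, ← Complex.normSq_eq_norm_sq, ← Complex.inv_def] at hlim
  refine hlim.congr' ?_
  filter_upwards [eventually_gt_atTop 0] with c hc
  rw [smoothCauchyKernel, Function.comp_apply, Complex.normSq_eq_norm_sq]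
  congr 2
  field_simp

lemma tendsto_integral_mul_smoothCauchyKernel {G : ℂ → ℂ} (hG : Continuous G)
    (hc : HasCompactSupport G) :
    Tendsto (fun c => ∫ ζ, G ζ * smoothCauchyKernel c ζ) atTop (𝓝 (∫ ζ, G ζ / ζ)) := by
  obtain ⟨R, hR⟩ := hc.isCompact.isBounded.subset_ball 0
  obtain ⟨C, hC⟩ := hc.exists_bound_of_continuous hG
  refine tendsto_integral_filter_of_dominated_convergence
    (bound := (ball 0 R).indicator fun ζ => C * ‖ζ‖⁻¹) ?_ ?_ ?_ ?_
  · exact .of_forall fun c =>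
      (hG.mul (contDiff_smoothCauchyKernel c).continuous).aestronglyMeasurable
  · refine .of_forall fun c => .of_forall fun ζ => ?_
    by_cases hζ : ζ ∈ ball 0 R
    · rw [indicator_of_mem hζ, norm_mul]
      exact mul_le_mul (hC ζ) (norm_smoothCauchyKernel_le c ζ) (norm_nonneg _)
        ((norm_nonneg _).trans (hC ζ))
    · rw [indicator_of_notMem hζ, image_eq_zero_of_notMem_tsupport fun h => hζ (hR h), zero_mul,
        norm_zero]
  · rw [integrable_indicator_iff measurableSet_ball]
    have hint := integrableOn_ball_inv_norm_sub 0 R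
    simp only [sub_zero] at hint
    exact hint.const_mul C
  · filter_upwards [Measure.ae_ne volume (0 : ℂ)] with ζ hζ
    exact (tendsto_smoothCauchyKernel hζ).const_mul _

lemma tendsto_integral_mul_dbar_smoothCauchyKernel (hF : Continuous F)
    (hc : HasCompactSupport F) :
    Tendsto (fun c => ∫ ζ, F ζ * dbar (smoothCauchyKernel c) ζ) atTop (𝓝 (π * F 0)) := by
  have hdecay : Tendsto (fun x : ℂ => ‖x‖ ^ Module.finrank ℝ ℂ * (1 / (π * (1 + ‖x‖ ^ 2) ^ 2)))
      (Bornology.cobounded ℂ) (𝓝 0) := by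
    refine squeeze_zero (fun x => by positivity) (fun x => ?_)
      (tendsto_inv_one_add_sq_atTop.comp tendsto_norm_cobounded_atTop)
    simp only [Function.comp, Complex.finrank_real_complex]
    rw [mul_one_div, inv_eq_one_div, div_le_div_iff₀ (by positivity) (by positivity)]
    nlinarith [sq_nonneg ‖x‖, mul_nonneg (sub_nonneg.2 Real.two_le_pi) (sq_nonneg (1 + ‖x‖ ^ 2))]
  have hlim := tendsto_integral_comp_smul_smul_of_integrable' (μ := (volume : Measure ℂ))
    (fun x => by positivity) integral_one_div_one_add_norm_sq_sq hdecay
    (hF.integrable_of_hasCompactSupport hc) (hF.continuousAt (x := 0))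
  refine (hlim.const_mul (π : ℂ)).congr fun c => ?_
  rw [← integral_const_mul]
  refine integral_congr_ae (.of_forall fun ζ => ?_)
  have hnorm : ‖c • (0 - ζ)‖ ^ 2 = c ^ 2 * ‖ζ‖ ^ 2 := by
    rw [norm_smul, zero_sub, norm_neg, mul_pow, Real.norm_eq_abs, sq_abs]
  have hden : (1 : ℂ) + (c : ℂ) ^ 2 * (‖ζ‖ : ℂ) ^ 2 ≠ 0 := by
    exact_mod_cast (by positivity : (1 + c ^ 2 * ‖ζ‖ ^ 2) ≠ 0)
  simp only [dbar_smoothCauchyKernel, Complex.finrank_real_complex, hnorm]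
  rw [Complex.real_smul]
  push_cast
  field_simp [Complex.ofReal_ne_zero.2 Real.pi_ne_zero]

lemma integral_dbar_div (hF : ContDiff ℝ 1 F) (hc : HasCompactSupport F) :
    ∫ ζ, dbar F ζ / ζ = -(π * F 0) := by
  have hlim := tendsto_integral_mul_smoothCauchyKernel (continuous_dbar hF)
    (hasCompactSupport_dbar hc)
  simp_rw [integral_dbar_mul hF hc (contDiff_smoothCauchyKernel _)] at hlim
  exact tendsto_nhds_unique hlim (tendsto_integral_mul_dbar_smoothCauchyKernel hF.continuous hc).neg

lemma integrable_dbar_div_sub (hF : ContDiff ℝ 1 F) (hc : HasCompactSupport F) (z : ℂ) :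
    Integrable fun ζ => dbar F ζ / (ζ - z) := by
  obtain ⟨C, hC⟩ := (hasCompactSupport_dbar hc).exists_bound_of_continuous (continuous_dbar hF)
  obtain ⟨R, hR⟩ := (hasCompactSupport_dbar hc).isCompact.isBounded.subset_ball z
  have hsupp : Function.support (fun ζ => dbar F ζ / (ζ - z)) ⊆ ball z R := fun ζ hζ =>
    hR (subset_tsupport _ fun h => hζ (by simp only [h, zero_div]))
  rw [← integrableOn_iff_integrable_of_support_subset hsupp]
  have := (continuous_dbar hF).measurable
  refine ((integrableOn_ball_inv_norm_sub z R).const_mul C).mono'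
    (Measurable.aestronglyMeasurable (by fun_prop)) (.of_forall fun ζ => ?_)
  rw [norm_div, div_eq_mul_inv]
  gcongr
  exact hC ζ

/-- The **Cauchy–Pompeiu formula** for compactly supported functions. -/
theorem integral_dbar_div_sub (hF : ContDiff ℝ 1 F) (hc : HasCompactSupport F) (z : ℂ) :
    ∫ ζ, dbar F ζ / (ζ - z) = -(π * F z) := by
  have hdbar : ∀ ζ, dbar (fun w => F (w + z)) ζ = dbar F (ζ + z) := fun ζ => by
    rw [dbar, dbar, fderiv_comp_add_right]
  have hzero := integral_dbar_div (hF.comp (contDiff_id.add contDiff_const))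
    (hc.comp_homeomorph (Homeomorph.addRight z))
  rw [← integral_add_right_eq_self _ z]
  simpa [Function.comp_def, hdbar] using hzero

end CauchyPompeiu

lemma norm_ofReal_mul_exp_mul_I {t : ℝ} (ht : 0 ≤ t) (θ : ℝ) :
    ‖(t : ℂ) * Complex.exp (θ * I)‖ = t := by
  rw [norm_mul, Complex.norm_exp_ofReal_mul_I, mul_one, Complex.norm_real, Real.norm_of_nonneg ht]

lemma lintegral_radial_withDensity {w : ℝ → ℝ} (hw : Measurable w) {F : ℂ → ℝ≥0∞}
    (hF : Measurable F) (R : ℝ) :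
    ∫⁻ z, F z ∂(((volume : Measure ℂ).restrict (ball (0 : ℂ) R)).withDensity
      fun z => ENNReal.ofReal (w ‖z‖)) =
    ∫⁻ t in Ioo (0 : ℝ) R, ENNReal.ofReal t * (ENNReal.ofReal (w t) *
      ∫⁻ θ in Ioo (-π) π, F (t * Complex.exp (θ * I))) := by
  have hm : Measurable fun z : ℂ => ENNReal.ofReal (w ‖z‖) := by fun_prop
  rw [lintegral_withDensity_eq_lintegral_mul _ hm hF, ← lintegral_indicator measurableSet_ball,
    lintegral_polar ((hm.mul hF).indicator measurableSet_ball),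
    show Ioo 0 R = Iio R ∩ Ioi 0 from Iio_inter_Ioi.symm,
    ← Measure.restrict_restrict measurableSet_Iio, ← lintegral_indicator measurableSet_Iio]
  refine setLIntegral_congr_fun measurableSet_Ioi fun t (ht : 0 < t) => ?_
  have hnorm := norm_ofReal_mul_exp_mul_I ht.le
  by_cases htR : t < R
  · rw [indicator_of_mem (mem_Iio.2 htR),
      ← lintegral_const_mul (ENNReal.ofReal (w t)) (by fun_prop)]
    congr 1
    refine lintegral_congr fun θ => ?_
    rw [indicator_of_mem (by rwa [mem_ball_zero_iff, hnorm])]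
    simp only [Pi.mul_apply, hnorm]
  · rw [indicator_of_notMem (by simpa using htR), lintegral_congr (g := fun _ => 0),
      lintegral_zero, mul_zero]
    intro θ
    rw [indicator_of_notMem (by rwa [mem_ball_zero_iff, hnorm])]

lemma setIntegral_preimage_of_measurePreserving {X Y E : Type*} [MeasurableSpace X]
    [MeasurableSpace Y] [NormedAddCommGroup E] [NormedSpace ℝ E] {μ : Measure X} {ν : Measure Y}
    {T : X → Y} (hT : MeasurePreserving T μ ν) {s : Set Y} (hs : MeasurableSet s) {h : Y → E}
    (hh : AEStronglyMeasurable h ν) :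
    ∫ x in T ⁻¹' s, h (T x) ∂μ = ∫ y in s, h y ∂ν := by
  rw [← hT.map_eq, setIntegral_map hs (hT.map_eq ▸ hh) hT.aemeasurable]

lemma setIntegral_le_of_superlevelSet {X : Type*} [MeasurableSpace X] {μ : Measure X} {h : X → ℝ}
    {s t : Set X} {c : ℝ} (hs : MeasurableSet s) (ht : MeasurableSet t) (hst : μ s = μ t)
    (htop : μ t ≠ ⊤) (hint_s : IntegrableOn h s μ) (hint_t : IntegrableOn h t μ)
    (hge : ∀ᵐ x ∂μ, x ∈ t → c ≤ h x) (hle : ∀ᵐ x ∂μ, x ∉ t → h x ≤ c) :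
    ∫ x in s, h x ∂μ ≤ ∫ x in t, h x ∂μ := by
  have hc_s : IntegrableOn (fun _ => c) s μ := integrableOn_const (hst ▸ htop)
  have hc_t : IntegrableOn (fun _ => c) t μ := integrableOn_const htop
  have hsub : ∫ x in s, (h x - c) ∂μ ≤ ∫ x in t, (h x - c) ∂μ := by
    rw [← integral_indicator hs, ← integral_indicator ht]
    refine integral_mono_ae ((integrable_indicator_iff hs).2 (hint_s.sub hc_s))
      ((integrable_indicator_iff ht).2 (hint_t.sub hc_t)) ?_
    filter_upwards [hge, hle] with x hxge hxle
    by_cases hxs : x ∈ s <;> by_cases hxt : x ∈ t <;> simp [hxs, hxt, hxge, hxle]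
  rwa [integral_sub hint_s hc_s, integral_sub hint_t hc_t, setIntegral_const, setIntegral_const,
    measureReal_def, measureReal_def, hst, sub_le_sub_iff_right] at hsub

section HyperbolicMeasure

/-- The hyperbolic area measure `dA(z) / (1 - |z|²)²` on the unit disk, where `dA = dx dy / π`. -/
noncomputable def hypMeasure : Measure ℂ :=
  ((volume : Measure ℂ).restrict (ball (0 : ℂ) 1)).withDensity
    fun z => ENNReal.ofReal (1 / (π * (1 - ‖z‖ ^ 2) ^ 2))

instance : SFinite hypMeasure := by unfold hypMeasure; infer_instance

lemma hypMeasure_absolutelyContinuous : hypMeasure ≪ volume :=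
  (withDensity_absolutelyContinuous _ _).trans Measure.restrict_le_self.absolutelyContinuous

lemma ae_hypMeasure_mem_ball : ∀ᵐ z ∂hypMeasure, z ∈ ball (0 : ℂ) 1 :=
  (withDensity_absolutelyContinuous _ _).ae_le (ae_restrict_mem measurableSet_ball)

lemma hypMeasure_restrict_ball {R : ℝ} (hR : R ≤ 1) :
    hypMeasure.restrict (ball 0 R) = ((volume : Measure ℂ).restrict (ball (0 : ℂ) R)).withDensity
      fun z => ENNReal.ofReal (1 / (π * (1 - ‖z‖ ^ 2) ^ 2)) := by
  rw [hypMeasure, restrict_withDensity measurableSet_ball,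
    Measure.restrict_restrict_of_subset (ball_subset_ball hR)]

lemma one_sub_norm_sq_pos {z : ℂ} (hz : z ∈ ball (0 : ℂ) 1) : 0 < 1 - ‖z‖ ^ 2 := by
  have : ‖z‖ < 1 := by simpa using hz
  nlinarith [norm_nonneg z]

lemma contDiffAt_ofReal_inv_one_sub_norm_sq {z : ℂ} (hz : z ∈ ball (0 : ℂ) 1) :
    ContDiffAt ℝ 1 (fun w : ℂ => (((1 - ‖w‖ ^ 2)⁻¹ : ℝ) : ℂ)) z :=
  Complex.ofRealCLM.contDiff.contDiffAt.comp z
    ((contDiffAt_const.sub (contDiffAt_id.norm_sq ℝ)).inv (one_sub_norm_sq_pos hz).ne')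

lemma det_restrictScalars_toSpanSingleton (a : ℂ) :
    ((ContinuousLinearMap.toSpanSingleton ℂ a).restrictScalars ℝ).det = ‖a‖ ^ 2 := by
  have hmul : (((ContinuousLinearMap.toSpanSingleton ℂ a).restrictScalars ℝ : ℂ →L[ℝ] ℂ) :
      ℂ →ₗ[ℝ] ℂ) = Algebra.lmul ℝ ℂ a := by
    ext
    simp [mul_comm]
  rw [ContinuousLinearMap.det, hmul, ← Complex.normSq_eq_norm_sq, ← Algebra.norm_complex_apply]
  rfl

lemma measurePreserving_hypMeasure {φ φ' : ℂ → ℂ} (hm : Measurable φ)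
    (hd : ∀ z ∈ ball (0 : ℂ) 1, HasDerivAt φ (φ' z) z) (hinj : InjOn φ (ball 0 1))
    (himg : φ '' ball 0 1 = ball 0 1)
    (hw : ∀ z ∈ ball (0 : ℂ) 1, ‖φ' z‖ * (1 - ‖z‖ ^ 2) = 1 - ‖φ z‖ ^ 2) :
    MeasurePreserving φ hypMeasure hypMeasure := by
  refine ⟨hm, ?_⟩
  ext s hs
  rw [Measure.map_apply hm hs, hypMeasure, withDensity_apply _ hs, withDensity_apply _ (hm hs),
    ← lintegral_indicator hs, ← lintegral_indicator (hm hs)]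
  conv_rhs => rw [← himg]
  rw [lintegral_image_eq_lintegral_abs_det_fderiv_mul volume measurableSet_ball
    (fun z hz => ((hd z hz).hasFDerivAt.restrictScalars ℝ).hasFDerivWithinAt) hinj]
  refine setLIntegral_congr_fun measurableSet_ball fun z hz => ?_
  rw [det_restrictScalars_toSpanSingleton, abs_of_nonneg (by positivity)]
  by_cases hφs : φ z ∈ s
  · rw [indicator_of_mem hφs, indicator_of_mem (show z ∈ φ ⁻¹' s from hφs),
      ← ENNReal.ofReal_mul (by positivity)]
    have hz_pos := one_sub_norm_sq_pos hz
    have hφz_pos : 0 < 1 - ‖φ z‖ ^ 2 := one_sub_norm_sq_pos (himg ▸ mem_image_of_mem φ hz)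
    rw [← hw z hz] at hφz_pos ⊢
    have hφ' : ‖φ' z‖ ≠ 0 := left_ne_zero_of_mul hφz_pos.ne'
    congr 1
    field_simp
  · rw [indicator_of_notMem hφs, indicator_of_notMem (show z ∉ φ ⁻¹' s from hφs), mul_zero]

lemma measurePreserving_const_mul_hypMeasure {η : ℂ} (hη : ‖η‖ = 1) :
    MeasurePreserving (fun z => η * z) hypMeasure hypMeasure := by
  have hη0 : η ≠ 0 := norm_ne_zero_iff.1 (hη ▸ one_ne_zero)
  refine measurePreserving_hypMeasure (φ' := fun _ => η) (by fun_prop)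
    (fun z _ => by simpa using (hasDerivAt_id z).const_mul η)
    (fun x _ y _ h => mul_left_cancel₀ hη0 h) ?_ fun z _ => by simp [hη]
  exact Subset.antisymm (image_subset_iff.2 fun z hz => by simpa [hη] using hz)
    fun z hz => ⟨η⁻¹ * z, by simpa [hη] using hz, by simp [hη0]⟩

end HyperbolicMeasure

section DiskSwap

/-- The involutive automorphism of the unit disk exchanging `0` and `a`. -/
noncomputable def diskSwap (a z : ℂ) : ℂ := (a - z) / (1 - conj a * z)

variable {a z : ℂ}

lemma one_sub_conj_mul_ne_zero (ha : a ∈ ball (0 : ℂ) 1) (hz : z ∈ ball (0 : ℂ) 1) :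
    1 - conj a * z ≠ 0 := by
  rw [mem_ball_zero_iff] at ha hz
  intro h
  have hnorm : ‖a‖ * ‖z‖ = 1 := by simpa using congrArg norm (sub_eq_zero.1 h).symm
  nlinarith [norm_nonneg a, norm_nonneg z]

lemma one_sub_norm_diskSwap_sq (ha : a ∈ ball (0 : ℂ) 1) (hz : z ∈ ball (0 : ℂ) 1) :
    1 - ‖diskSwap a z‖ ^ 2 = (1 - ‖a‖ ^ 2) * (1 - ‖z‖ ^ 2) / ‖1 - conj a * z‖ ^ 2 := by
  have hne := one_sub_conj_mul_ne_zero ha hz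
  have hnorm : ‖1 - conj a * z‖ ^ 2 ≠ 0 := by positivity
  rw [diskSwap, norm_div, div_pow, eq_div_iff hnorm, sub_mul, div_mul_cancel₀ _ hnorm]
  simp only [← Complex.normSq_eq_norm_sq, Complex.normSq_apply, Complex.sub_re, Complex.sub_im,
    Complex.one_re, Complex.one_im, Complex.mul_re, Complex.mul_im, Complex.conj_re,
    Complex.conj_im]
  ring

lemma diskSwap_mem_ball (ha : a ∈ ball (0 : ℂ) 1) (hz : z ∈ ball (0 : ℂ) 1) :
    diskSwap a z ∈ ball (0 : ℂ) 1 := by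
  have hne := one_sub_conj_mul_ne_zero ha hz
  have ha_pos := one_sub_norm_sq_pos ha
  have hz_pos := one_sub_norm_sq_pos hz
  have hpos : 0 < 1 - ‖diskSwap a z‖ ^ 2 := by
    rw [one_sub_norm_diskSwap_sq ha hz]
    positivity
  rw [mem_ball_zero_iff]
  nlinarith [norm_nonneg (diskSwap a z)]

lemma diskSwap_diskSwap (ha : a ∈ ball (0 : ℂ) 1) (hz : z ∈ ball (0 : ℂ) 1) :
    diskSwap a (diskSwap a z) = z := by
  have hne := one_sub_conj_mul_ne_zero ha hz
  have hne' := one_sub_conj_mul_ne_zero ha (diskSwap_mem_ball ha hz)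
  rw [diskSwap, div_eq_iff hne', diskSwap]
  generalize conj a = c at *
  rw [mul_div_assoc', sub_div' hne, sub_div' hne, mul_div_assoc']
  congr 1
  ring

lemma measurable_diskSwap (a : ℂ) : Measurable (diskSwap a) := by
  unfold diskSwap; fun_prop

lemma hasDerivAt_diskSwap (ha : a ∈ ball (0 : ℂ) 1) (hz : z ∈ ball (0 : ℂ) 1) :
    HasDerivAt (diskSwap a) (-(1 - conj a * a) / (1 - conj a * z) ^ 2) z := by
  have hnum : HasDerivAt (fun w => a - w) (-1) z := by simpa using (hasDerivAt_id z).const_sub a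
  have hden : HasDerivAt (fun w => 1 - conj a * w) (-conj a) z := by
    simpa using ((hasDerivAt_id z).const_mul (conj a)).const_sub 1
  exact (hnum.div hden (one_sub_conj_mul_ne_zero ha hz)).congr_deriv (by ring)

lemma measurePreserving_diskSwap (ha : a ∈ ball (0 : ℂ) 1) :
    MeasurePreserving (diskSwap a) hypMeasure hypMeasure := by
  refine measurePreserving_hypMeasure (measurable_diskSwap a)
    (fun z hz => hasDerivAt_diskSwap ha hz)
    (LeftInvOn.injOn fun z hz => diskSwap_diskSwap ha hz) ?_ fun z hz => ?_
  · exact Subset.antisymm (image_subset_iff.2 fun z hz => diskSwap_mem_ball ha hz)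
      fun z hz => ⟨diskSwap a z, diskSwap_mem_ball ha hz, diskSwap_diskSwap ha hz⟩
  · have hnum : ‖-(1 - conj a * a)‖ = 1 - ‖a‖ ^ 2 := by
      rw [← Complex.normSq_eq_conj_mul_self, Complex.normSq_eq_norm_sq, norm_neg,
        ← Complex.ofReal_one, ← Complex.ofReal_sub, Complex.norm_real,
        Real.norm_of_nonneg (one_sub_norm_sq_pos ha).le]
    rw [one_sub_norm_diskSwap_sq ha hz, norm_div, hnum, norm_pow]
    ring

end DiskSwap

section MeanValue

variable {B : ℂ → ℂ} {ρ t : ℝ}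

lemma setIntegral_Ioo_circle (hB : DifferentiableOn ℂ B (ball 0 ρ)) (ht0 : 0 < t) (ht : t < ρ) :
    ∫ θ in Ioo (-π) π, B (t * Complex.exp (θ * I)) = 2 * π * B 0 := by
  have hmean : Real.circleAverage B 0 t = B 0 := DiffContOnCl.circleAverage
    (DifferentiableOn.diffContOnCl_ball hB (by
      rw [abs_of_pos ht0]; exact closedBall_subset_ball ht))
  have hper : Function.Periodic (fun θ : ℝ => B (circleMap 0 t θ)) (2 * π) := fun θ => by
    simp only [periodic_circleMap 0 t θ]
  have hshift := hper.intervalIntegral_add_eq (-π) 0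
  rw [zero_add, show -π + 2 * π = π by ring] at hshift
  rw [Real.circleAverage_def, ← hshift, intervalIntegral.integral_of_le (by linarith [Real.pi_pos]),
    integral_Ioc_eq_integral_Ioo] at hmean
  simp only [circleMap_zero] at hmean
  rw [← hmean, Complex.real_smul, ← mul_assoc]
  have hcancel : (2 * π : ℂ) * ((2 * π)⁻¹ : ℝ) = 1 := by
    have : (π : ℂ) ≠ 0 := Complex.ofReal_ne_zero.2 Real.pi_ne_zero
    push_cast
    field_simp
  rw [hcancel, one_mul]

lemma setLIntegral_Ioo_circle (hB : DifferentiableOn ℂ B (ball 0 ρ))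
    (hre : ∀ z ∈ ball (0 : ℂ) ρ, 0 ≤ (B z).re) (ht0 : 0 < t) (ht : t < ρ) :
    ∫⁻ θ in Ioo (-π) π, ENNReal.ofReal (B (t * Complex.exp (θ * I))).re =
      ENNReal.ofReal (2 * π) * ENNReal.ofReal (B 0).re := by
  have hmem : ∀ θ : ℝ, (t : ℂ) * Complex.exp (θ * I) ∈ ball (0 : ℂ) ρ := fun θ => by
    rwa [mem_ball_zero_iff, norm_ofReal_mul_exp_mul_I ht0.le]
  have hcont : Continuous fun θ : ℝ => B (t * Complex.exp (θ * I)) :=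
    hB.continuousOn.comp_continuous (by fun_prop) hmem
  have hint : IntegrableOn (fun θ : ℝ => B (t * Complex.exp (θ * I))) (Ioo (-π) π) :=
    hcont.integrableOn_Icc.mono_set Ioo_subset_Icc_self
  have hint_re : IntegrableOn (fun θ : ℝ => (B (t * Complex.exp (θ * I))).re) (Ioo (-π) π) :=
    hint.re
  have hre_integral : ∫ θ in Ioo (-π) π, (B (t * Complex.exp (θ * I))).re =
      (∫ θ in Ioo (-π) π, B (t * Complex.exp (θ * I))).re := integral_re hint
  rw [← ofReal_integral_eq_lintegral_ofReal hint_re (.of_forall fun θ => hre _ (hmem θ)),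
    ← ENNReal.ofReal_mul (by positivity), hre_integral, setIntegral_Ioo_circle hB ht0 ht]
  simp

lemma lintegral_two_mul_div_one_sub_sq_sq (h0 : 0 < ρ) (h1 : ρ < 1) :
    ∫⁻ t in Ioo 0 ρ, ENNReal.ofReal (2 * t / (1 - t ^ 2) ^ 2) =
      ENNReal.ofReal (ρ ^ 2 / (1 - ρ ^ 2)) := by
  have hne : ∀ t ∈ Icc 0 ρ, 1 - t ^ 2 ≠ 0 := fun t ht => by nlinarith [ht.1, ht.2]
  have hcont : ContinuousOn (fun t : ℝ => 2 * t / (1 - t ^ 2) ^ 2) (Icc 0 ρ) :=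
    ContinuousOn.div (by fun_prop) (by fun_prop) fun t ht => pow_ne_zero _ (hne t ht)
  have hderiv : ∀ t ∈ Icc 0 ρ,
      HasDerivAt (fun t : ℝ => (1 - t ^ 2)⁻¹) (2 * t / (1 - t ^ 2) ^ 2) t := fun t ht => by
    have hpoly : HasDerivAt (fun t : ℝ => 1 - t ^ 2) (-(2 * t)) t := by
      simpa using (hasDerivAt_pow 2 t).const_sub 1
    exact (hpoly.inv (hne t ht)).congr_deriv (by ring)
  rw [← ofReal_integral_eq_lintegral_ofReal (hcont.integrableOn_Icc.mono_set Ioo_subset_Icc_self)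
    ((ae_restrict_iff' measurableSet_Ioo).2 (.of_forall fun t ht => by
      have := ht.1; positivity)),
    ← integral_Ioc_eq_integral_Ioo, ← intervalIntegral.integral_of_le h0.le,
    intervalIntegral.integral_eq_sub_of_hasDerivAt (uIcc_of_le h0.le ▸ hderiv)
      (uIcc_of_le h0.le ▸ hcont).intervalIntegrable]
  congr 1
  have := hne ρ (right_mem_Icc.2 h0.le)
  field_simp
  ring

lemma setLIntegral_ball_hypMeasure (hm : Measurable B) (hB : DifferentiableOn ℂ B (ball 0 ρ))
    (hre : ∀ z ∈ ball (0 : ℂ) ρ, 0 ≤ (B z).re) (h0 : 0 < ρ) (h1 : ρ < 1) :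
    ∫⁻ z in ball 0 ρ, ENNReal.ofReal (B z).re ∂hypMeasure =
      ENNReal.ofReal (ρ ^ 2 / (1 - ρ ^ 2)) * ENNReal.ofReal (B 0).re := by
  rw [hypMeasure_restrict_ball h1.le, lintegral_radial_withDensity
      (w := fun t => 1 / (π * (1 - t ^ 2) ^ 2)) (by fun_prop) (by fun_prop),
    ← lintegral_two_mul_div_one_sub_sq_sq h0 h1, ← lintegral_mul_const _ (by fun_prop)]
  refine setLIntegral_congr_fun measurableSet_Ioo fun t ht => ?_
  have ht0 := ht.1
  have hpos : 0 < 1 - t ^ 2 := by nlinarith [ht.2]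
  rw [setLIntegral_Ioo_circle hB hre ht0 ht.2, ← mul_assoc, ← mul_assoc,
    ← ENNReal.ofReal_mul ht0.le, ← ENNReal.ofReal_mul (by positivity)]
  congr 2
  field_simp

lemma hypMeasure_ball (h0 : 0 < ρ) (h1 : ρ < 1) :
    hypMeasure (ball 0 ρ) = ENNReal.ofReal (ρ ^ 2 / (1 - ρ ^ 2)) := by
  simpa using setLIntegral_ball_hypMeasure (B := fun _ => 1) (ρ := ρ) (by fun_prop) (by fun_prop)
    (by simp) h0 h1

lemma hypMeasure_lt_top_of_isCompact {K : Set ℂ} (hK : IsCompact K) (hKD : K ⊆ ball 0 1) :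
    hypMeasure K < ⊤ := by
  obtain ⟨r, hr, hKr⟩ := exists_pos_lt_subset_ball one_pos hK.isClosed hKD
  refine (measure_mono hKr).trans_lt ?_
  rw [hypMeasure_ball hr.1 hr.2]
  exact ENNReal.ofReal_lt_top

end MeanValue

section IntegralHypMeasure

variable {E : Type*} [NormedAddCommGroup E] {h : ℂ → E}

lemma integrable_hypMeasure_of_tsupport_subset (hcont : Continuous h) (hc : HasCompactSupport h)
    (hs : tsupport h ⊆ ball 0 1) : Integrable h hypMeasure := by
  obtain ⟨C, hC⟩ := hc.exists_bound_of_continuous hcont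
  rw [← integrableOn_iff_integrable_of_support_subset (subset_tsupport h)]
  exact Measure.integrableOn_of_bounded (hypMeasure_lt_top_of_isCompact hc hs).ne
    hcont.aestronglyMeasurable (.of_forall hC)

variable [NormedSpace ℝ E]

lemma hypMeasure_density_smul {z : ℂ} (hz : z ∈ ball (0 : ℂ) 1) (v : E) :
    (ENNReal.ofReal (1 / (π * (1 - ‖z‖ ^ 2) ^ 2))).toReal • (1 - ‖z‖ ^ 2) ^ 2 • v = π⁻¹ • v := by
  have := one_sub_norm_sq_pos hz
  rw [ENNReal.toReal_ofReal (by positivity), smul_smul]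
  congr 1
  field_simp

lemma integrable_one_sub_norm_sq_sq_smul_hypMeasure (hh : Integrable h) :
    Integrable (fun z => (1 - ‖z‖ ^ 2) ^ 2 • h z) hypMeasure := by
  rw [hypMeasure, integrable_withDensity_iff_integrable_smul₀' (by fun_prop)
    (.of_forall fun _ => ENNReal.ofReal_lt_top)]
  exact ((hh.smul π⁻¹).integrableOn (s := ball 0 1)).congr_fun
    (fun z hz => (hypMeasure_density_smul hz (h z)).symm) measurableSet_ball

lemma integral_one_sub_norm_sq_sq_smul_hypMeasure (hs : Function.support h ⊆ ball 0 1) :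
    ∫ z, (1 - ‖z‖ ^ 2) ^ 2 • h z ∂hypMeasure = π⁻¹ • ∫ z, h z := by
  rw [hypMeasure, integral_withDensity_eq_integral_toReal_smul₀ (by fun_prop)
    (.of_forall fun _ => ENNReal.ofReal_lt_top),
    setIntegral_congr_fun measurableSet_ball fun z hz => hypMeasure_density_smul hz (h z),
    integral_smul, setIntegral_eq_integral_of_forall_compl_eq_zero fun z hz =>
      Function.notMem_support.1 fun h => hz (hs h)]

end IntegralHypMeasure

section InverseDiskSwap

variable {ζ : ℂ} {E : Set ℂ}

lemma integrableOn_inv_norm_hypMeasure :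
    IntegrableOn (fun w : ℂ => ‖w‖⁻¹) (ball 0 (1 / 2)) hypMeasure := by
  have hdens : ∀ z ∈ ball (0 : ℂ) (1 / 2), ENNReal.ofReal (1 / (π * (1 - ‖z‖ ^ 2) ^ 2)) ≤ 2 := by
    intro z hz
    rw [mem_ball_zero_iff] at hz
    have hquarter : (3 / 4 : ℝ) ≤ 1 - ‖z‖ ^ 2 := by nlinarith [norm_nonneg z]
    have hsq : (9 / 16 : ℝ) ≤ (1 - ‖z‖ ^ 2) ^ 2 := by nlinarith
    rw [← ENNReal.ofReal_ofNat 2]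
    refine ENNReal.ofReal_le_ofReal ?_
    rw [div_le_iff₀ (by positivity)]
    nlinarith [Real.pi_gt_three]
  have hle : hypMeasure.restrict (ball 0 (1 / 2)) ≤
      (2 : ℝ≥0∞) • volume.restrict (ball 0 (1 / 2)) := by
    rw [hypMeasure_restrict_ball (by norm_num), ← withDensity_const]
    exact withDensity_mono ((ae_restrict_iff' measurableSet_ball).2 (.of_forall hdens))
  have hint := integrableOn_ball_inv_norm_sub 0 (1 / 2)
  simp only [sub_zero] at hint
  exact (Integrable.smul_measure hint ENNReal.ofNat_ne_top).mono_measure hle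

lemma inv_norm_le_indicator_add_two (w : ℂ) :
    ‖w‖⁻¹ ≤ (ball (0 : ℂ) (1 / 2)).indicator (fun w => ‖w‖⁻¹) w + 2 := by
  by_cases hw : w ∈ ball (0 : ℂ) (1 / 2)
  · rw [indicator_of_mem hw]
    linarith
  · rw [indicator_of_notMem hw, zero_add]
    rw [mem_ball_zero_iff, not_lt] at hw
    exact inv_le_of_inv_le₀ (by norm_num) (by linarith)

lemma integrable_indicator_inv_norm_diskSwap (hζ : ζ ∈ ball (0 : ℂ) 1) :
    Integrable (fun z => (ball (0 : ℂ) (1 / 2)).indicator (fun w => ‖w‖⁻¹) (diskSwap ζ z))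
      hypMeasure := by
  have hind : Integrable ((ball (0 : ℂ) (1 / 2)).indicator fun w => ‖w‖⁻¹) hypMeasure :=
    (integrable_indicator_iff measurableSet_ball).2 integrableOn_inv_norm_hypMeasure
  exact ((measurePreserving_diskSwap hζ).integrable_comp hind.aestronglyMeasurable).2 hind

lemma integrableOn_inv_norm_diskSwap (hζ : ζ ∈ ball (0 : ℂ) 1) (hE : hypMeasure E ≠ ⊤) :
    IntegrableOn (fun z => ‖diskSwap ζ z‖⁻¹) E hypMeasure := by
  have := measurable_diskSwap ζ
  refine Integrable.mono' ((integrable_indicator_inv_norm_diskSwap hζ).integrableOn.add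
    (integrableOn_const hE (C := 2))) (by fun_prop) (.of_forall fun z => ?_)
  rw [Real.norm_of_nonneg (by positivity)]
  exact inv_norm_le_indicator_add_two _

lemma integrableOn_inv_diskSwap (hζ : ζ ∈ ball (0 : ℂ) 1) (hE : hypMeasure E ≠ ⊤) :
    IntegrableOn (fun z => (diskSwap ζ z)⁻¹) E hypMeasure :=
  (integrableOn_inv_norm_diskSwap hζ hE).mono'
    (measurable_diskSwap ζ).inv.aestronglyMeasurable (.of_forall fun _ => (norm_inv _).le)

lemma setIntegral_inv_norm_diskSwap_le (hζ : ζ ∈ ball (0 : ℂ) 1) (hE : hypMeasure E ≠ ⊤) :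
    ∫ z in E, ‖diskSwap ζ z‖⁻¹ ∂hypMeasure ≤
      ∫ w in ball (0 : ℂ) (1 / 2), ‖w‖⁻¹ ∂hypMeasure + hypMeasure.real E * 2 := by
  have hind := integrable_indicator_inv_norm_diskSwap hζ
  have hpull : ∫ z, (ball (0 : ℂ) (1 / 2)).indicator (fun w => ‖w‖⁻¹) (diskSwap ζ z) ∂hypMeasure =
      ∫ w in ball (0 : ℂ) (1 / 2), ‖w‖⁻¹ ∂hypMeasure := by
    simpa [integral_indicator measurableSet_ball] using
      setIntegral_preimage_of_measurePreserving (measurePreserving_diskSwap hζ) MeasurableSet.univ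
        ((integrable_indicator_iff measurableSet_ball).2
          integrableOn_inv_norm_hypMeasure).aestronglyMeasurable
  have htwo : IntegrableOn (fun _ : ℂ => (2 : ℝ)) E hypMeasure := integrableOn_const hE
  calc
    _ ≤ ∫ z in E, ((ball (0 : ℂ) (1 / 2)).indicator (fun w => ‖w‖⁻¹) (diskSwap ζ z) + 2)
          ∂hypMeasure :=
      integral_mono (integrableOn_inv_norm_diskSwap hζ hE) (hind.integrableOn.add htwo)
        fun z => inv_norm_le_indicator_add_two _
    _ = ∫ z in E, (ball (0 : ℂ) (1 / 2)).indicator (fun w => ‖w‖⁻¹) (diskSwap ζ z) ∂hypMeasure +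
          hypMeasure.real E * 2 := by
      rw [integral_add hind.integrableOn htwo, setIntegral_const, smul_eq_mul]
    _ ≤ _ := by
      rw [← hpull]
      gcongr ?_ + _
      exact setIntegral_le_integral hind
        (.of_forall fun z => indicator_nonneg (fun _ _ => by positivity) _)

end InverseDiskSwap

section AhlforsBeurling

variable {ρ : ℝ} {w : ℂ}

lemma inv_diskSwap_re_sub (hρ : 0 < ρ) (hw : w ≠ ρ) :
    (diskSwap ρ w)⁻¹.re - (1 + ρ ^ 2) / (2 * ρ) =
      (1 - ρ ^ 2) / (2 * ρ) * (ρ ^ 2 - ‖w‖ ^ 2) / ‖ρ - w‖ ^ 2 := by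
  have hnormSq : Complex.normSq (ρ - w) ≠ 0 := by simpa using sub_ne_zero.2 hw.symm
  rw [diskSwap, inv_div, Complex.div_re, ← Complex.normSq_eq_norm_sq, ← Complex.normSq_eq_norm_sq]
  field_simp
  simp only [Complex.normSq_apply, Complex.conj_ofReal, Complex.sub_re, Complex.sub_im,
    Complex.one_re, Complex.one_im, Complex.mul_re, Complex.mul_im, Complex.ofReal_re,
    Complex.ofReal_im]
  ring

lemma le_inv_diskSwap_re (hρ0 : 0 < ρ) (hρ1 : ρ < 1) (hw : ‖w‖ < ρ) :
    (1 + ρ ^ 2) / (2 * ρ) ≤ (diskSwap ρ w)⁻¹.re := by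
  have hne : w ≠ ρ := by
    rintro rfl
    simp [abs_of_pos hρ0] at hw
  have hρ_sq : 0 ≤ 1 - ρ ^ 2 := by nlinarith
  have hw_sq : 0 ≤ ρ ^ 2 - ‖w‖ ^ 2 := by nlinarith [norm_nonneg w]
  rw [← sub_nonneg, inv_diskSwap_re_sub hρ0 hne]
  positivity

lemma inv_diskSwap_re_le (hρ0 : 0 < ρ) (hρ1 : ρ < 1) (hw : ρ ≤ ‖w‖) :
    (diskSwap ρ w)⁻¹.re ≤ (1 + ρ ^ 2) / (2 * ρ) := by
  by_cases hne : w = ρ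
  · simp only [diskSwap, hne, sub_self, zero_div, inv_zero, Complex.zero_re]
    positivity
  have hρ_sq : 0 ≤ 1 - ρ ^ 2 := by nlinarith
  have hw_sq : ρ ^ 2 - ‖w‖ ^ 2 ≤ 0 := by nlinarith
  rw [← sub_nonpos, inv_diskSwap_re_sub hρ0 hne]
  exact div_nonpos_of_nonpos_of_nonneg (mul_nonpos_of_nonneg_of_nonpos (by positivity) hw_sq)
    (by positivity)

lemma setIntegral_ball_inv_diskSwap_re (hρ0 : 0 < ρ) (hρ1 : ρ < 1) :
    ∫ w in ball 0 ρ, (diskSwap ρ w)⁻¹.re ∂hypMeasure = ρ / (1 - ρ ^ 2) := by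
  have hρ_sq : 0 < 1 - ρ ^ 2 := by nlinarith
  have hpos : ∀ w ∈ ball (0 : ℂ) ρ, 0 ≤ (diskSwap ρ w)⁻¹.re := fun w hw =>
    le_trans (by positivity) (le_inv_diskSwap_re hρ0 hρ1 (mem_ball_zero_iff.1 hw))
  have hdiff : DifferentiableOn ℂ (fun w => (diskSwap ρ w)⁻¹) (ball 0 ρ) := by
    simp only [diskSwap, inv_div]
    refine DifferentiableOn.div (by fun_prop) (by fun_prop) fun w hw hzero => ?_
    rw [mem_ball_zero_iff, ← sub_eq_zero.1 hzero, Complex.norm_of_nonneg hρ0.le] at hw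
    exact lt_irrefl _ hw
  have hmeas : Measurable fun w => (diskSwap ρ w)⁻¹ := (measurable_diskSwap ρ).inv
  rw [integral_eq_lintegral_of_nonneg_ae ((ae_restrict_iff' measurableSet_ball).2 (.of_forall hpos))
      (Complex.measurable_re.comp hmeas).aestronglyMeasurable,
    setLIntegral_ball_hypMeasure hmeas hdiff hpos hρ0 hρ1, ← ENNReal.ofReal_mul (by positivity)]
  have hzero : (diskSwap ρ 0)⁻¹ = ((ρ⁻¹ : ℝ) : ℂ) := by simp [diskSwap]
  rw [hzero, Complex.ofReal_re, ENNReal.toReal_ofReal (by positivity)]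
  field_simp

lemma setIntegral_inv_diskSwap_ofReal_re_le (hρ0 : 0 < ρ) (hρ1 : ρ < 1) {E : Set ℂ}
    (hEm : MeasurableSet E) (hE : hypMeasure E = ENNReal.ofReal (ρ ^ 2 / (1 - ρ ^ 2))) :
    ∫ w in E, (diskSwap ρ w)⁻¹.re ∂hypMeasure ≤ ρ / (1 - ρ ^ 2) := by
  have hρ : (ρ : ℂ) ∈ ball (0 : ℂ) 1 := by
    rwa [mem_ball_zero_iff, Complex.norm_of_nonneg hρ0.le]
  have hball := hypMeasure_ball hρ0 hρ1
  rw [← setIntegral_ball_inv_diskSwap_re hρ0 hρ1]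
  refine setIntegral_le_of_superlevelSet hEm measurableSet_ball (hE.trans hball.symm)
    (by simp [hball]) (integrableOn_inv_diskSwap hρ (by simp [hE])).re
    (integrableOn_inv_diskSwap hρ (by simp [hball])).re (c := (1 + ρ ^ 2) / (2 * ρ))
    (.of_forall fun w hw => ?_) (.of_forall fun w hw => ?_)
  · exact le_inv_diskSwap_re hρ0 hρ1 (mem_ball_zero_iff.1 hw)
  · exact inv_diskSwap_re_le hρ0 hρ1 (not_lt.1 (mt mem_ball_zero_iff.2 hw))

lemma setIntegral_inv_diskSwap_re_le {ζ η : ℂ} (hζ : ζ ∈ ball (0 : ℂ) 1) (hη : ‖η‖ = 1) {E : Set ℂ}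
    (hEm : MeasurableSet E) (hρ0 : 0 < ρ) (hρ1 : ρ < 1)
    (hE : hypMeasure E = ENNReal.ofReal (ρ ^ 2 / (1 - ρ ^ 2))) :
    ∫ z in E, (η * (diskSwap ζ z)⁻¹).re ∂hypMeasure ≤ ρ / (1 - ρ ^ 2) := by
  have hρ : (ρ : ℂ) ∈ ball (0 : ℂ) 1 := by
    rwa [mem_ball_zero_iff, Complex.norm_of_nonneg hρ0.le]
  have hη0 : η ≠ 0 := norm_ne_zero_iff.1 (hη ▸ one_ne_zero)
  let T : ℂ → ℂ := fun w => diskSwap ζ (η * diskSwap ρ w)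
  have hT : MeasurePreserving T hypMeasure hypMeasure :=
    (measurePreserving_diskSwap hζ).comp
      ((measurePreserving_const_mul_hypMeasure hη).comp (measurePreserving_diskSwap hρ))
  have hpull : ∀ w ∈ ball (0 : ℂ) 1, η * (diskSwap ζ (T w))⁻¹ = (diskSwap ρ w)⁻¹ := fun w hw => by
    have hmem : η * diskSwap ρ w ∈ ball (0 : ℂ) 1 := by
      simpa [hη] using diskSwap_mem_ball hρ hw
    rw [diskSwap_diskSwap hζ hmem, mul_inv, mul_inv_cancel_left₀ hη0]
  have hmeas : Measurable fun z => (η * (diskSwap ζ z)⁻¹).re := by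
    have := measurable_diskSwap ζ
    fun_prop
  have hTE : MeasurableSet (T ⁻¹' E) := hT.measurable hEm
  rw [← setIntegral_preimage_of_measurePreserving hT hEm hmeas.aestronglyMeasurable]
  refine le_trans (le_of_eq (setIntegral_congr_ae hTE ?_))
    (setIntegral_inv_diskSwap_ofReal_re_le hρ0 hρ1 hTE
      ((hT.measure_preimage hEm.nullMeasurableSet).trans hE))
  filter_upwards [ae_hypMeasure_mem_ball] with w hw _
  rw [hpull w hw]

/-- A hyperbolic analogue of the Ahlfors–Beurling inequality. -/
theorem norm_setIntegral_inv_diskSwap_le {ζ : ℂ} (hζ : ζ ∈ ball (0 : ℂ) 1) {E : Set ℂ}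
    (hEm : MeasurableSet E) (hE : hypMeasure E ≠ ⊤) :
    ‖∫ z in E, (diskSwap ζ z)⁻¹ ∂hypMeasure‖ ≤
      √(hypMeasure.real E + hypMeasure.real E ^ 2) := by
  set A := hypMeasure.real E
  have hEA : hypMeasure E = ENNReal.ofReal A := (ENNReal.ofReal_toReal hE).symm
  rcases measureReal_nonneg.eq_or_lt (a := 0) (b := A) with hA | hA
  · rw [Measure.restrict_eq_zero.2 (by simp [hEA, ← hA])]
    simp
  set J := ∫ z in E, (diskSwap ζ z)⁻¹ ∂hypMeasure with hJ
  by_cases hJ0 : J = 0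
  · rw [hJ0, norm_zero]
    positivity
  have hη : ‖conj J / ‖J‖‖ = 1 := by simp [hJ0]
  have hre : ∫ z in E, (conj J / ‖J‖ * (diskSwap ζ z)⁻¹).re ∂hypMeasure = ‖J‖ := by
    have hcomm := integral_re ((integrableOn_inv_diskSwap hζ hE).const_mul (conj J / ‖J‖))
    simp only [RCLike.re_to_complex] at hcomm
    rw [hcomm, integral_const_mul, ← hJ, div_mul_eq_mul_div, ← Complex.normSq_eq_conj_mul_self,
      Complex.normSq_eq_norm_sq, ← Complex.ofReal_div, Complex.ofReal_re, sq,
      mul_div_cancel_right₀ _ (norm_ne_zero_iff.2 hJ0)]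
  obtain ⟨ρ, hρ0, hρ_sq⟩ : ∃ ρ : ℝ, 0 < ρ ∧ ρ ^ 2 = A / (1 + A) :=
    ⟨√(A / (1 + A)), by positivity, Real.sq_sqrt (by positivity)⟩
  have hone_sub : 1 - ρ ^ 2 = (1 + A)⁻¹ := by rw [hρ_sq]; field_simp; ring
  have hρ1 : ρ < 1 := by
    have : 0 < (1 + A)⁻¹ := by positivity
    nlinarith
  have hradius : ρ ^ 2 / (1 - ρ ^ 2) = A := by rw [hone_sub, hρ_sq]; field_simp
  have hvalue : ρ / (1 - ρ ^ 2) = √(A + A ^ 2) := by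
    refine ((Real.sqrt_eq_iff_mul_self_eq (by positivity) ?_).2 ?_).symm
    · rw [hone_sub]; positivity
    · rw [← sq, div_pow, hone_sub, hρ_sq]; field_simp
  rw [← hre, ← hvalue]
  exact setIntegral_inv_diskSwap_re_le hζ hη hEm hρ0 hρ1 (hradius ▸ hEA)

end AhlforsBeurling

section HyperbolicIsoperimetric

lemma dbar_one_sub_mul_conj_mul_inv (z : ℂ) {ζ : ℂ} (hζ : ζ ∈ ball (0 : ℂ) 1) :
    dbar (fun w => (1 - z * conj w) * ((1 - ‖w‖ ^ 2)⁻¹ : ℝ)) ζ =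
      (ζ - z) * ((1 - ‖ζ‖ ^ 2)⁻¹ ^ 2 : ℝ) := by
  have hpos := one_sub_norm_sq_pos hζ
  have hlin : HasDerivAt (fun w => 1 - conj z * w) (-conj z) ζ := by
    simpa using ((hasDerivAt_id ζ).const_mul (conj z)).const_sub 1
  have hdbar_lin := dbar_conj_of_hasDerivAt hlin
  simp only [map_sub, map_mul, map_one, map_neg, Complex.conj_conj] at hdbar_lin
  have hdiff_conj : DifferentiableAt ℝ (fun w : ℂ => conj w) ζ := Complex.conjCLE.differentiableAt
  have hdiff_inv := (contDiffAt_ofReal_inv_one_sub_norm_sq hζ).differentiableAt one_ne_zero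
  rw [dbar_mul (by fun_prop) hdiff_inv, hdbar_lin,
    dbar_ofReal_comp_one_sub_norm_sq (hasDerivAt_inv hpos.ne')]
  have hcast : (1 : ℂ) - ζ * conj ζ = ((1 - ‖ζ‖ ^ 2 : ℝ) : ℂ) := by
    rw [Complex.mul_conj, Complex.normSq_eq_norm_sq, Complex.ofReal_sub, Complex.ofReal_one]
  have hne : ((1 - ‖ζ‖ ^ 2 : ℝ) : ℂ) ≠ 0 := Complex.ofReal_ne_zero.2 hpos.ne'
  push_cast at hcast hne ⊢
  rw [← hcast] at hne ⊢
  field_simp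
  ring

variable {ψ : ℂ → ℂ} {z : ℂ}

lemma contDiff_mul_one_sub_mul_conj_mul_inv (hψ : ContDiff ℝ 1 ψ) (hs : tsupport ψ ⊆ ball 0 1) :
    ContDiff ℝ 1 fun w => ψ w * ((1 - z * conj w) * ((1 - ‖w‖ ^ 2)⁻¹ : ℝ)) := by
  have hconj : ContDiff ℝ 1 fun w : ℂ => conj w := Complex.conjCLE.contDiff
  refine contMDiff_iff_contDiff.1 (contMDiff_of_tsupport fun w hw => ?_)
  exact (hψ.contDiffAt.mul ((contDiff_const.sub (contDiff_const.mul hconj)).contDiffAt.mul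
    (contDiffAt_ofReal_inv_one_sub_norm_sq (hs (tsupport_mul_subset_left hw))))).contMDiffAt

lemma dbar_mul_one_sub_mul_conj_mul_inv {ζ : ℂ} (hψ : DifferentiableAt ℝ ψ ζ)
    (hζ : ζ ∈ ball (0 : ℂ) 1) (hζz : ζ ≠ z) :
    (1 - ‖ζ‖ ^ 2) ^ 2 •
        (dbar (fun w => ψ w * ((1 - z * conj w) * ((1 - ‖w‖ ^ 2)⁻¹ : ℝ))) ζ / (ζ - z)) =
      (1 - ‖ζ‖ ^ 2) • dbar ψ ζ * (diskSwap ζ z)⁻¹ + ψ ζ := by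
  have hne : ((1 - ‖ζ‖ ^ 2 : ℝ) : ℂ) ≠ 0 :=
    Complex.ofReal_ne_zero.2 (one_sub_norm_sq_pos hζ).ne'
  have hsub : ζ - z ≠ 0 := sub_ne_zero.2 hζz
  have hconj : DifferentiableAt ℝ (fun w : ℂ => conj w) ζ := Complex.conjCLE.differentiableAt
  have hinv := (contDiffAt_ofReal_inv_one_sub_norm_sq hζ).differentiableAt one_ne_zero
  have hkernel : DifferentiableAt ℝ (fun w => (1 - z * conj w) * ((1 - ‖w‖ ^ 2)⁻¹ : ℝ)) ζ :=
    ((hconj.const_mul z).const_sub 1).mul hinv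
  rw [dbar_mul hψ hkernel,
    dbar_one_sub_mul_conj_mul_inv z hζ, diskSwap, inv_div, Complex.real_smul, Complex.real_smul,
    Complex.ofReal_pow, Complex.ofReal_pow, Complex.ofReal_inv]
  generalize ((1 - ‖ζ‖ ^ 2 : ℝ) : ℂ) = y at hne
  field_simp

/-- The reproducing identity behind the hyperbolic isoperimetric inequality: it is the
Cauchy–Pompeiu formula for `w ↦ ψ w * (1 - z * conj w) / (1 - |w|²)`. -/
theorem add_integral_hypMeasure_eq (hψ : ContDiff ℝ 1 ψ) (hc : HasCompactSupport ψ)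
    (hs : tsupport ψ ⊆ ball 0 1) (hz : z ∈ ball (0 : ℂ) 1) :
    ψ z + ∫ ζ, ψ ζ ∂hypMeasure =
      -∫ ζ, (1 - ‖ζ‖ ^ 2) • dbar ψ ζ * (diskSwap ζ z)⁻¹ ∂hypMeasure := by
  let Ψ : ℂ → ℂ := fun w => ψ w * ((1 - z * conj w) * ((1 - ‖w‖ ^ 2)⁻¹ : ℝ))
  have hΨ : ContDiff ℝ 1 Ψ := contDiff_mul_one_sub_mul_conj_mul_inv hψ hs
  have hΨc : HasCompactSupport Ψ := hc.mul_right
  have hΨz : Ψ z = ψ z := by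
    have hne := (one_sub_norm_sq_pos hz).ne'
    have hcast : (1 : ℂ) - z * conj z = ((1 - ‖z‖ ^ 2 : ℝ) : ℂ) := by
      rw [Complex.mul_conj, Complex.normSq_eq_norm_sq, Complex.ofReal_sub, Complex.ofReal_one]
    simp only [Ψ]
    rw [hcast, ← Complex.ofReal_mul, mul_inv_cancel₀ hne, Complex.ofReal_one, mul_one]
  have hsupp : Function.support (fun ζ => dbar Ψ ζ / (ζ - z)) ⊆ ball 0 1 := by
    intro ζ hζ
    have hζΨ : ζ ∈ tsupport Ψ := by_contra fun h =>
      hζ (by simp only [dbar_eq_zero_of_notMem_tsupport h, zero_div])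
    exact hs (tsupport_mul_subset_left hζΨ)
  have hint := integrable_one_sub_norm_sq_sq_smul_hypMeasure (integrable_dbar_div_sub hΨ hΨc z)
  have hae : (fun ζ => (1 - ‖ζ‖ ^ 2) ^ 2 • (dbar Ψ ζ / (ζ - z))) =ᵐ[hypMeasure]
      fun ζ => (1 - ‖ζ‖ ^ 2) • dbar ψ ζ * (diskSwap ζ z)⁻¹ + ψ ζ := by
    filter_upwards [ae_hypMeasure_mem_ball,
      hypMeasure_absolutelyContinuous.ae_le (Measure.ae_ne volume z)] with ζ hζ hζz
    exact dbar_mul_one_sub_mul_conj_mul_inv (hψ.differentiable one_ne_zero ζ) hζ hζz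
  have hint_ψ := integrable_hypMeasure_of_tsupport_subset hψ.continuous hc hs
  have hint_dbar : Integrable (fun ζ => (1 - ‖ζ‖ ^ 2) • dbar ψ ζ * (diskSwap ζ z)⁻¹)
      hypMeasure :=
    ((hint.congr hae).sub hint_ψ).congr (.of_forall fun ζ => add_sub_cancel_right _ (ψ ζ))
  have hmain := integral_one_sub_norm_sq_sq_smul_hypMeasure hsupp
  rw [integral_congr_ae hae, integral_add hint_dbar hint_ψ, integral_dbar_div_sub hΨ hΨc, hΨz,
    Complex.real_smul, mul_neg, ← mul_assoc, Complex.ofReal_inv,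
    inv_mul_cancel₀ (Complex.ofReal_ne_zero.2 Real.pi_ne_zero), one_mul] at hmain
  rw [← neg_eq_iff_eq_neg.2 hmain]
  ring

section Fubini

variable {w : ℂ → ℂ} {E : Set ℂ}

lemma integrable_mul_inv_diskSwap_prod (hw : Measurable w) (hint : Integrable w hypMeasure)
    (hE : hypMeasure E ≠ ⊤) :
    Integrable (Function.uncurry fun z ζ => w ζ * (diskSwap ζ z)⁻¹)
      ((hypMeasure.restrict E).prod hypMeasure) := by
  have hmeas : Measurable fun x : ℂ × ℂ => w x.2 * (diskSwap x.2 x.1)⁻¹ := by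
    unfold diskSwap
    fun_prop
  refine (integrable_prod_iff' hmeas.aestronglyMeasurable).2 ⟨?_, ?_⟩
  · filter_upwards [ae_hypMeasure_mem_ball] with ζ hζ
    exact (integrableOn_inv_diskSwap hζ hE).const_mul (w ζ)
  · refine Integrable.mono' (hint.norm.mul_const
        (∫ w in ball (0 : ℂ) (1 / 2), ‖w‖⁻¹ ∂hypMeasure + hypMeasure.real E * 2))
      (hmeas.norm.comp measurable_swap).aestronglyMeasurable.integral_prod_right' ?_
    filter_upwards [ae_hypMeasure_mem_ball] with ζ hζ
    rw [Real.norm_of_nonneg (integral_nonneg fun _ => norm_nonneg _)]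
    simp only [norm_mul, norm_inv, integral_const_mul]
    exact mul_le_mul_of_nonneg_left (setIntegral_inv_norm_diskSwap_le hζ hE) (norm_nonneg _)

lemma norm_setIntegral_integral_mul_inv_diskSwap_le (hw : Measurable w)
    (hint : Integrable w hypMeasure) (hEm : MeasurableSet E) (hE : hypMeasure E ≠ ⊤) :
    ‖∫ z in E, ∫ ζ, w ζ * (diskSwap ζ z)⁻¹ ∂hypMeasure ∂hypMeasure‖ ≤
      (∫ ζ, ‖w ζ‖ ∂hypMeasure) * √(hypMeasure.real E + hypMeasure.real E ^ 2) := by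
  have : IsFiniteMeasure (hypMeasure.restrict E) := isFiniteMeasure_restrict.2 hE
  rw [integral_integral_swap (integrable_mul_inv_diskSwap_prod hw hint hE), ← integral_mul_const]
  refine norm_integral_le_of_norm_le (hint.norm.mul_const _) ?_
  filter_upwards [ae_hypMeasure_mem_ball] with ζ hζ
  rw [integral_const_mul, norm_mul]
  gcongr
  exact norm_setIntegral_inv_diskSwap_le hζ hEm hE

end Fubini

lemma integrable_one_sub_norm_sq_smul_dbar (hψ : ContDiff ℝ 1 ψ) (hc : HasCompactSupport ψ)
    (hs : tsupport ψ ⊆ ball 0 1) :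
    Integrable (fun ζ => (1 - ‖ζ‖ ^ 2) • dbar ψ ζ) hypMeasure := by
  have hcont : Continuous fun ζ => (1 - ‖ζ‖ ^ 2) • dbar ψ ζ := by
    have := continuous_dbar hψ
    fun_prop
  have hsub : tsupport (fun ζ => (1 - ‖ζ‖ ^ 2) • dbar ψ ζ) ⊆ tsupport ψ :=
    closure_minimal (fun ζ hζ => by_contra fun h =>
      hζ (by simp only [dbar_eq_zero_of_notMem_tsupport h, smul_zero])) (isClosed_tsupport _)
  exact integrable_hypMeasure_of_tsupport_subset hcont
    (hc.of_isClosed_subset (isClosed_tsupport _) hsub) (hsub.trans hs)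

lemma mul_sqrt_add_sq_le_of_mul_add_le {A c N Q : ℝ} (hA : 0 ≤ A) (hAN : A * c ≤ N) (hQ : 0 ≤ Q)
    (h : A * (c + N) ≤ Q * √(A + A ^ 2)) : c * √(A + A ^ 2) ≤ Q := by
  rcases (Real.sqrt_nonneg (A + A ^ 2)).eq_or_lt with h0 | hpos
  · rwa [← h0, mul_zero]
  · refine le_of_mul_le_mul_right ?_ hpos
    rw [mul_assoc, Real.mul_self_sqrt (by positivity)]
    nlinarith

/-- A functional form of the hyperbolic isoperimetric inequality. -/
theorem mul_sqrt_add_sq_le_integral_norm_dbar {φ : ℂ → ℝ} (hφ : ContDiff ℝ 1 φ)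
    (hc : HasCompactSupport φ) (hs : tsupport φ ⊆ ball 0 1) (hφ0 : ∀ z, 0 ≤ φ z) {E : Set ℂ}
    (hEm : MeasurableSet E) {c : ℝ} (hc0 : 0 < c) (hφE : ∀ z ∈ E, φ z = c) :
    c * √(hypMeasure.real E + hypMeasure.real E ^ 2) ≤
      ∫ ζ, (1 - ‖ζ‖ ^ 2) * ‖dbar (fun z => (φ z : ℂ)) ζ‖ ∂hypMeasure := by
  set A := hypMeasure.real E
  set N := ∫ z, φ z ∂hypMeasure
  let ψ : ℂ → ℂ := fun z => (φ z : ℂ)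
  have hψ : ContDiff ℝ 1 ψ := Complex.ofRealCLM.contDiff.comp hφ
  have hψc : HasCompactSupport ψ := hc.comp_left Complex.ofReal_zero
  have hψs : tsupport ψ ⊆ ball 0 1 :=
    (closure_mono fun z hz => by simpa [ψ] using hz).trans hs
  have hE_subset : E ⊆ tsupport φ := fun z hz =>
    subset_tsupport _ (by simpa [hφE z hz] using hc0.ne')
  have hE : hypMeasure E ≠ ⊤ :=
    ((measure_mono hE_subset).trans_lt (hypMeasure_lt_top_of_isCompact hc hs)).ne
  have hA0 : 0 ≤ A := measureReal_nonneg
  have hAN : A * c ≤ N := by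
    have hA : ∫ z in E, φ z ∂hypMeasure = A * c := by
      rw [setIntegral_congr_fun hEm hφE, setIntegral_const, smul_eq_mul]
    exact hA ▸ setIntegral_le_integral
      (integrable_hypMeasure_of_tsupport_subset hφ.continuous hc hs) (.of_forall hφ0)
  have hnorm : ∫ ζ, ‖(1 - ‖ζ‖ ^ 2) • dbar ψ ζ‖ ∂hypMeasure =
      ∫ ζ, (1 - ‖ζ‖ ^ 2) * ‖dbar ψ ζ‖ ∂hypMeasure := by
    refine integral_congr_ae ?_
    filter_upwards [ae_hypMeasure_mem_ball] with ζ hζ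
    rw [norm_smul, Real.norm_of_nonneg (one_sub_norm_sq_pos hζ).le]
  have hinner : EqOn (fun z => ∫ ζ, (1 - ‖ζ‖ ^ 2) • dbar ψ ζ * (diskSwap ζ z)⁻¹ ∂hypMeasure)
      (fun _ => -((c + N : ℝ) : ℂ)) E := by
    intro z hz
    simp only
    rw [← neg_eq_iff_eq_neg.2 (add_integral_hypMeasure_eq hψ hψc hψs (hs (hE_subset hz))),
      integral_complex_ofReal]
    simp only [ψ, hφE z hz, Complex.ofReal_add, N]
  have hbound := norm_setIntegral_integral_mul_inv_diskSwap_le (by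
    have := continuous_dbar hψ
    fun_prop) (integrable_one_sub_norm_sq_smul_dbar hψ hψc hψs) hEm hE
  rw [setIntegral_congr_fun hEm hinner, setIntegral_const, norm_smul, norm_neg, Complex.norm_real,
    Real.norm_of_nonneg hA0, Real.norm_of_nonneg (by nlinarith), hnorm] at hbound
  exact mul_sqrt_add_sq_le_of_mul_add_le hA0 hAN
    (hnorm ▸ integral_nonneg fun _ => norm_nonneg _) hbound

end HyperbolicIsoperimetric

/-- The function `|f|ᵖ (1 - |z|²)^α`, extended by zero outside of the unit disk. The contractive
embedding rests on the decay of the hyperbolic area of its superlevel sets. -/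
noncomputable def weightedPow (f : ℂ → ℂ) (p α : ℝ) (z : ℂ) : ℝ :=
  ‖f z‖ ^ p * (max 0 (1 - ‖z‖ ^ 2)) ^ α

/-- The logarithmic derivative `∂ log (|f|ᵖ (1 - |z|²)^α)`, where `∂ = (∂ₓ - i ∂_y) / 2`. -/
noncomputable def weightedLogDeriv (f : ℂ → ℂ) (p α : ℝ) (z : ℂ) : ℂ :=
  p / 2 * (deriv f z / f z) - α * (conj z * ((1 - ‖z‖ ^ 2)⁻¹ : ℝ))

section WeightedPow

variable {f : ℂ → ℂ} {p α : ℝ} {z : ℂ}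

lemma weightedPow_nonneg (z : ℂ) : 0 ≤ weightedPow f p α z := by
  unfold weightedPow
  positivity

lemma continuous_weightedPow (hf : Continuous f) (hp : 0 < p) (hα : 0 < α) :
    Continuous (weightedPow f p α) :=
  (hf.norm.rpow_const fun _ => .inr hp.le).mul
    (Continuous.rpow_const (by fun_prop) fun _ => .inr hα.le)

lemma mem_ball_of_weightedPow_pos (hα : 0 < α) (hz : 0 < weightedPow f p α z) :
    z ∈ ball (0 : ℂ) 1 := by
  by_contra h
  rw [mem_ball_zero_iff, not_lt] at h
  have hmax : max 0 (1 - ‖z‖ ^ 2) = 0 := max_eq_left (by nlinarith)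
  simp [weightedPow, hmax, Real.zero_rpow hα.ne'] at hz

lemma ne_zero_of_weightedPow_pos (hp : 0 < p) (hz : 0 < weightedPow f p α z) : f z ≠ 0 := by
  intro h
  simp [weightedPow, h, Real.zero_rpow hp.ne'] at hz

lemma isCompact_le_weightedPow (hf : Continuous f) (hp : 0 < p) (hα : 0 < α) {a : ℝ} (ha : 0 < a) :
    IsCompact {z | a ≤ weightedPow f p α z} :=
  Metric.isCompact_of_isClosed_isBounded
    (isClosed_le continuous_const (continuous_weightedPow hf hp hα))
    (isBounded_ball.subset fun _ hz => mem_ball_of_weightedPow_pos hα (ha.trans_le hz))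

lemma hypMeasure_le_weightedPow_lt_top (hf : Continuous f) (hp : 0 < p) (hα : 0 < α) {a : ℝ}
    (ha : 0 < a) : hypMeasure {z | a ≤ weightedPow f p α z} < ⊤ :=
  hypMeasure_lt_top_of_isCompact (isCompact_le_weightedPow hf hp hα ha) fun _ hz =>
    mem_ball_of_weightedPow_pos hα (ha.trans_le hz)

lemma hypMeasure_lt_weightedPow_lt_top (hf : Continuous f) (hp : 0 < p) (hα : 0 < α) {a : ℝ}
    (ha : 0 < a) : hypMeasure {z | a < weightedPow f p α z} < ⊤ :=
  (measure_mono fun _ hz => (mem_ofPred.1 hz).le).trans_lt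
    (hypMeasure_le_weightedPow_lt_top hf hp hα ha)

lemma eventuallyEq_exp_weightedLog (hf : Continuous f) (hp : 0 < p) (hα : 0 < α)
    (hz : 0 < weightedPow f p α z) :
    weightedPow f p α =ᶠ[𝓝 z] fun w =>
      Real.exp (p / 2 * Real.log (‖f w‖ ^ 2) + α * Real.log (1 - ‖w‖ ^ 2)) := by
  filter_upwards [(continuous_weightedPow hf hp hα).continuousAt.eventually (lt_mem_nhds hz)]
    with w hw
  have hdisk := one_sub_norm_sq_pos (mem_ball_of_weightedPow_pos hα hw)
  have hnorm : 0 < ‖f w‖ := norm_pos_iff.2 (ne_zero_of_weightedPow_pos hp hw)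
  rw [weightedPow, max_eq_right hdisk.le, Real.exp_add, Real.rpow_def_of_pos hdisk,
    Real.rpow_def_of_pos hnorm, Real.log_pow]
  congr 2 <;> push_cast <;> ring

lemma contDiffAt_weightedLog (hf : Differentiable ℂ f) (hz : z ∈ ball (0 : ℂ) 1) (h0 : f z ≠ 0) :
    ContDiffAt ℝ 1
      (fun w => p / 2 * Real.log (‖f w‖ ^ 2) + α * Real.log (1 - ‖w‖ ^ 2)) z := by
  have hnorm : ContDiffAt ℝ 1 (fun w => ‖f w‖ ^ 2) z :=
    (hf.contDiff.restrict_scalars ℝ).contDiffAt.norm_sq ℝ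
  have hdisk : ContDiffAt ℝ 1 (fun w : ℂ => 1 - ‖w‖ ^ 2) z :=
    contDiffAt_const.sub (contDiffAt_id.norm_sq ℝ)
  exact (contDiffAt_const.mul (hnorm.log (by positivity))).add
    (contDiffAt_const.mul (hdisk.log (one_sub_norm_sq_pos hz).ne'))

lemma dbar_weightedLog (hf : Differentiable ℂ f) (hz : z ∈ ball (0 : ℂ) 1) (h0 : f z ≠ 0) :
    dbar (fun w => ((p / 2 * Real.log (‖f w‖ ^ 2) + α * Real.log (1 - ‖w‖ ^ 2) : ℝ) : ℂ)) z =
      conj (weightedLogDeriv f p α z) := by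
  have hdisk := (one_sub_norm_sq_pos hz).ne'
  have hnorm : ‖f z‖ ^ 2 ≠ 0 := by positivity
  have hdiff_f : DifferentiableAt ℝ (fun w => ((p / 2 * Real.log (‖f w‖ ^ 2) : ℝ) : ℂ)) z :=
    Complex.ofRealCLM.differentiableAt.comp z
      (((((hf z).restrictScalars ℝ).norm_sq ℝ).log hnorm).const_mul (p / 2))
  have hdiff_disk : DifferentiableAt ℝ (fun w => ((α * Real.log (1 - ‖w‖ ^ 2) : ℝ) : ℂ)) z :=
    Complex.ofRealCLM.differentiableAt.comp z
      ((((differentiableAt_id.norm_sq ℝ).const_sub 1).log hdisk).const_mul α)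
  have hsplit : (fun w => ((p / 2 * Real.log (‖f w‖ ^ 2) + α * Real.log (1 - ‖w‖ ^ 2) : ℝ) : ℂ)) =
      fun w => ((p / 2 * Real.log (‖f w‖ ^ 2) : ℝ) : ℂ) +
        ((α * Real.log (1 - ‖w‖ ^ 2) : ℝ) : ℂ) :=
    funext fun w => Complex.ofReal_add _ _
  rw [hsplit, dbar_add hdiff_f hdiff_disk,
    dbar_ofReal_comp_norm_sq (hf z) ((Real.hasDerivAt_log hnorm).const_mul (p / 2)),
    dbar_ofReal_comp_one_sub_norm_sq ((Real.hasDerivAt_log hdisk).const_mul α), weightedLogDeriv]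
  have hmul_conj : ((‖f z‖ ^ 2 : ℝ) : ℂ) = f z * conj (f z) := by
    rw [Complex.mul_conj, Complex.normSq_eq_norm_sq]
  have hconj : conj (f z) ≠ 0 := (map_ne_zero _).2 h0
  simp only [map_sub, map_mul, map_div₀, Complex.conj_conj, Complex.conj_ofReal, map_ofNat]
  rw [Complex.ofReal_mul, Complex.ofReal_mul, Complex.ofReal_inv (‖f z‖ ^ 2), hmul_conj]
  push_cast
  field_simp
  ring

lemma contDiffAt_weightedPow (hf : Differentiable ℂ f) (hp : 0 < p) (hα : 0 < α)
    (hz : 0 < weightedPow f p α z) : ContDiffAt ℝ 1 (weightedPow f p α) z :=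
  (contDiffAt_weightedLog hf (mem_ball_of_weightedPow_pos hα hz)
    (ne_zero_of_weightedPow_pos hp hz)).exp.congr_of_eventuallyEq
    (eventuallyEq_exp_weightedLog hf.continuous hp hα hz)

lemma dbar_weightedPow (hf : Differentiable ℂ f) (hp : 0 < p) (hα : 0 < α)
    (hz : 0 < weightedPow f p α z) :
    dbar (fun w => (weightedPow f p α w : ℂ)) z =
      weightedPow f p α z * conj (weightedLogDeriv f p α z) := by
  have hexp := eventuallyEq_exp_weightedLog hf.continuous hp hα hz
  have hexp_ofReal : (fun w => (weightedPow f p α w : ℂ)) =ᶠ[𝓝 z] _ :=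
    hexp.fun_comp Complex.ofReal
  have hdisk := mem_ball_of_weightedPow_pos hα hz
  have h0 := ne_zero_of_weightedPow_pos hp hz
  rw [dbar_congr hexp_ofReal, ← dbar_weightedLog hf hdisk h0, hexp.eq_of_nhds]
  exact dbar_ofReal_comp (Real.hasDerivAt_exp _)
    ((contDiffAt_weightedLog hf hdisk h0).differentiableAt one_ne_zero)

lemma contDiffAt_weightedLogDeriv (hf : Differentiable ℂ f) (hz : z ∈ ball (0 : ℂ) 1)
    (h0 : f z ≠ 0) : ContDiffAt ℝ 1 (weightedLogDeriv f p α) z := by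
  have hlog : ContDiffAt ℝ 1 (fun w => deriv f w / f w) z :=
    ((hf.contDiff.deriv').contDiffAt.div hf.contDiff.contDiffAt h0).restrict_scalars ℝ
  have hconj : ContDiff ℝ 1 fun w : ℂ => conj w := Complex.conjCLE.contDiff
  exact (contDiffAt_const.mul hlog).sub
    (contDiffAt_const.mul (hconj.contDiffAt.mul (contDiffAt_ofReal_inv_one_sub_norm_sq hz)))

/-- Up to the factor `-α`, this is the density of the hyperbolic area: `log |f|` is harmonic away
from the zeros of `f`, so only the weight contributes. -/
lemma dbar_weightedLogDeriv (hf : Differentiable ℂ f) (hz : z ∈ ball (0 : ℂ) 1) (h0 : f z ≠ 0) :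
    dbar (weightedLogDeriv f p α) z = -(α * ((1 - ‖z‖ ^ 2)⁻¹ ^ 2 : ℝ)) := by
  have hpos := one_sub_norm_sq_pos hz
  have hlog : DifferentiableAt ℂ (fun w => p / 2 * (deriv f w / f w) : ℂ → ℂ) z :=
    (((hf.contDiff (n := 2)).deriv'.differentiable one_ne_zero z).div (hf z) h0).const_mul _
  have hdiff_conj : DifferentiableAt ℝ (fun w : ℂ => conj w) z := Complex.conjCLE.differentiableAt
  have hconj : dbar (fun w => conj w) z = 1 := by
    simpa using dbar_conj_of_hasDerivAt (hasDerivAt_id z)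
  have hdiff_inv := (contDiffAt_ofReal_inv_one_sub_norm_sq hz).differentiableAt one_ne_zero
  have hprod : DifferentiableAt ℝ (fun w : ℂ => conj w * ((1 - ‖w‖ ^ 2)⁻¹ : ℝ)) z :=
    hdiff_conj.mul hdiff_inv
  have hsplit : weightedLogDeriv f p α = fun w => p / 2 * (deriv f w / f w) +
      (-α : ℂ) * (conj w * ((1 - ‖w‖ ^ 2)⁻¹ : ℝ)) := by
    ext w
    rw [weightedLogDeriv]
    ring
  rw [hsplit, dbar_add (hlog.restrictScalars ℝ) (hprod.const_mul _),
    dbar_eq_zero_of_differentiableAt hlog, dbar_const_mul _ hprod,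
    dbar_mul hdiff_conj hdiff_inv, hconj,
    dbar_ofReal_comp_one_sub_norm_sq (hasDerivAt_inv hpos.ne')]
  have hcast : (1 : ℂ) - conj z * z = ((1 - ‖z‖ ^ 2 : ℝ) : ℂ) := by
    rw [Complex.conj_mul', Complex.ofReal_sub, Complex.ofReal_one, Complex.ofReal_pow]
  have hne : ((1 - ‖z‖ ^ 2 : ℝ) : ℂ) ≠ 0 := Complex.ofReal_ne_zero.2 hpos.ne'
  push_cast at hcast hne ⊢
  rw [← hcast] at hne ⊢
  field_simp
  ring

end WeightedPow

section General

variable {X : Type*} [MeasurableSpace X] {μ : Measure X}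

lemma integral_le_mul_measureReal_of_le_indicator {h : X → ℝ} {C : ℝ} {S : Set X}
    (hS : MeasurableSet S) (hfin : μ S ≠ ⊤) (h0 : ∀ x, 0 ≤ h x)
    (hle : ∀ x, h x ≤ S.indicator (fun _ => C) x) : ∫ x, h x ∂μ ≤ C * μ.real S := by
  have hind : ∫ x, S.indicator (fun _ => C) x ∂μ = C * μ.real S := by
    rw [integral_indicator hS, setIntegral_const, smul_eq_mul, mul_comm]
  rw [← hind]
  exact integral_mono_of_nonneg (.of_forall h0)
    ((integrable_indicator_iff hS).2 (integrableOn_const hfin)) (.of_forall hle)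

lemma sq_integral_mul_le_integral_mul_sq_mul_integral {w g : X → ℝ} (hw0 : ∀ x, 0 ≤ w x)
    (hw : Integrable w μ) (hwg : Integrable (fun x => w x * g x) μ)
    (hwg2 : Integrable (fun x => w x * g x ^ 2) μ) :
    (∫ x, w x * g x ∂μ) ^ 2 ≤ (∫ x, w x * g x ^ 2 ∂μ) * ∫ x, w x ∂μ := by
  have hquad : ∀ t : ℝ, 0 ≤ (∫ x, w x ∂μ) * (t * t) + (-2 * ∫ x, w x * g x ∂μ) * t +
      ∫ x, w x * g x ^ 2 ∂μ := by
    intro t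
    have hexpand : ∫ x, w x * (g x - t) ^ 2 ∂μ = (∫ x, w x ∂μ) * (t * t) +
        (-2 * ∫ x, w x * g x ∂μ) * t + ∫ x, w x * g x ^ 2 ∂μ := by
      have hsum : Integrable (fun x => w x * (t * t) + w x * g x * (-2 * t)) μ :=
        (hw.mul_const _).add (hwg.mul_const _)
      calc ∫ x, w x * (g x - t) ^ 2 ∂μ
          = ∫ x, (w x * (t * t) + w x * g x * (-2 * t) + w x * g x ^ 2) ∂μ := by
            congr 1 with x
            ring
        _ = _ := by
            rw [integral_add hsum hwg2, integral_add (hw.mul_const _) (hwg.mul_const _),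
              integral_mul_const, integral_mul_const]
            ring
    rw [← hexpand]
    exact integral_nonneg fun x => mul_nonneg (hw0 x) (sq_nonneg _)
  have hdiscrim := discrim_le_zero hquad
  rw [discrim] at hdiscrim
  nlinarith

end General

/-- `φ` is a smoothing of the function `t ↦ log (t / a)` truncated to the interval `[a, b]`. The
bound on `t * φ' t` says that `φ` varies by at most as much as this function. -/
structure IsLogCutoff (a b : ℝ) (φ : ℝ → ℝ) : Prop where
  contDiff : ContDiff ℝ 1 φ
  deriv_nonneg : ∀ t, 0 ≤ deriv φ t
  mul_deriv_le_one : ∀ t, t * deriv φ t ≤ 1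
  eq_zero_of_le : ∀ t ≤ a, φ t = 0
  eq_of_ge : ∀ t, b ≤ t → φ t = φ b

namespace IsLogCutoff

variable {a b : ℝ} {φ : ℝ → ℝ}

lemma monotone (hφ : IsLogCutoff a b φ) : Monotone φ :=
  monotone_of_deriv_nonneg (hφ.contDiff.differentiable one_ne_zero) hφ.deriv_nonneg

lemma nonneg (hφ : IsLogCutoff a b φ) (t : ℝ) : 0 ≤ φ t := by
  rcases le_total t a with h | h
  · exact (hφ.eq_zero_of_le t h).ge
  · exact (hφ.eq_zero_of_le a le_rfl).ge.trans (hφ.monotone h)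

lemma le_right (hφ : IsLogCutoff a b φ) (t : ℝ) : φ t ≤ φ b := by
  rcases le_total t b with h | h
  · exact hφ.monotone h
  · exact (hφ.eq_of_ge t h).le

lemma deriv_eq_zero_of_le (hφ : IsLogCutoff a b φ) {t : ℝ} (ht : t ≤ a) : deriv φ t = 0 :=
  IsLocalMin.deriv_eq_zero (.of_forall fun x => (hφ.eq_zero_of_le t ht).trans_le (hφ.nonneg x))

lemma deriv_eq_zero_of_ge (hφ : IsLogCutoff a b φ) {t : ℝ} (ht : b ≤ t) : deriv φ t = 0 :=
  IsLocalMax.deriv_eq_zero (.of_forall fun x => (hφ.le_right x).trans_eq (hφ.eq_of_ge t ht).symm)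

lemma continuous_mul_deriv (hφ : IsLogCutoff a b φ) : Continuous fun t => t * deriv φ t :=
  continuous_id.mul (hφ.contDiff.continuous_deriv le_rfl)

end IsLogCutoff

section LevelSet

variable {f : ℂ → ℂ} {p α a b : ℝ} {φ : ℝ → ℝ}

lemma tsupport_comp_weightedPow_subset {E : Type*} [Zero E] {h : ℝ → E} (hf : Continuous f)
    (hp : 0 < p) (hα : 0 < α) (hh : ∀ t ≤ a, h t = 0) :
    tsupport (fun z => h (weightedPow f p α z)) ⊆ {z | a ≤ weightedPow f p α z} :=
  closure_minimal (fun _ hz => le_of_not_ge fun hza => hz (hh _ hza))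
    (isClosed_le continuous_const (continuous_weightedPow hf hp hα))

lemma integrable_comp_weightedPow_mul {h : ℝ → ℝ} {k : ℂ → ℝ} (hf : Continuous f)
    (hp : 0 < p) (hα : 0 < α) (ha : 0 < a) (hc : Continuous h) (hh : ∀ t ≤ a, h t = 0)
    (hk : ∀ z, 0 < weightedPow f p α z → ContinuousAt k z) :
    Integrable (fun z => h (weightedPow f p α z) * k z) hypMeasure := by
  have hsupp := tsupport_comp_weightedPow_subset hf hp hα hh
  have hcont : Continuous fun z => h (weightedPow f p α z) * k z :=
    continuous_of_tsupport fun z hz =>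
      (hc.comp (continuous_weightedPow hf hp hα)).continuousAt.mul
        (hk z (ha.trans_le (hsupp (tsupport_mul_subset_left hz))))
  have hsub : tsupport (fun z => h (weightedPow f p α z) * k z) ⊆
      {z | a ≤ weightedPow f p α z} := tsupport_mul_subset_left.trans hsupp
  exact integrable_hypMeasure_of_tsupport_subset hcont
    ((isCompact_le_weightedPow hf hp hα ha).of_isClosed_subset (isClosed_tsupport _) hsub)
    (hsub.trans fun _ hz => mem_ball_of_weightedPow_pos hα (ha.trans_le hz))

variable (hf : Differentiable ℂ f) (hp : 0 < p) (hα : 0 < α) (ha : 0 < a)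
  (hφ : IsLogCutoff a b φ)

include hf hp hα ha

lemma integrable_comp_weightedPow {h : ℝ → ℝ} (hc : Continuous h) (hh : ∀ t ≤ a, h t = 0) :
    Integrable (fun z => h (weightedPow f p α z)) hypMeasure := by
  simpa using integrable_comp_weightedPow_mul (k := 1) hf.continuous hp hα ha hc hh
    fun _ _ => continuousAt_const

lemma integrable_comp_weightedPow_mul_norm_weightedLogDeriv_pow {h : ℝ → ℝ} (hc : Continuous h)
    (hh : ∀ t ≤ a, h t = 0) (n : ℕ) :
    Integrable (fun z => h (weightedPow f p α z) *
      ((1 - ‖z‖ ^ 2) * ‖weightedLogDeriv f p α z‖) ^ n) hypMeasure := by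
  refine integrable_comp_weightedPow_mul hf.continuous hp hα ha hc hh fun z hz => ?_
  have hg : ContinuousAt (weightedLogDeriv f p α) z := (contDiffAt_weightedLogDeriv hf
    (mem_ball_of_weightedPow_pos hα hz) (ne_zero_of_weightedPow_pos hp hz)).continuousAt
  fun_prop

include hφ

lemma contDiff_comp_weightedPow : ContDiff ℝ 1 fun z => φ (weightedPow f p α z) :=
  contMDiff_iff_contDiff.1 (contMDiff_of_tsupport fun z hz =>
    (hφ.contDiff.contDiffAt.comp z (contDiffAt_weightedPow hf hp hα (ha.trans_le
      (tsupport_comp_weightedPow_subset hf.continuous hp hα hφ.eq_zero_of_le hz)))).contMDiffAt)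

lemma hasCompactSupport_comp_weightedPow :
    HasCompactSupport fun z => φ (weightedPow f p α z) :=
  (isCompact_le_weightedPow hf.continuous hp hα ha).of_isClosed_subset (isClosed_tsupport _)
    (tsupport_comp_weightedPow_subset hf.continuous hp hα hφ.eq_zero_of_le)

lemma tsupport_comp_weightedPow_subset_ball :
    tsupport (fun z => φ (weightedPow f p α z)) ⊆ ball 0 1 := fun _ hz =>
  mem_ball_of_weightedPow_pos hα (ha.trans_le
    (tsupport_comp_weightedPow_subset hf.continuous hp hα hφ.eq_zero_of_le hz))

lemma dbar_comp_weightedPow (z : ℂ) :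
    dbar (fun w => (φ (weightedPow f p α w) : ℂ)) z =
      ((weightedPow f p α z * deriv φ (weightedPow f p α z) : ℝ) : ℂ) *
        conj (weightedLogDeriv f p α z) := by
  rcases lt_or_ge (weightedPow f p α z) a with hz | hz
  · have hφ0 : ∀ t ≤ a, (φ t : ℂ) = 0 := fun t ht => by
      rw [hφ.eq_zero_of_le t ht, Complex.ofReal_zero]
    rw [dbar_eq_zero_of_notMem_tsupport fun h =>
        hz.not_ge (tsupport_comp_weightedPow_subset hf.continuous hp hα hφ0 h),
      hφ.deriv_eq_zero_of_le hz.le, mul_zero, Complex.ofReal_zero, zero_mul]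
  · have hpos := ha.trans_le hz
    rw [dbar_ofReal_comp (hφ.contDiff.differentiable one_ne_zero _).hasDerivAt
      ((contDiffAt_weightedPow hf hp hα hpos).differentiableAt one_ne_zero),
      dbar_weightedPow hf hp hα hpos]
    push_cast
    ring

lemma norm_dbar_comp_weightedPow (z : ℂ) :
    ‖dbar (fun w => (φ (weightedPow f p α w) : ℂ)) z‖ =
      weightedPow f p α z * deriv φ (weightedPow f p α z) * ‖weightedLogDeriv f p α z‖ := by
  rw [dbar_comp_weightedPow hf hp hα ha hφ, norm_mul, RCLike.norm_conj, Complex.norm_real,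
    Real.norm_of_nonneg (mul_nonneg (weightedPow_nonneg z) (hφ.deriv_nonneg _))]

lemma contDiff_comp_weightedPow_mul_weightedLogDeriv :
    ContDiff ℝ 1 fun z => (φ (weightedPow f p α z) : ℂ) * weightedLogDeriv f p α z := by
  have hφ0 : ∀ t ≤ a, (φ t : ℂ) = 0 := fun t ht => by
    rw [hφ.eq_zero_of_le t ht, Complex.ofReal_zero]
  refine contMDiff_iff_contDiff.1 (contMDiff_of_tsupport fun z hz => ?_)
  have hpos := ha.trans_le (tsupport_comp_weightedPow_subset hf.continuous hp hα hφ0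
    (tsupport_mul_subset_left hz))
  exact ((Complex.ofRealCLM.contDiff.comp
    (contDiff_comp_weightedPow hf hp hα ha hφ)).contDiffAt.mul (contDiffAt_weightedLogDeriv hf
      (mem_ball_of_weightedPow_pos hα hpos) (ne_zero_of_weightedPow_pos hp hpos))).contMDiffAt

lemma dbar_comp_weightedPow_mul_weightedLogDeriv {z : ℂ} (hz : z ∈ ball (0 : ℂ) 1) :
    (1 - ‖z‖ ^ 2) ^ 2 •
        dbar (fun w => (φ (weightedPow f p α w) : ℂ) * weightedLogDeriv f p α w) z =
      ((weightedPow f p α z * deriv φ (weightedPow f p α z) *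
          ((1 - ‖z‖ ^ 2) * ‖weightedLogDeriv f p α z‖) ^ 2 -
        α * φ (weightedPow f p α z) : ℝ) : ℂ) := by
  have hφ0 : ∀ t ≤ a, (φ t : ℂ) = 0 := fun t ht => by
    rw [hφ.eq_zero_of_le t ht, Complex.ofReal_zero]
  rcases lt_or_ge (weightedPow f p α z) a with hza | hza
  · rw [dbar_eq_zero_of_notMem_tsupport fun h => hza.not_ge
        (tsupport_comp_weightedPow_subset hf.continuous hp hα hφ0 (tsupport_mul_subset_left h)),
      hφ.deriv_eq_zero_of_le hza.le, hφ.eq_zero_of_le _ hza.le]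
    simp only [mul_zero, zero_mul, sub_zero, smul_zero, Complex.ofReal_zero]
  · have hpos := ha.trans_le hza
    have h0 := ne_zero_of_weightedPow_pos hp hpos
    have hdiff : DifferentiableAt ℝ (fun w => (φ (weightedPow f p α w) : ℂ)) z :=
      (Complex.ofRealCLM.contDiff.comp
        (contDiff_comp_weightedPow hf hp hα ha hφ)).differentiable one_ne_zero z
    have hdisk : ((1 - ‖z‖ ^ 2 : ℝ) : ℂ) ≠ 0 :=
      Complex.ofReal_ne_zero.2 (one_sub_norm_sq_pos hz).ne'
    rw [dbar_mul hdiff ((contDiffAt_weightedLogDeriv hf hz h0).differentiableAt one_ne_zero),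
      dbar_comp_weightedPow hf hp hα ha hφ, dbar_weightedLogDeriv hf hz h0, mul_assoc,
      Complex.conj_mul', Complex.real_smul]
    push_cast at hdisk ⊢
    field_simp
    ring

/-- This is `∫ ∂̄ (φ(u) ∂ log u) = 0`. -/
theorem integral_mul_norm_weightedLogDeriv_sq :
    ∫ z, weightedPow f p α z * deriv φ (weightedPow f p α z) *
        ((1 - ‖z‖ ^ 2) * ‖weightedLogDeriv f p α z‖) ^ 2 ∂hypMeasure =
      α * ∫ z, φ (weightedPow f p α z) ∂hypMeasure := by
  let F : ℂ → ℂ := fun z => (φ (weightedPow f p α z) : ℂ) * weightedLogDeriv f p α z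
  have htsupport : tsupport F ⊆ tsupport fun z => φ (weightedPow f p α z) :=
    closure_mono fun z hz h => hz (by simp only [F, h, Complex.ofReal_zero, zero_mul])
  have hF : ContDiff ℝ 1 F := contDiff_comp_weightedPow_mul_weightedLogDeriv hf hp hα ha hφ
  have hFc : HasCompactSupport F :=
    (hasCompactSupport_comp_weightedPow hf hp hα ha hφ).of_isClosed_subset
      (isClosed_tsupport _) htsupport
  have hsupp : Function.support (dbar F) ⊆ ball 0 1 := fun z hz =>
    tsupport_comp_weightedPow_subset_ball hf hp hα ha hφ
      (htsupport (by_contra fun h => hz (dbar_eq_zero_of_notMem_tsupport h)))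
  have hzero := integral_one_sub_norm_sq_sq_smul_hypMeasure hsupp
  rw [integral_dbar_eq_zero hF hFc, smul_zero,
    integral_congr_ae (ae_hypMeasure_mem_ball.mono fun z hz =>
      dbar_comp_weightedPow_mul_weightedLogDeriv hf hp hα ha hφ hz),
    integral_complex_ofReal, Complex.ofReal_eq_zero, integral_sub
      (integrable_comp_weightedPow_mul_norm_weightedLogDeriv_pow hf hp hα ha
        hφ.continuous_mul_deriv (fun t ht => by rw [hφ.deriv_eq_zero_of_le ht, mul_zero]) 2)
      ((integrable_comp_weightedPow hf hp hα ha hφ.contDiff.continuous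
        hφ.eq_zero_of_le).const_mul α), integral_const_mul] at hzero
  exact sub_eq_zero.1 hzero

lemma integral_comp_weightedPow_le :
    ∫ z, φ (weightedPow f p α z) ∂hypMeasure ≤
      φ b * hypMeasure.real {z | a < weightedPow f p α z} := by
  have hcont := continuous_weightedPow hf.continuous hp hα
  refine integral_le_mul_measureReal_of_le_indicator
    (measurableSet_lt measurable_const hcont.measurable)
    (hypMeasure_lt_weightedPow_lt_top hf.continuous hp hα ha).ne (fun z => hφ.nonneg _) fun z => ?_
  by_cases hz : a < weightedPow f p α z
  · rw [indicator_of_mem (by exact hz)]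
    exact hφ.le_right _
  · rw [indicator_of_notMem (by exact hz)]
    exact (hφ.eq_zero_of_le _ (not_lt.1 hz)).le

lemma integral_weightedPow_mul_deriv_le (hab : a < b) :
    ∫ z, weightedPow f p α z * deriv φ (weightedPow f p α z) ∂hypMeasure ≤
      hypMeasure.real {z | a < weightedPow f p α z} -
        hypMeasure.real {z | b ≤ weightedPow f p α z} := by
  have hcont := continuous_weightedPow hf.continuous hp hα
  set E := {z | b ≤ weightedPow f p α z}
  set M := {z | a < weightedPow f p α z}
  have hE : MeasurableSet E := measurableSet_le measurable_const hcont.measurable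
  have hM : MeasurableSet M := measurableSet_lt measurable_const hcont.measurable
  have hMfin : hypMeasure M ≠ ⊤ := (hypMeasure_lt_weightedPow_lt_top hf.continuous hp hα ha).ne
  have hEM : E ⊆ M := fun z hz => hab.trans_le hz
  rw [← measureReal_sdiff hEM hE hMfin, ← one_mul (hypMeasure.real _)]
  refine integral_le_mul_measureReal_of_le_indicator (hM.diff hE)
    (measure_ne_top_of_subset sdiff_subset hMfin)
    (fun z => mul_nonneg (weightedPow_nonneg z) (hφ.deriv_nonneg _)) fun z => ?_
  by_cases hz : z ∈ M \ E
  · rw [indicator_of_mem hz]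
    exact hφ.mul_deriv_le_one _
  · have hderiv : deriv φ (weightedPow f p α z) = 0 := by
      by_cases hzM : z ∈ M
      · exact hφ.deriv_eq_zero_of_ge (by_contra fun hzE => hz ⟨hzM, hzE⟩)
      · exact hφ.deriv_eq_zero_of_le (not_lt.1 hzM)
    rw [indicator_of_notMem hz, hderiv, mul_zero]

lemma mul_sqrt_add_sq_le_integral_mul_norm_weightedLogDeriv (hb : 0 < φ b) :
    φ b * √(hypMeasure.real {z | b ≤ weightedPow f p α z} +
        hypMeasure.real {z | b ≤ weightedPow f p α z} ^ 2) ≤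
      ∫ z, weightedPow f p α z * deriv φ (weightedPow f p α z) *
        ((1 - ‖z‖ ^ 2) * ‖weightedLogDeriv f p α z‖) ∂hypMeasure := by
  convert mul_sqrt_add_sq_le_integral_norm_dbar (contDiff_comp_weightedPow hf hp hα ha hφ)
    (hasCompactSupport_comp_weightedPow hf hp hα ha hφ)
    (tsupport_comp_weightedPow_subset_ball hf hp hα ha hφ) (fun z => hφ.nonneg _)
    (measurableSet_le measurable_const (continuous_weightedPow hf.continuous hp hα).measurable) hb
    (fun z hz => hφ.eq_of_ge _ hz) using 3 with z
  rw [norm_dbar_comp_weightedPow hf hp hα ha hφ]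
  ring

/-- Cauchy–Schwarz combines the isoperimetric lower bound for `∫ u φ'(u) G` with the identity for
`∫ u φ'(u) G²`, where `G = (1 - |z|²) |∂ log u|`. -/
theorem IsLogCutoff.levelSet_inequality (hab : a < b) (hb : 0 < φ b) :
    φ b * (hypMeasure.real {z | b ≤ weightedPow f p α z} +
        hypMeasure.real {z | b ≤ weightedPow f p α z} ^ 2) ≤
      α * hypMeasure.real {z | a < weightedPow f p α z} *
        (hypMeasure.real {z | a < weightedPow f p α z} -
          hypMeasure.real {z | b ≤ weightedPow f p α z}) := by
  have hiso := mul_sqrt_add_sq_le_integral_mul_norm_weightedLogDeriv hf hp hα ha hφ hb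
  have hparts := integral_mul_norm_weightedLogDeriv_sq hf hp hα ha hφ
  have hφ_le := integral_comp_weightedPow_le hf hp hα ha hφ
  have hderiv_le := integral_weightedPow_mul_deriv_le hf hp hα ha hφ hab
  have hderiv_zero : ∀ t ≤ a, t * deriv φ t = 0 := fun t ht => by
    rw [hφ.deriv_eq_zero_of_le ht, mul_zero]
  have hint := integrable_comp_weightedPow_mul_norm_weightedLogDeriv_pow hf hp hα ha
    hφ.continuous_mul_deriv hderiv_zero
  have hκ0 : ∀ z, 0 ≤ weightedPow f p α z * deriv φ (weightedPow f p α z) := fun z =>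
    mul_nonneg (weightedPow_nonneg z) (hφ.deriv_nonneg _)
  have hCS := sq_integral_mul_le_integral_mul_sq_mul_integral hκ0
    (integrable_comp_weightedPow hf hp hα ha hφ.continuous_mul_deriv hderiv_zero)
    (by simpa only [pow_one] using hint 1) (hint 2)
  set A := hypMeasure.real {z | b ≤ weightedPow f p α z}
  set M := hypMeasure.real {z | a < weightedPow f p α z}
  have hA0 : 0 ≤ A := measureReal_nonneg
  refine le_of_mul_le_mul_left ?_ hb
  calc φ b * (φ b * (A + A ^ 2)) = (φ b * √(A + A ^ 2)) ^ 2 := by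
        rw [mul_pow, Real.sq_sqrt (add_nonneg hA0 (sq_nonneg A))]
        ring
    _ ≤ α * (∫ z, φ (weightedPow f p α z) ∂hypMeasure) *
          ∫ z, weightedPow f p α z * deriv φ (weightedPow f p α z) ∂hypMeasure := by
        rw [← hparts]
        exact (pow_le_pow_left₀ (by positivity) hiso 2).trans hCS
    _ ≤ α * (φ b * M) * (M - A) := by
        have : 0 ≤ ∫ z, weightedPow f p α z * deriv φ (weightedPow f p α z) ∂hypMeasure :=
          integral_nonneg hκ0
        gcongr
    _ = φ b * (α * M * (M - A)) := by ring

end LevelSet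

section LogCutoffExists

variable {a b δ : ℝ}

lemma isLogCutoff_integral_div_max {κ : ℝ → ℝ} (ha : 0 < a) (hκ : Continuous κ)
    (hκ0 : ∀ t, 0 ≤ κ t) (hκ1 : ∀ t, κ t ≤ 1) (hκa : ∀ t ≤ a, κ t = 0)
    (hκb : ∀ t, b ≤ t → κ t = 0) : IsLogCutoff a b fun t => ∫ x in a..t, κ x / max x a := by
  have hmax : ∀ x, 0 < max x a := fun x => lt_max_of_lt_right ha
  have hcont : Continuous fun x => κ x / max x a :=
    hκ.div (by fun_prop) fun x => (hmax x).ne'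
  have hderiv : ∀ t, HasDerivAt (fun t => ∫ x in a..t, κ x / max x a) (κ t / max t a) t :=
    fun t => intervalIntegral.integral_hasDerivAt_right (hcont.intervalIntegrable _ _)
      (hcont.stronglyMeasurableAtFilter _ _) hcont.continuousAt
  refine ⟨contDiff_one_iff_deriv.2 ⟨fun t => (hderiv t).differentiableAt, ?_⟩, fun t => ?_,
    fun t => ?_, fun t ht => ?_, fun t ht => ?_⟩
  · rwa [funext fun t => (hderiv t).deriv]
  · rw [(hderiv t).deriv]
    exact div_nonneg (hκ0 t) (hmax t).le
  · rw [(hderiv t).deriv, ← mul_div_assoc, div_le_one (hmax t)]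
    rcases le_total t a with h | h
    · simpa only [hκa t h, mul_zero] using (hmax t).le
    · exact (mul_le_of_le_one_right (ha.le.trans h) (hκ1 t)).trans (le_max_left t a)
  · refine intervalIntegral.integral_zero_ae (.of_forall fun x hx => ?_)
    rw [uIoc_of_ge ht] at hx
    rw [hκa x hx.2, zero_div]
  · have hzero : ∫ x in b..t, κ x / max x a = 0 :=
      intervalIntegral.integral_zero_ae (.of_forall fun x hx => by
        rw [uIoc_of_le ht] at hx
        rw [hκb x hx.1.le, zero_div])
    rw [← intervalIntegral.integral_add_adjacent_intervals (hcont.intervalIntegrable a b)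
      (hcont.intervalIntegrable b t), hzero, add_zero]

/-- The continuous function equal to `1` on `[a + δ, b - δ]`, to `0` off `[a, b]`, and affine in
between; a cutoff of the logarithmic derivative. -/
noncomputable def trapezoid (a b δ t : ℝ) : ℝ := max 0 (min 1 (min (t - a) (b - t) / δ))

lemma trapezoid_eq_zero (hδ : 0 < δ) {t : ℝ} (ht : min (t - a) (b - t) ≤ 0) :
    trapezoid a b δ t = 0 :=
  max_eq_left ((min_le_right _ _).trans (div_nonpos_of_nonpos_of_nonneg ht hδ.le))

lemma trapezoid_eq_one (hδ : 0 < δ) {t : ℝ} (hta : a + δ ≤ t) (htb : t ≤ b - δ) :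
    trapezoid a b δ t = 1 := by
  have hmin : 1 ≤ min (t - a) (b - t) / δ := by
    rw [one_le_div₀ hδ]
    exact le_min (by linarith) (by linarith)
  rw [trapezoid, min_eq_left hmin, max_eq_right zero_le_one]

lemma exists_isLogCutoff (ha : 0 < a) (hδ : 0 < δ) (hδab : a + δ < b - δ) :
    ∃ φ, IsLogCutoff a b φ ∧ Real.log ((b - δ) / (a + δ)) ≤ φ b := by
  have hcont : Continuous (trapezoid a b δ) := by
    unfold trapezoid
    fun_prop
  have hφ : IsLogCutoff a b fun t => ∫ x in a..t, trapezoid a b δ x / max x a :=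
    isLogCutoff_integral_div_max ha hcont (fun t => le_max_left _ _)
      (fun t => max_le zero_le_one (min_le_left _ _))
      (fun t ht => trapezoid_eq_zero hδ ((min_le_left _ _).trans (by linarith)))
      (fun t ht => trapezoid_eq_zero hδ ((min_le_right _ _).trans (by linarith)))
  refine ⟨_, hφ, ?_⟩
  have hmid : ∫ x in (a + δ)..(b - δ), trapezoid a b δ x / max x a =
      Real.log ((b - δ) / (a + δ)) := by
    rw [← integral_one_div_of_pos (by linarith) (by linarith)]
    refine intervalIntegral.integral_congr fun x hx => ?_
    rw [uIcc_of_le hδab.le] at hx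
    rw [trapezoid_eq_one hδ hx.1 hx.2, max_eq_left (by linarith [hx.1])]
  have hint : ∀ x y,
      IntervalIntegrable (fun x => trapezoid a b δ x / max x a) volume x y := fun x y =>
    (hcont.div (by fun_prop) fun x => (lt_max_of_lt_right ha).ne').intervalIntegrable x y
  have hadd := intervalIntegral.integral_add_adjacent_intervals (hint a (a + δ))
    (hint (a + δ) (b - δ))
  have hright := hφ.le_right (b - δ)
  have hleft := hφ.nonneg (a + δ)
  linarith

end LogCutoffExists

section LevelSetInequality

variable {f : ℂ → ℂ} {p α a b : ℝ}

lemma levelSet_inequality_of_le (hf : Differentiable ℂ f) (hp : 0 < p) (hα : 0 < α) (ha : 0 < a)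
    (hab : a < b) :
    Real.log (b / a) * (hypMeasure.real {z | b ≤ weightedPow f p α z} +
        hypMeasure.real {z | b ≤ weightedPow f p α z} ^ 2) ≤
      α * hypMeasure.real {z | a < weightedPow f p α z} *
        (hypMeasure.real {z | a < weightedPow f p α z} -
          hypMeasure.real {z | b ≤ weightedPow f p α z}) := by
  set A := hypMeasure.real {z | b ≤ weightedPow f p α z}
  have hlim : Tendsto (fun δ => Real.log ((b - δ) / (a + δ)) * (A + A ^ 2)) (𝓝[>] 0)
      (𝓝 (Real.log (b / a) * (A + A ^ 2))) := by
    have hcont : ContinuousAt (fun δ => Real.log ((b - δ) / (a + δ)) * (A + A ^ 2)) 0 := by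
      refine (ContinuousAt.log (ContinuousAt.div (by fun_prop) (by fun_prop) ?_) ?_).mul
        continuousAt_const
      · simpa only [add_zero] using ha.ne'
      · simpa only [Pi.div_apply, sub_zero, add_zero] using (div_pos (ha.trans hab) ha).ne'
    simpa only [sub_zero, add_zero] using hcont.tendsto.mono_left nhdsWithin_le_nhds
  refine le_of_tendsto hlim ?_
  filter_upwards [Ioo_mem_nhdsGT (by linarith : (0 : ℝ) < (b - a) / 2)] with δ hδ
  have hδab : a + δ < b - δ := by linarith [hδ.2]
  obtain ⟨φ, hφ, hlog⟩ := exists_isLogCutoff ha hδ.1 hδab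
  have hlog_pos : 0 < Real.log ((b - δ) / (a + δ)) :=
    Real.log_pos ((one_lt_div (by linarith [hδ.1])).2 hδab)
  refine le_trans ?_ (IsLogCutoff.levelSet_inequality hf hp hα ha hφ hab (hlog_pos.trans_le hlog))
  gcongr

theorem levelSet_inequality (hf : Differentiable ℂ f) (hp : 0 < p) (hα : 0 < α) (ha : 0 < a)
    (hab : a < b) :
    Real.log (b / a) * (hypMeasure.real {z | b < weightedPow f p α z} +
        hypMeasure.real {z | b < weightedPow f p α z} ^ 2) ≤
      α * hypMeasure.real {z | a < weightedPow f p α z} *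
        (hypMeasure.real {z | a < weightedPow f p α z} -
          hypMeasure.real {z | b < weightedPow f p α z}) := by
  have hmono : hypMeasure.real {z | b < weightedPow f p α z} ≤
      hypMeasure.real {z | b ≤ weightedPow f p α z} :=
    measureReal_mono (fun z (hz : b < _) => hz.le)
      (hypMeasure_le_weightedPow_lt_top hf.continuous hp hα (ha.trans hab)).ne
  have hlog : 0 ≤ Real.log (b / a) := Real.log_nonneg ((one_le_div ha).2 hab.le)
  calc Real.log (b / a) * (hypMeasure.real {z | b < weightedPow f p α z} +
        hypMeasure.real {z | b < weightedPow f p α z} ^ 2)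
      ≤ Real.log (b / a) * (hypMeasure.real {z | b ≤ weightedPow f p α z} +
          hypMeasure.real {z | b ≤ weightedPow f p α z} ^ 2) := by gcongr
    _ ≤ _ := levelSet_inequality_of_le hf hp hα ha hab
    _ ≤ _ := by gcongr

end LevelSetInequality

section DistributionFunction

lemma mul_one_sub_log_sub_log_sub_sq_le {u v ε : ℝ} (hv : 0 < v) (hvu : v ≤ u) (hε : 0 ≤ ε)
    (h : ε * (v + v ^ 2) ≤ u * (u - v)) :
    ε * (1 - (Real.log u - Real.log v)) - ε ^ 2 ≤ Real.log (1 + u) - Real.log (1 + v) := by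
  have hu : 0 < u := hv.trans_le hvu
  have hρ0 : 0 < v / u := div_pos hv hu
  have hερ : ε * (v / u) ≤ ε := mul_le_of_le_one_right hε ((div_le_one hu).2 hvu)
  have hratio : 1 + ε * (v / u) ≤ (1 + u) / (1 + v) := by
    rw [le_div_iff₀ (by linarith)]
    have : ε * (v + v ^ 2) / u ≤ u - v := (div_le_iff₀' hu).2 h
    linear_combination this
  have hlog : Real.log (1 + ε * (v / u)) ≤ Real.log (1 + u) - Real.log (1 + v) := by
    rw [← Real.log_div (by linarith) (by linarith)]
    exact Real.log_le_log (by positivity) hratio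
  have hsecond : ε * (v / u) - ε ^ 2 ≤ Real.log (1 + ε * (v / u)) := by
    have hinv : ε * (v / u) - (ε * (v / u)) ^ 2 ≤ 1 - (1 + ε * (v / u))⁻¹ := by
      rw [← sub_nonneg]
      have : 1 - (1 + ε * (v / u))⁻¹ - (ε * (v / u) - (ε * (v / u)) ^ 2) =
          (ε * (v / u)) ^ 3 / (1 + ε * (v / u)) := by
        field_simp
        ring
      rw [this]
      positivity
    have hsq : (ε * (v / u)) ^ 2 ≤ ε ^ 2 := by gcongr
    have hlog_ge := Real.one_sub_inv_le_log_of_pos (x := 1 + ε * (v / u)) (by positivity)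
    linarith
  have hfirst : 1 - (Real.log u - Real.log v) ≤ v / u := by
    have := Real.log_le_sub_one_of_pos hρ0
    rw [Real.log_div hv.ne' hu.ne'] at this
    linarith
  have := mul_le_mul_of_nonneg_left hfirst hε
  linarith

section Antitone

variable {M : ℝ → ℝ} (hM : Antitone M)
  (h : ∀ x y, x < y → (y - x) * (M y + M y ^ 2) ≤ M x * (M x - M y))

include hM h

lemma mul_natCast_sub_log_sub_log_sub_le {ε : ℝ} (hε : 0 < ε) (x : ℝ) (n : ℕ)
    (hpos : 0 < M (x + n * ε)) :
    ε * (n - (Real.log (M x) - Real.log (M (x + n * ε)))) - n * ε ^ 2 ≤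
      Real.log (1 + M x) - Real.log (1 + M (x + n * ε)) := by
  induction n with
  | zero => simp
  | succ n ih =>
    have hlt : x + n * ε < x + (n + 1 : ℕ) * ε := by
      push_cast
      linarith
    have hle := hM hlt.le
    have hstep := mul_one_sub_log_sub_log_sub_sq_le hpos hle hε.le
      (by simpa [add_mul] using h _ _ hlt)
    have hprev := ih (hpos.trans_le hle)
    push_cast at hstep ⊢
    linarith

/-- The error terms of the discrete inequality vanish as the mesh of the partition of `[x, y]`
tends to zero, so no regularity of `M` is needed. -/
lemma sub_le_log_one_add_sub_log_one_add {x y : ℝ} (hxy : x < y) (hpos : 0 < M y) :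
    y - x ≤ Real.log (1 + M x) - Real.log (1 + M y) := by
  set L := Real.log (M x) - Real.log (M y)
  have hmesh : ∀ n : ℕ, 0 < n → (y - x) - ((y - x) * L + (y - x) ^ 2) / n ≤
      Real.log (1 + M x) - Real.log (1 + M y) := by
    intro n hn
    have hn0 : (0 : ℝ) < n := Nat.cast_pos.2 hn
    have hend : x + n * ((y - x) / n) = y := by
      field_simp
      ring
    have := mul_natCast_sub_log_sub_log_sub_le hM h (div_pos (sub_pos.2 hxy) hn0) x n
      (by rwa [hend])
    rw [hend] at this
    refine le_trans (le_of_eq ?_) this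
    field_simp
    ring
  have hlim : Tendsto (fun n : ℕ => (y - x) - ((y - x) * L + (y - x) ^ 2) / n) atTop
      (𝓝 (y - x - 0)) := tendsto_const_nhds.sub (tendsto_const_div_atTop_nhds_zero_nat _)
  rw [sub_zero] at hlim
  exact le_of_tendsto hlim ((eventually_gt_atTop 0).mono hmesh)

end Antitone

variable {m : ℝ → ℝ} {α : ℝ}

lemma one_add_mul_rpow_le (hα : 0 < α)
    (hm : ∀ a b, 0 < a → a < b → Real.log (b / a) * (m b + m b ^ 2) ≤ α * m a * (m a - m b))
    (hanti : AntitoneOn m (Ioi 0)) {a b : ℝ} (ha : 0 < a) (hab : a < b) (hmb : 0 < m b) :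
    (1 + m b) * b ^ (1 / α) ≤ (1 + m a) * a ^ (1 / α) := by
  have hb : 0 < b := ha.trans hab
  have hma : 0 < m a := hmb.trans_le (hanti ha hb hab.le)
  have hlog : ∀ t, 0 < t → Real.exp (α * (Real.log t / α)) = t := fun t ht => by
    rw [mul_div_cancel₀ _ hα.ne', Real.exp_log ht]
  have hM : Antitone fun x => m (Real.exp (α * x)) := fun x y hxy =>
    hanti (Real.exp_pos _) (Real.exp_pos _) (by gcongr)
  have hgrowth := sub_le_log_one_add_sub_log_one_add hM (fun x y hxy => ?_)
    (div_lt_div_of_pos_right (Real.log_lt_log ha hab) hα) (by rwa [hlog b hb])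
  · rw [hlog a ha, hlog b hb] at hgrowth
    rw [← Real.log_le_log_iff (by positivity) (by positivity),
      Real.log_mul (by positivity) (by positivity), Real.log_mul (by positivity) (by positivity),
      Real.log_rpow hb, Real.log_rpow ha]
    linear_combination hgrowth
  · have := hm _ _ (Real.exp_pos (α * x)) (Real.exp_lt_exp.2 (mul_lt_mul_of_pos_left hxy hα))
    rw [← Real.exp_sub, Real.log_exp, ← mul_sub, mul_assoc, mul_assoc] at this
    exact le_of_mul_le_mul_left this hα

/-- The distribution function with respect to `hypMeasure` of `c * (1 - ‖z‖ ^ 2) ^ α`, the weighted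
power of a constant function. -/
noncomputable def extremalDistribution (α c t : ℝ) : ℝ := max 0 ((c / t) ^ (1 / α) - 1)

lemma extremalDistribution_nonneg (α c t : ℝ) : 0 ≤ extremalDistribution α c t := le_max_left _ _

@[fun_prop]
lemma measurable_extremalDistribution (α c : ℝ) : Measurable (extremalDistribution α c) :=
  measurable_const.max (((measurable_const.div measurable_id).pow_const _).sub_const 1)

section Extremal

variable {c t s : ℝ}

lemma extremalDistribution_of_le (hα : 0 < α) (ht : 0 < t) (htc : t ≤ c) :
    extremalDistribution α c t = c ^ (1 / α) * t ^ (-(1 / α)) - 1 := by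
  have := Real.one_le_rpow ((one_le_div ht).2 htc) (one_div_pos.2 hα).le
  rw [extremalDistribution, max_eq_right (by linarith), Real.div_rpow (ht.le.trans htc) ht.le,
    Real.rpow_neg ht.le, div_eq_mul_inv]

lemma extremalDistribution_of_ge (hα : 0 < α) (hc : 0 < c) (hct : c ≤ t) :
    extremalDistribution α c t = 0 := by
  have ht := hc.trans_le hct
  have := Real.rpow_le_one (div_pos hc ht).le ((div_le_one ht).2 hct) (one_div_pos.2 hα).le
  exact max_eq_left (by linarith)

lemma lt_extremalDistribution_iff (hc : 0 < c) (ht : 0 < t) {x : ℝ} (hx : 0 ≤ x) :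
    x < extremalDistribution α c t ↔ (1 + x) * t ^ (1 / α) < c ^ (1 / α) := by
  rw [extremalDistribution, lt_max_iff, or_iff_right hx.not_gt, Real.div_rpow hc.le ht.le,
    lt_sub_iff_add_lt', lt_div_iff₀ (Real.rpow_pos_of_pos ht _)]

lemma lintegral_extremalDistribution_mul_rpow (hα : 1 < α) (hc : 0 < c) (hs : 1 ≤ s) :
    ∫⁻ t in Ioi 0, ENNReal.ofReal (extremalDistribution α c t * t ^ (s - 1)) =
      ENNReal.ofReal (c ^ s / (s * (s * α - 1))) := by
  have hα0 : 0 < α := one_pos.trans hα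
  have hinv : 1 / α < 1 := (div_lt_one hα0).2 hα
  have hsub : 0 < s - 1 / α := by linarith
  have hIoc : ∀ t ∈ Ioc 0 c, extremalDistribution α c t * t ^ (s - 1) =
      c ^ (1 / α) * t ^ (s - 1 / α - 1) - t ^ (s - 1) := fun t ht => by
    rw [extremalDistribution_of_le hα0 ht.1 ht.2, sub_mul, one_mul, mul_assoc,
      ← Real.rpow_add ht.1]
    ring_nf
  have hIoi : ∀ t ∈ Ioi c,
      ENNReal.ofReal (extremalDistribution α c t * t ^ (s - 1)) = 0 := fun t ht => by
    rw [extremalDistribution_of_ge hα0 hc (le_of_lt ht), zero_mul, ENNReal.ofReal_zero]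
  have hint₁ : IntervalIntegrable (fun t : ℝ => t ^ (s - 1 / α - 1)) volume 0 c :=
    intervalIntegral.intervalIntegrable_rpow' (by linarith)
  have hint₂ : IntervalIntegrable (fun t : ℝ => t ^ (s - 1)) volume 0 c :=
    intervalIntegral.intervalIntegrable_rpow' (by linarith)
  have hnonneg : 0 ≤ᵐ[volume.restrict (Ioc 0 c)] fun t =>
      c ^ (1 / α) * t ^ (s - 1 / α - 1) - t ^ (s - 1) := by
    filter_upwards [ae_restrict_mem measurableSet_Ioc] with t ht
    rw [← hIoc t ht]
    exact mul_nonneg (extremalDistribution_nonneg _ _ _) (Real.rpow_nonneg ht.1.le _)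
  rw [← Ioc_union_Ioi_eq_Ioi hc.le,
    lintegral_union measurableSet_Ioi (Ioc_disjoint_Ioi le_rfl),
    setLIntegral_congr_fun measurableSet_Ioi hIoi, lintegral_zero, add_zero,
    setLIntegral_congr_fun measurableSet_Ioc fun t ht => congrArg ENNReal.ofReal (hIoc t ht),
    ← ofReal_integral_eq_lintegral_ofReal ((hint₁.const_mul _).sub hint₂).1 hnonneg,
    ← intervalIntegral.integral_of_le hc.le,
    intervalIntegral.integral_sub (hint₁.const_mul _) hint₂, intervalIntegral.integral_const_mul,
    integral_rpow (Or.inl (by linarith)), integral_rpow (Or.inl (by linarith)), sub_add_cancel,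
    sub_add_cancel, Real.zero_rpow hsub.ne', Real.zero_rpow (by linarith), sub_zero, sub_zero,
    ← mul_div_assoc, ← Real.rpow_add hc, add_sub_cancel]
  congr 1
  have hsα : s * α - 1 ≠ 0 := by
    have : 1 < s * α := one_lt_mul_of_le_of_lt hs hα
    linarith
  rw [show s - 1 / α = (s * α - 1) / α by field_simp]
  field_simp
  ring

end Extremal

/-- Pointwise, `(m - k) (w - w t₀) ≤ 0`. -/
lemma lintegral_mul_le_of_crossing {m k w : ℝ → ℝ} {t₀ : ℝ} (hm : Measurable m)
    (hk : Measurable k) (hw : Measurable w) (hm0 : ∀ t, 0 ≤ m t) (hk0 : ∀ t, 0 ≤ k t)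
    (ht₀ : 0 ≤ t₀) (hw0 : ∀ t, 0 ≤ t → 0 ≤ w t) (hwmono : MonotoneOn w (Ici 0))
    (hlt : ∀ t, 0 < t → t < t₀ → k t ≤ m t) (hgt : ∀ t, t₀ < t → m t ≤ k t)
    (heq : ∫⁻ t in Ioi 0, ENNReal.ofReal (m t) = ∫⁻ t in Ioi 0, ENNReal.ofReal (k t))
    (hfin : ∫⁻ t in Ioi 0, ENNReal.ofReal (k t) ≠ ⊤) :
    ∫⁻ t in Ioi 0, ENNReal.ofReal (m t * w t) ≤ ∫⁻ t in Ioi 0, ENNReal.ofReal (k t * w t) := by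
  have hpt : ∀ t ∈ Ioi (0 : ℝ),
      ENNReal.ofReal (m t * w t) + ENNReal.ofReal (w t₀) * ENNReal.ofReal (k t) ≤
      ENNReal.ofReal (k t * w t) + ENNReal.ofReal (w t₀) * ENNReal.ofReal (m t) := by
    intro t (ht : 0 < t)
    have hwt := hw0 t ht.le
    have hwt₀ := hw0 t₀ ht₀
    rw [← ENNReal.ofReal_mul hwt₀, ← ENNReal.ofReal_mul hwt₀,
      ← ENNReal.ofReal_add (mul_nonneg (hm0 t) hwt) (mul_nonneg hwt₀ (hk0 t)),
      ← ENNReal.ofReal_add (mul_nonneg (hk0 t) hwt) (mul_nonneg hwt₀ (hm0 t))]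
    refine ENNReal.ofReal_le_ofReal ?_
    rcases lt_trichotomy t t₀ with h | rfl | h
    · nlinarith [hlt t ht h, hwmono ht.le ht₀ h.le]
    · linarith
    · nlinarith [hgt t h, hwmono ht₀ ht.le h.le]
  have h := setLIntegral_mono' (μ := volume) measurableSet_Ioi hpt
  rw [lintegral_add_left (by fun_prop), lintegral_add_left (by fun_prop),
    lintegral_const_mul _ (by fun_prop), lintegral_const_mul _ (by fun_prop), heq] at h
  exact (ENNReal.add_le_add_iff_right (ENNReal.mul_ne_top ENNReal.ofReal_ne_top hfin)).1 h

lemma exists_crossing_extremalDistribution {c : ℝ} (hc : 0 < c) (hm0 : ∀ t, 0 ≤ m t)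
    (hm : ∀ a b, 0 < a → a < b → 0 < m b →
      (1 + m b) * b ^ (1 / α) ≤ (1 + m a) * a ^ (1 / α))
    (hlt : ∃ t, 0 < t ∧ m t < extremalDistribution α c t) :
    ∃ t₀, 0 ≤ t₀ ∧ (∀ t, 0 < t → t < t₀ → extremalDistribution α c t ≤ m t) ∧
      ∀ t, t₀ < t → m t ≤ extremalDistribution α c t := by
  let S := {t | 0 < t ∧ m t < extremalDistribution α c t}
  have hbdd : BddBelow S := ⟨0, fun t ht => ht.1.le⟩
  refine ⟨sInf S, le_csInf hlt fun t ht => ht.1.le, fun t ht htS => ?_, fun t ht => ?_⟩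
  · by_contra h
    exact (csInf_le hbdd ⟨ht, not_le.1 h⟩).not_gt htS
  · obtain ⟨a, ⟨ha, haS⟩, hat⟩ := (csInf_lt_iff hbdd hlt).1 ht
    rcases (hm0 t).eq_or_lt with h | h
    · rw [← h]
      exact extremalDistribution_nonneg _ _ _
    · exact ((lt_extremalDistribution_iff hc (ha.trans hat) (hm0 t)).2 ((hm a t ha hat h).trans_lt
        ((lt_extremalDistribution_iff hc ha (hm0 a)).1 haS))).le

lemma lintegral_mul_rpow_le_extremal {c s : ℝ} (hα : 1 < α) (hc : 0 < c) (hs : 1 ≤ s)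
    (hmm : Measurable m) (hm0 : ∀ t, 0 ≤ m t)
    (hm : ∀ a b, 0 < a → a < b → 0 < m b →
      (1 + m b) * b ^ (1 / α) ≤ (1 + m a) * a ^ (1 / α))
    (heq : ∫⁻ t in Ioi 0, ENNReal.ofReal (m t) = ENNReal.ofReal (c / (α - 1))) :
    ∫⁻ t in Ioi 0, ENNReal.ofReal (m t * t ^ (s - 1)) ≤
      ENNReal.ofReal (c ^ s / (s * (s * α - 1))) := by
  rw [← lintegral_extremalDistribution_mul_rpow hα hc hs]
  have hk0 := extremalDistribution_nonneg α c
  have hkeq : ∫⁻ t in Ioi 0, ENNReal.ofReal (extremalDistribution α c t) =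
      ENNReal.ofReal (c / (α - 1)) := by
    simpa only [sub_self, Real.rpow_zero, mul_one, Real.rpow_one, one_mul] using
      lintegral_extremalDistribution_mul_rpow hα hc le_rfl
  have hfin := hkeq.trans_ne ENNReal.ofReal_ne_top
  by_cases hlt : ∃ t, 0 < t ∧ m t < extremalDistribution α c t
  · obtain ⟨t₀, ht₀, hbelow, habove⟩ := exists_crossing_extremalDistribution hc hm0 hm hlt
    exact lintegral_mul_le_of_crossing hmm (measurable_extremalDistribution α c) (by fun_prop) hm0
      hk0 ht₀ (fun t ht => Real.rpow_nonneg ht _)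
      (fun x hx y _ hxy => Real.rpow_le_rpow hx hxy (by linarith)) hbelow habove
      (heq.trans hkeq.symm) hfin
  · push Not at hlt
    have hae : (fun t => ENNReal.ofReal (extremalDistribution α c t))
        =ᵐ[volume.restrict (Ioi 0)] fun t => ENNReal.ofReal (m t) := by
      refine ae_eq_of_ae_le_of_lintegral_le ?_ hfin (by fun_prop) (heq.trans hkeq.symm).le
      filter_upwards [ae_restrict_mem measurableSet_Ioi] with t ht
      exact ENNReal.ofReal_le_ofReal (hlt t ht)
    refine (lintegral_congr_ae ?_).le
    filter_upwards [hae] with t ht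
    rw [(ENNReal.ofReal_eq_ofReal_iff (hk0 t) (hm0 t)).1 ht]

end DistributionFunction

section Embedding

variable {f : ℂ → ℂ} {p α s : ℝ}

lemma lintegral_norm_rpow_bergmanMeasure_eq_hypMeasure (hf : Continuous f) (hp : 0 < p)
    (hα : 1 < α) :
    ∫⁻ z, ENNReal.ofReal (‖f z‖ ^ p) ∂(bergmanMeasure α) =
      ENNReal.ofReal (α - 1) * ∫⁻ z, ENNReal.ofReal (weightedPow f p α z) ∂hypMeasure := by
  have hm : Measurable fun z => ENNReal.ofReal (‖f z‖ ^ p) :=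
    (hf.norm.rpow_const fun _ => Or.inr hp.le).measurable.ennreal_ofReal
  have hw : Measurable fun z => ENNReal.ofReal (weightedPow f p α z) :=
    (continuous_weightedPow hf hp (by linarith)).measurable.ennreal_ofReal
  rw [bergmanMeasure, hypMeasure, lintegral_withDensity_eq_lintegral_mul _ (by fun_prop) hm,
    lintegral_withDensity_eq_lintegral_mul _ (by fun_prop) hw,
    ← lintegral_const_mul _ (by fun_prop)]
  refine setLIntegral_congr_fun measurableSet_ball fun z hz => ?_
  have hdisk := one_sub_norm_sq_pos hz
  have hweight : 0 ≤ (α - 1) * (1 - ‖z‖ ^ 2) ^ (α - 2) / π :=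
    div_nonneg (mul_nonneg (by linarith) (by positivity)) Real.pi_pos.le
  simp only [Pi.mul_apply]
  rw [← ENNReal.ofReal_mul hweight, ← ENNReal.ofReal_mul (by positivity),
    ← ENNReal.ofReal_mul (by linarith), weightedPow, max_eq_right hdisk.le, Real.rpow_sub hdisk,
    Real.rpow_two]
  congr 1
  field_simp

lemma lintegral_weightedPow_rpow_le_of_lintegral_eq {c : ℝ} (hf : Differentiable ℂ f)
    (hp : 0 < p) (hα : 1 < α) (hs : 1 ≤ s) (hc : 0 < c)
    (heq : ∫⁻ z, ENNReal.ofReal (weightedPow f p α z) ∂hypMeasure =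
      ENNReal.ofReal (c / (α - 1))) :
    ∫⁻ z, ENNReal.ofReal (weightedPow f p α z ^ s) ∂hypMeasure ≤
      ENNReal.ofReal (c ^ s / (s * α - 1)) := by
  have hα0 : 0 < α := one_pos.trans hα
  have hs0 : 0 < s := one_pos.trans_le hs
  have hmeas : AEMeasurable (weightedPow f p α) hypMeasure :=
    (continuous_weightedPow hf.continuous hp hα0).measurable.aemeasurable
  have hnonneg : 0 ≤ᵐ[hypMeasure] weightedPow f p α := .of_forall weightedPow_nonneg
  have hfin : ∀ t, 0 < t → hypMeasure {z | t < weightedPow f p α z} ≠ ⊤ := fun t ht =>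
    (hypMeasure_lt_weightedPow_lt_top hf.continuous hp hα0 ht).ne
  have hsub : ∀ a b : ℝ, a ≤ b →
      {z | b < weightedPow f p α z} ⊆ {z | a < weightedPow f p α z} := fun a b hab z hz =>
    hab.trans_lt hz
  let m : ℝ → ℝ := fun t => hypMeasure.real {z | t < weightedPow f p α z}
  have hm0 : ∀ t, 0 ≤ m t := fun t => measureReal_nonneg
  have hanti : AntitoneOn m (Ioi 0) := fun a ha b _ hab =>
    measureReal_mono (hsub a b hab) (hfin a ha)
  have hmm : Measurable m :=
    (show Antitone fun t => hypMeasure {z | t < weightedPow f p α z} from fun a b hab =>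
      measure_mono (hsub a b hab)).measurable.ennreal_toReal
  have hofReal : ∀ t ∈ Ioi (0 : ℝ),
      hypMeasure {z | t < weightedPow f p α z} = ENNReal.ofReal (m t) := fun t ht =>
    (ofReal_measureReal (hfin t ht)).symm
  rw [lintegral_eq_lintegral_meas_lt hypMeasure hnonneg hmeas,
    setLIntegral_congr_fun measurableSet_Ioi hofReal] at heq
  rw [lintegral_rpow_eq_lintegral_meas_lt_mul hypMeasure hnonneg hmeas hs0,
    setLIntegral_congr_fun measurableSet_Ioi (g := fun t => ENNReal.ofReal (m t * t ^ (s - 1)))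
      fun t ht => by simp only [hofReal t ht, ENNReal.ofReal_mul (hm0 t)]]
  calc _ ≤ ENNReal.ofReal s * ENNReal.ofReal (c ^ s / (s * (s * α - 1))) := by
        gcongr
        exact lintegral_mul_rpow_le_extremal hα hc hs hmm hm0 (fun a b ha hab hb =>
          one_add_mul_rpow_le hα0 (fun a b ha hab => levelSet_inequality hf hp hα0 ha hab)
            hanti ha hab hb) heq
    _ = ENNReal.ofReal (c ^ s / (s * α - 1)) := by
        rw [← ENNReal.ofReal_mul hs0.le, ← div_div, mul_div_assoc', mul_div_cancel₀ _ hs0.ne']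

lemma lintegral_weightedPow_rpow_le (hf : Differentiable ℂ f) (hp : 0 < p) (hα : 1 < α)
    (hs : 1 ≤ s) :
    ENNReal.ofReal (s * α - 1) *
        ∫⁻ z, ENNReal.ofReal (weightedPow f p α z ^ s) ∂hypMeasure ≤
      (ENNReal.ofReal (α - 1) * ∫⁻ z, ENNReal.ofReal (weightedPow f p α z) ∂hypMeasure) ^ s := by
  have hs0 : 0 < s := one_pos.trans_le hs
  have hα1 : 0 < α - 1 := sub_pos.2 hα
  have hsα : 0 < s * α - 1 := sub_pos.2 (one_lt_mul_of_le_of_lt hs hα)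
  have hcont : Continuous (weightedPow f p α) :=
    continuous_weightedPow hf.continuous hp (one_pos.trans hα)
  set X := ∫⁻ z, ENNReal.ofReal (weightedPow f p α z) ∂hypMeasure with hX
  rcases eq_or_ne X 0 with hX0 | hX0
  · have hrpow : ∫⁻ z, ENNReal.ofReal (weightedPow f p α z ^ s) ∂hypMeasure = 0 := by
      rw [hX, lintegral_eq_zero_iff hcont.measurable.ennreal_ofReal] at hX0
      refine lintegral_eq_zero_of_ae_eq_zero ?_
      filter_upwards [hX0] with z hz
      have hz0 : weightedPow f p α z = 0 :=
        (ENNReal.ofReal_eq_zero.1 hz).antisymm (weightedPow_nonneg z)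
      rw [hz0, Real.zero_rpow hs0.ne', ENNReal.ofReal_zero, Pi.zero_apply]
    rw [hrpow, mul_zero]
    exact zero_le
  rcases eq_or_ne X ⊤ with htop | htop
  · rw [htop, ENNReal.mul_top (ENNReal.ofReal_pos.2 hα1).ne', ENNReal.top_rpow_of_pos hs0]
    exact le_top
  have hc : 0 < (α - 1) * X.toReal := mul_pos hα1 (ENNReal.toReal_pos hX0 htop)
  have heq : X = ENNReal.ofReal ((α - 1) * X.toReal / (α - 1)) := by
    rw [mul_div_cancel_left₀ _ hα1.ne', ENNReal.ofReal_toReal htop]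
  calc _ ≤ ENNReal.ofReal (s * α - 1) *
          ENNReal.ofReal (((α - 1) * X.toReal) ^ s / (s * α - 1)) := by
        gcongr
        exact lintegral_weightedPow_rpow_le_of_lintegral_eq hf hp hα hs hc heq
    _ = ENNReal.ofReal ((α - 1) * X.toReal) ^ s := by
        rw [← ENNReal.ofReal_mul hsα.le, mul_div_cancel₀ _ hsα.ne', ENNReal.ofReal_rpow_of_pos hc]
    _ = _ := by rw [ENNReal.ofReal_mul hα1.le, ENNReal.ofReal_toReal htop]

theorem lintegral_bergmanMeasure_mul_le (hf : Differentiable ℂ f) (hp : 0 < p) (hα : 1 < α)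
    (hs : 1 ≤ s) :
    ∫⁻ z, ENNReal.ofReal (‖f z‖ ^ (p * s)) ∂(bergmanMeasure (α * s)) ≤
      (∫⁻ z, ENNReal.ofReal (‖f z‖ ^ p) ∂(bergmanMeasure α)) ^ s := by
  have hpow : ∀ z, weightedPow f p α z ^ s = weightedPow f (p * s) (α * s) z := fun z => by
    rw [weightedPow, weightedPow, Real.mul_rpow (Real.rpow_nonneg (norm_nonneg _) _)
      (Real.rpow_nonneg (le_max_left _ _) _), ← Real.rpow_mul (norm_nonneg _),
      ← Real.rpow_mul (le_max_left _ _)]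
  have hle := lintegral_weightedPow_rpow_le hf hp hα hs
  simp only [hpow, mul_comm s α] at hle
  rwa [lintegral_norm_rpow_bergmanMeasure_eq_hypMeasure hf.continuous
      (mul_pos hp (one_pos.trans_le hs)) (one_lt_mul_of_lt_of_le hα hs),
    lintegral_norm_rpow_bergmanMeasure_eq_hypMeasure hf.continuous hp hα]

end Embedding

section PeriodMean

variable {E : Type*} [NormedAddCommGroup E] [NormedSpace ℝ E]

/-- The mean of `g` over the segment from `t` to `t + 2πi`. It describes circle averages in
logarithmic coordinates: if `g = h ∘ exp`, it is the average of `h` over the circle of radius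
`exp t`. -/
noncomputable def periodMean (g : ℂ → E) (t : ℝ) : E :=
  (2 * π)⁻¹ • ∫ θ in (0 : ℝ)..2 * π, g (t + θ * I)

lemma periodMean_comp_exp (g : ℂ → E) (t : ℝ) :
    periodMean (fun ζ => g (Complex.exp ζ)) t = Real.circleAverage g 0 (Real.exp t) := by
  simp only [periodMean, Real.circleAverage, circleMap, zero_add, Complex.exp_add,
    Complex.ofReal_exp]

lemma periodMean_nonneg {g : ℂ → ℝ} (hg : ∀ ζ, 0 ≤ g ζ) (t : ℝ) : 0 ≤ periodMean g t :=
  smul_nonneg (by positivity) (intervalIntegral.integral_nonneg (by positivity) fun _ _ => hg _)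

lemma periodMean_ofReal (g : ℂ → ℝ) (t : ℝ) :
    periodMean (fun ζ => (g ζ : ℂ)) t = (periodMean g t : ℝ) := by
  rw [periodMean, periodMean, intervalIntegral.integral_ofReal, smul_eq_mul, Complex.ofReal_mul,
    Complex.real_smul]

lemma periodMean_conj (g : ℂ → ℂ) (t : ℝ) :
    periodMean (fun ζ => conj (g ζ)) t = conj (periodMean g t) := by
  rw [periodMean, periodMean, intervalIntegral.intervalIntegral_conj, Complex.real_smul,
    Complex.real_smul, map_mul, Complex.conj_ofReal]

lemma hasDerivAt_integral_of_continuous [CompleteSpace E] {G G' : ℝ → ℝ → E}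
    (hG : Continuous (Function.uncurry G)) (hG' : Continuous (Function.uncurry G'))
    (hderiv : ∀ t θ, HasDerivAt (fun t => G t θ) (G' t θ) t) (a b t : ℝ) :
    HasDerivAt (fun t => ∫ θ in a..b, G t θ) (∫ θ in a..b, G' t θ) t := by
  obtain ⟨C, hC⟩ := (((isCompact_closedBall t 1).prod
    (isCompact_uIcc (a := a) (b := b))).image_of_continuousOn hG'.norm.continuousOn).bddAbove
  refine (intervalIntegral.hasDerivAt_integral_of_dominated_loc_of_deriv_le (bound := fun _ => C)
    (ball_mem_nhds t one_pos) (.of_forall fun s => ?_) ?_ ?_ ?_ intervalIntegrable_const ?_).2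
  · exact (hG.comp (by fun_prop : Continuous fun θ => (s, θ))).aestronglyMeasurable
  · exact (hG.comp (by fun_prop : Continuous fun θ => (t, θ))).intervalIntegrable _ _
  · exact (hG'.comp (by fun_prop : Continuous fun θ => (t, θ))).aestronglyMeasurable
  · exact .of_forall fun θ hθ s hs =>
      hC ⟨(s, θ), ⟨ball_subset_closedBall hs, uIoc_subset_uIcc hθ⟩, rfl⟩
  · exact .of_forall fun θ _ s _ => hderiv s θ

lemma integral_fderiv_I_eq_zero_of_periodic [CompleteSpace E] {g : ℂ → E} (hg : ContDiff ℝ 1 g)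
    (hper : ∀ ζ, g (ζ + 2 * π * I) = g ζ) (t : ℝ) :
    ∫ θ in (0 : ℝ)..2 * π, fderiv ℝ g (t + θ * I) I = 0 := by
  have hderiv : ∀ θ : ℝ, HasDerivAt (fun θ : ℝ => g (t + θ * I)) (fderiv ℝ g (t + θ * I) I) θ :=
    fun θ => by
      have hline : HasDerivAt (fun θ : ℝ => (t : ℂ) + θ * I) I θ := by
        simpa using ((Complex.ofRealCLM.hasDerivAt (x := θ)).mul_const I).const_add (t : ℂ)
      exact (hg.differentiable one_ne_zero _).hasFDerivAt.comp_hasDerivAt θ hline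
  have := hg.continuous_fderiv one_ne_zero
  rw [intervalIntegral.integral_eq_sub_of_hasDerivAt (fun θ _ => hderiv θ)
    ((by fun_prop : Continuous fun θ : ℝ => fderiv ℝ g (t + θ * I) I).intervalIntegrable _ _)]
  push_cast
  rw [hper, zero_mul, add_zero, sub_self]

-- By periodicity the `∂_θ` part of `∂̄ = (∂_t + i ∂_θ) / 2` integrates to zero.
lemma hasDerivAt_periodMean {g : ℂ → ℂ} (hg : ContDiff ℝ 1 g)
    (hper : ∀ ζ, g (ζ + 2 * π * I) = g ζ) (t : ℝ) :
    HasDerivAt (periodMean g) (2 * periodMean (dbar g) t) t := by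
  have := hg.continuous
  have := hg.continuous_fderiv one_ne_zero
  have hderiv : ∀ t θ : ℝ, HasDerivAt (fun t : ℝ => g (t + θ * I))
      (fderiv ℝ g (t + θ * I) 1) t := fun t θ =>
    (hg.differentiable one_ne_zero _).hasFDerivAt.comp_hasDerivAt t
      (Complex.ofRealCLM.hasDerivAt.add_const _)
  have hdbar : ∀ θ : ℝ, dbar g (t + θ * I) = (1 / 2) * fderiv ℝ g (t + θ * I) 1 +
      I / 2 * fderiv ℝ g (t + θ * I) I := fun θ => by rw [dbar]; ring
  refine ((hasDerivAt_integral_of_continuous (by unfold Function.uncurry; fun_prop)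
    (by unfold Function.uncurry; fun_prop) hderiv 0 (2 * π) t).const_smul (2 * π)⁻¹).congr_deriv ?_
  simp only [periodMean, hdbar]
  rw [intervalIntegral.integral_add ((by fun_prop : Continuous _).intervalIntegrable _ _)
    ((by fun_prop : Continuous _).intervalIntegrable _ _), intervalIntegral.integral_const_mul,
    intervalIntegral.integral_const_mul, integral_fderiv_I_eq_zero_of_periodic hg hper,
    Complex.real_smul, Complex.real_smul]
  ring

lemma hasDerivAt_re_periodMean {g : ℂ → ℂ} (hg : ContDiff ℝ 1 g)
    (hper : ∀ ζ, g (ζ + 2 * π * I) = g ζ) (t : ℝ) :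
    HasDerivAt (fun t => (periodMean g t).re) (2 * (periodMean (dbar g) t).re) t :=
  (Complex.reCLM.hasFDerivAt.comp_hasDerivAt t (hasDerivAt_periodMean hg hper t)).congr_deriv
    (by simp)

lemma hasDerivAt_periodMean_of_dbar_eq_conj {g : ℂ → ℝ} {G : ℂ → ℂ} (hg : ContDiff ℝ 1 g)
    (hper : ∀ ζ, g (ζ + 2 * π * I) = g ζ)
    (hgG : ∀ ζ, dbar (fun ζ => (g ζ : ℂ)) ζ = conj (G ζ)) (t : ℝ) :
    HasDerivAt (periodMean g) (2 * (periodMean G t).re) t := by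
  have h := hasDerivAt_re_periodMean (g := fun ζ => (g ζ : ℂ)) (Complex.ofRealCLM.contDiff.comp hg)
    (fun ζ => by rw [hper]) t
  simp only [periodMean_ofReal, Complex.ofReal_re] at h
  rwa [funext hgG, periodMean_conj, Complex.conj_re] at h

lemma hasDerivAt_two_mul_re_periodMean {G : ℂ → ℂ} {h : ℂ → ℝ} (hG : ContDiff ℝ 1 G)
    (hper : ∀ ζ, G (ζ + 2 * π * I) = G ζ) (hGh : ∀ ζ, dbar G ζ = h ζ) (t : ℝ) :
    HasDerivAt (fun t => 2 * (periodMean G t).re) (4 * periodMean h t) t := by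
  refine ((hasDerivAt_re_periodMean hG hper t).const_mul 2).congr_deriv ?_
  rw [funext hGh, periodMean_ofReal, Complex.ofReal_re]
  ring

lemma convexOn_periodMean {g h : ℂ → ℝ} {G : ℂ → ℂ} (hg : ContDiff ℝ 1 g) (hG : ContDiff ℝ 1 G)
    (hgper : ∀ ζ, g (ζ + 2 * π * I) = g ζ) (hGper : ∀ ζ, G (ζ + 2 * π * I) = G ζ)
    (hgG : ∀ ζ, dbar (fun ζ => (g ζ : ℂ)) ζ = conj (G ζ)) (hGh : ∀ ζ, dbar G ζ = h ζ)
    (hh : ∀ ζ, 0 ≤ h ζ) : ConvexOn ℝ univ (periodMean g) := by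
  have hderiv := hasDerivAt_periodMean_of_dbar_eq_conj hg hgper hgG
  have hderiv₂ := hasDerivAt_two_mul_re_periodMean hG hGper hGh
  refine Monotone.convexOn_univ_of_deriv (fun t => (hderiv t).differentiableAt) ?_
  rw [funext fun t => (hderiv t).deriv]
  refine monotone_of_deriv_nonneg (fun t => (hderiv₂ t).differentiableAt) fun t => ?_
  rw [(hderiv₂ t).deriv]
  exact mul_nonneg zero_le_four (periodMean_nonneg hh t)

end PeriodMean

lemma monotone_of_convexOn_of_tendsto_atBot {n : ℝ → ℝ} {c : ℝ} (hn : ConvexOn ℝ univ n)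
    (hlim : Tendsto n atBot (𝓝 c)) : Monotone n := by
  intro s t hst
  by_contra! hlt
  have hst' : s < t := hst.lt_of_ne fun h => hlt.ne' (congrArg n h)
  set σ := (n t - n s) / (t - s)
  have hσ : σ < 0 := div_neg_of_neg_of_pos (sub_neg.2 hlt) (sub_pos.2 hst')
  have hline : ∀ᶠ u in atBot, n s + σ * (u - s) ≤ n u := by
    filter_upwards [eventually_lt_atBot s] with u hu
    have hslope := hn.slope_mono_adjacent (mem_univ u) (mem_univ t) hu hst'
    rw [div_le_iff₀ (sub_pos.2 hu)] at hslope
    linarith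
  have hline_lim : Tendsto (fun u => n s + σ * (u - s)) atBot atTop :=
    tendsto_atTop_add_const_left _ _
      ((tendsto_atBot_add_const_right _ _ tendsto_id).const_mul_atBot_of_neg hσ)
  exact not_tendsto_nhds_of_tendsto_atTop (tendsto_atTop_mono' _ hline hline_lim) _ hlim

lemma tendsto_circleAverage_exp_atBot {E : Type*} [NormedAddCommGroup E] [NormedSpace ℝ E]
    [CompleteSpace E] {g : ℂ → E} (hg : Continuous g) :
    Tendsto (fun t => Real.circleAverage g 0 (Real.exp t)) atBot (𝓝 (g 0)) := by
  rw [← Real.circleAverage_zero (f := g) (c := 0)]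
  exact ((Real.Continuous.circleAverage hg).tendsto 0).comp Real.tendsto_exp_atBot

section ModulusWeight

variable {F H : ℂ → ℂ} {Y : ℝ → ℝ}

/-- The function `Y(|F|²)|H|²`. After a regularization at the zeros of `f`, the circle means of
`|f|^q` and their radial derivatives are means of such functions in logarithmic coordinates. -/
noncomputable def modulusWeight (Y : ℝ → ℝ) (F H : ℂ → ℂ) (ζ : ℂ) : ℝ :=
  Y (‖F ζ‖ ^ 2) * ‖H ζ‖ ^ 2

/-- The `∂`-derivative of `modulusWeight` for holomorphic `F` and `H`. -/
noncomputable def modulusWeightDeriv (Y : ℝ → ℝ) (F H : ℂ → ℂ) (ζ : ℂ) : ℂ :=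
  (deriv Y (‖F ζ‖ ^ 2) : ℝ) * (conj (F ζ) * deriv F ζ) * (‖H ζ‖ ^ 2 : ℝ) +
    (Y (‖F ζ‖ ^ 2) : ℝ) * (conj (H ζ) * deriv H ζ)

/-- The `∂̄∂`-derivative, a quarter of the Laplacian, of `modulusWeight` for holomorphic `F` and
`H`. -/
noncomputable def modulusWeightLaplacian (Y : ℝ → ℝ) (F H : ℂ → ℂ) (ζ : ℂ) : ℝ :=
  (deriv Y (‖F ζ‖ ^ 2) + ‖F ζ‖ ^ 2 * deriv (deriv Y) (‖F ζ‖ ^ 2)) * ‖deriv F ζ‖ ^ 2 *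
      ‖H ζ‖ ^ 2 +
    2 * deriv Y (‖F ζ‖ ^ 2) * (conj (F ζ) * deriv F ζ * H ζ * conj (deriv H ζ)).re +
    Y (‖F ζ‖ ^ 2) * ‖deriv H ζ‖ ^ 2

lemma contDiff_norm_sq_of_differentiable (hF : Differentiable ℂ F) :
    ContDiff ℝ 1 fun ζ => ‖F ζ‖ ^ 2 :=
  (hF.contDiff.restrict_scalars ℝ).norm_sq ℝ

lemma contDiff_comp_norm_sq (hF : Differentiable ℂ F) (hY : ∀ x, 0 ≤ x → ContDiffAt ℝ 1 Y x) :
    ContDiff ℝ 1 fun ζ => Y (‖F ζ‖ ^ 2) :=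
  contDiff_iff_contDiffAt.2 fun ζ =>
    (hY _ (by positivity)).comp ζ (contDiff_norm_sq_of_differentiable hF).contDiffAt

lemma contDiff_modulusWeight (hF : Differentiable ℂ F) (hH : Differentiable ℂ H)
    (hY : ∀ x, 0 ≤ x → ContDiffAt ℝ 1 Y x) : ContDiff ℝ 1 (modulusWeight Y F H) :=
  (contDiff_comp_norm_sq hF hY).mul (contDiff_norm_sq_of_differentiable hH)

lemma contDiff_conj_mul_deriv (hF : Differentiable ℂ F) :
    ContDiff ℝ 1 fun ζ => conj (F ζ) * deriv F ζ :=
  (Complex.conjCLE.contDiff.comp (hF.contDiff.restrict_scalars ℝ)).mul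
    (hF.deriv.contDiff.restrict_scalars ℝ)

lemma contDiff_modulusWeightDeriv (hF : Differentiable ℂ F) (hH : Differentiable ℂ H)
    (hY : ∀ x, 0 ≤ x → ContDiffAt ℝ 2 Y x) : ContDiff ℝ 1 (modulusWeightDeriv Y F H) := by
  have ofReal {k : ℂ → ℝ} (hk : ContDiff ℝ 1 k) : ContDiff ℝ 1 fun ζ => (k ζ : ℂ) :=
    Complex.ofRealCLM.contDiff.comp hk
  have hdY := contDiff_comp_norm_sq hF fun x hx => (hY x hx).derivWithin one_add_one_eq_two.le
  have hY₁ := contDiff_comp_norm_sq hF fun x hx => (hY x hx).of_le one_le_two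
  exact (((ofReal hdY).mul (contDiff_conj_mul_deriv hF)).mul
    (ofReal (contDiff_norm_sq_of_differentiable hH))).add
    ((ofReal hY₁).mul (contDiff_conj_mul_deriv hH))

lemma dbar_conj_mul_deriv (hF : Differentiable ℂ F) (ζ : ℂ) :
    dbar (fun ζ => conj (F ζ) * deriv F ζ) ζ = (‖deriv F ζ‖ ^ 2 : ℝ) := by
  have hconj : DifferentiableAt ℝ (fun w => conj (F w)) ζ :=
    Complex.conjCLE.differentiableAt.comp ζ ((hF ζ).restrictScalars ℝ)
  rw [dbar_mul hconj ((hF.deriv ζ).restrictScalars ℝ), dbar_conj_of_hasDerivAt (hF ζ).hasDerivAt,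
    dbar_eq_zero_of_differentiableAt (hF.deriv ζ), mul_zero, add_zero, mul_comm, Complex.mul_conj,
    Complex.normSq_eq_norm_sq]

lemma differentiableAt_ofReal_of_contDiff {k : ℂ → ℝ} (hk : ContDiff ℝ 1 k) (ζ : ℂ) :
    DifferentiableAt ℝ (fun ζ => (k ζ : ℂ)) ζ :=
  (Complex.ofRealCLM.contDiff.comp hk).differentiable one_ne_zero ζ

lemma dbar_modulusWeight (hF : Differentiable ℂ F) (hH : Differentiable ℂ H)
    (hY : ∀ x, 0 ≤ x → ContDiffAt ℝ 1 Y x) (ζ : ℂ) :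
    dbar (fun ζ => (modulusWeight Y F H ζ : ℂ)) ζ = conj (modulusWeightDeriv Y F H ζ) := by
  simp only [modulusWeight, Complex.ofReal_mul]
  rw [dbar_mul (differentiableAt_ofReal_of_contDiff (contDiff_comp_norm_sq hF hY) ζ)
      (differentiableAt_ofReal_of_contDiff (contDiff_norm_sq_of_differentiable hH) ζ),
    dbar_ofReal_comp_norm_sq (hF ζ)
      ((hY _ (by positivity)).differentiableAt one_ne_zero).hasDerivAt,
    dbar_ofReal_norm_sq (hH ζ), modulusWeightDeriv]
  simp only [map_add, map_mul, Complex.conj_ofReal, Complex.conj_conj]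

lemma dbar_modulusWeightDeriv (hF : Differentiable ℂ F) (hH : Differentiable ℂ H)
    (hY : ∀ x, 0 ≤ x → ContDiffAt ℝ 2 Y x) (ζ : ℂ) :
    dbar (modulusWeightDeriv Y F H) ζ = modulusWeightLaplacian Y F H ζ := by
  have hY₁ : ∀ x, 0 ≤ x → ContDiffAt ℝ 1 Y x := fun x hx => (hY x hx).of_le one_le_two
  have hY₂ : ∀ x, 0 ≤ x → ContDiffAt ℝ 1 (deriv Y) x := fun x hx =>
    (hY x hx).derivWithin one_add_one_eq_two.le
  have dY := differentiableAt_ofReal_of_contDiff (contDiff_comp_norm_sq hF hY₁) ζ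
  have dY' := differentiableAt_ofReal_of_contDiff (contDiff_comp_norm_sq hF hY₂) ζ
  have dH := differentiableAt_ofReal_of_contDiff (contDiff_norm_sq_of_differentiable hH) ζ
  have dFF' := (contDiff_conj_mul_deriv hF).differentiable one_ne_zero ζ
  have dHH' := (contDiff_conj_mul_deriv hH).differentiable one_ne_zero ζ
  have hx : 0 ≤ ‖F ζ‖ ^ 2 := by positivity
  have norm_sq : ∀ z : ℂ, ((‖z‖ ^ 2 : ℝ) : ℂ) = z * conj z := fun z => by
    rw [Complex.mul_conj, Complex.normSq_eq_norm_sq]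
  unfold modulusWeightDeriv
  rw [dbar_add ((dY'.fun_mul dFF').fun_mul dH) (dY.fun_mul dHH'), dbar_mul (dY'.fun_mul dFF') dH,
    dbar_mul dY' dFF', dbar_mul dY dHH',
    dbar_ofReal_comp_norm_sq (hF ζ) ((hY₁ _ hx).differentiableAt one_ne_zero).hasDerivAt,
    dbar_ofReal_comp_norm_sq (hF ζ) ((hY₂ _ hx).differentiableAt one_ne_zero).hasDerivAt,
    dbar_ofReal_norm_sq (hH ζ), dbar_conj_mul_deriv hF, dbar_conj_mul_deriv hH,
    modulusWeightLaplacian, mul_right_comm 2 (deriv Y _)]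
  simp only [Complex.ofReal_add, Complex.ofReal_mul _ (deriv Y _), ← Complex.add_conj]
  simp only [Complex.ofReal_add, Complex.ofReal_mul, norm_sq, map_mul, Complex.conj_conj]
  ring

-- The Laplacian is a Hermitian form in `F' H` and `H'`; `hlc` is its discriminant condition.
lemma modulusWeightLaplacian_nonneg (hY0 : ∀ x, 0 ≤ x → 0 < Y x)
    (hlc : ∀ x, 0 ≤ x → x * deriv Y x ^ 2 ≤ Y x * (deriv Y x + x * deriv (deriv Y) x)) (ζ : ℂ) :
    0 ≤ modulusWeightLaplacian Y F H ζ := by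
  rw [modulusWeightLaplacian]
  set x := ‖F ζ‖ ^ 2 with hx
  set P := deriv Y x + x * deriv (deriv Y) x
  set w := conj (F ζ) * deriv F ζ * H ζ * conj (deriv H ζ) with hw
  set a := ‖deriv F ζ‖ * ‖H ζ‖ with ha
  set b := ‖deriv H ζ‖
  have hx0 : 0 ≤ x := by positivity
  have hYpos : 0 < Y x := hY0 x hx0
  have hP : 0 ≤ P :=
    nonneg_of_mul_nonneg_right (le_trans (by positivity) (hlc x hx0)) hYpos
  have hw_norm : ‖w‖ = ‖F ζ‖ * (a * b) := by
    rw [hw, norm_mul, norm_mul, norm_mul, RCLike.norm_conj, RCLike.norm_conj, ha]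
    ring
  have hcross : |deriv Y x * w.re| ≤ √P * a * (√(Y x) * b) :=
    calc |deriv Y x * w.re| = |deriv Y x| * |w.re| := abs_mul _ _
      _ ≤ |deriv Y x| * ‖w‖ := by gcongr; exact Complex.abs_re_le_norm w
      _ = |deriv Y x| * ‖F ζ‖ * (a * b) := by rw [hw_norm, ← mul_assoc]
      _ ≤ √(Y x * P) * (a * b) := by
        gcongr
        refine Real.le_sqrt_of_sq_le ?_
        rw [mul_pow, sq_abs, ← hx, mul_comm]
        exact hlc x hx0
      _ = √P * a * (√(Y x) * b) := by rw [Real.sqrt_mul hYpos.le]; ring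
  calc 0 ≤ (√P * a - √(Y x) * b) ^ 2 := sq_nonneg _
    _ = P * a ^ 2 + 2 * -(√P * a * (√(Y x) * b)) + Y x * b ^ 2 := by
      rw [sub_sq, mul_pow √P, mul_pow √(Y x), Real.sq_sqrt hP, Real.sq_sqrt hYpos.le]
      ring
    _ ≤ P * a ^ 2 + 2 * (deriv Y x * w.re) + Y x * b ^ 2 := by
      gcongr
      exact neg_le_of_abs_le hcross
    _ = P * ‖deriv F ζ‖ ^ 2 * ‖H ζ‖ ^ 2 + 2 * deriv Y x * w.re + Y x * b ^ 2 := by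
      rw [ha]
      ring

lemma deriv_add_period {c : ℂ} (hF : ∀ ζ, F (ζ + c) = F ζ) (ζ : ℂ) :
    deriv F (ζ + c) = deriv F ζ := by
  simp only [← deriv_comp_add_const, hF]

lemma modulusWeightDeriv_add_period {c : ℂ} (hF : ∀ ζ, F (ζ + c) = F ζ)
    (hH : ∀ ζ, H (ζ + c) = H ζ) (ζ : ℂ) :
    modulusWeightDeriv Y F H (ζ + c) = modulusWeightDeriv Y F H ζ := by
  simp only [modulusWeightDeriv, hF, hH, deriv_add_period hF, deriv_add_period hH]

lemma convexOn_periodMean_modulusWeight (hF : Differentiable ℂ F) (hH : Differentiable ℂ H)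
    (hFper : ∀ ζ, F (ζ + 2 * π * I) = F ζ) (hHper : ∀ ζ, H (ζ + 2 * π * I) = H ζ)
    (hY : ∀ x, 0 ≤ x → ContDiffAt ℝ 2 Y x) (hL : ∀ ζ, 0 ≤ modulusWeightLaplacian Y F H ζ) :
    ConvexOn ℝ univ (periodMean (modulusWeight Y F H)) :=
  have hY₁ : ∀ x, 0 ≤ x → ContDiffAt ℝ 1 Y x := fun x hx => (hY x hx).of_le one_le_two
  convexOn_periodMean (contDiff_modulusWeight hF hH hY₁) (contDiff_modulusWeightDeriv hF hH hY)
    (fun ζ => by simp only [modulusWeight, hFper, hHper])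
    (modulusWeightDeriv_add_period hFper hHper) (dbar_modulusWeight hF hH hY₁)
    (dbar_modulusWeightDeriv hF hH hY) hL

lemma monotone_circleAverage_modulusWeight_exp {f g : ℂ → ℂ} (hf : Differentiable ℂ f)
    (hg : Differentiable ℂ g) (hY : ∀ x, 0 ≤ x → ContDiffAt ℝ 2 Y x) (hY0 : ∀ x, 0 ≤ x → 0 < Y x)
    (hlc : ∀ x, 0 ≤ x → x * deriv Y x ^ 2 ≤ Y x * (deriv Y x + x * deriv (deriv Y) x)) :
    Monotone fun t => Real.circleAverage (modulusWeight Y f g) 0 (Real.exp t) := by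
  refine monotone_of_convexOn_of_tendsto_atBot ?_ (tendsto_circleAverage_exp_atBot
    (contDiff_modulusWeight hf hg fun x hx => (hY x hx).of_le one_le_two).continuous)
  simp only [← periodMean_comp_exp]
  exact convexOn_periodMean_modulusWeight (hf.comp Complex.differentiable_exp)
    (hg.comp Complex.differentiable_exp) (fun ζ => congrArg f (Complex.exp_periodic ζ))
    (fun ζ => congrArg g (Complex.exp_periodic ζ)) hY (modulusWeightLaplacian_nonneg hY0 hlc)

end ModulusWeight

section LogarithmicDerivative

variable {f : ℂ → ℂ} {Y : ℝ → ℝ}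

lemma deriv_comp_exp (hf : Differentiable ℂ f) (ζ : ℂ) :
    deriv (fun ζ => f (Complex.exp ζ)) ζ = deriv f (Complex.exp ζ) * Complex.exp ζ :=
  ((hf _).hasDerivAt.comp ζ (Complex.hasDerivAt_exp ζ)).deriv

lemma modulusWeightDeriv_comp_exp (hf : Differentiable ℂ f) :
    modulusWeightDeriv Y (fun ζ => f (Complex.exp ζ)) (fun _ => 1) =
      fun ζ => modulusWeightDeriv Y f (fun _ => 1) (Complex.exp ζ) * Complex.exp ζ := by
  ext ζ
  simp only [modulusWeightDeriv, deriv_comp_exp hf, deriv_const]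
  ring

lemma modulusWeightLaplacian_comp_exp (hf : Differentiable ℂ f) (ζ : ℂ) :
    modulusWeightLaplacian Y (fun ζ => f (Complex.exp ζ)) (fun _ => 1) ζ =
      ‖Complex.exp ζ‖ ^ 2 * modulusWeightLaplacian Y f (fun _ => 1) (Complex.exp ζ) := by
  simp only [modulusWeightLaplacian, deriv_comp_exp hf, deriv_const, map_zero, mul_zero,
    Complex.zero_re, norm_mul, norm_zero]
  ring

lemma hasDerivAt_circleAverage_exp (hf : Differentiable ℂ f)
    (hY : ∀ x, 0 ≤ x → ContDiffAt ℝ 1 Y x) (t : ℝ) :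
    HasDerivAt (fun t => Real.circleAverage (modulusWeight Y f fun _ => 1) 0 (Real.exp t))
      (2 * (Real.circleAverage (fun z => modulusWeightDeriv Y f (fun _ => 1) z * z) 0
        (Real.exp t)).re) t := by
  have hF := hf.comp Complex.differentiable_exp
  have hH : Differentiable ℂ fun _ : ℂ => (1 : ℂ) := differentiable_const 1
  have h := hasDerivAt_periodMean_of_dbar_eq_conj (contDiff_modulusWeight hF hH hY)
    (fun ζ => by simp only [modulusWeight, Function.comp_apply, Complex.exp_periodic ζ])
    (dbar_modulusWeight hF hH hY) t
  simp only [Function.comp_def, modulusWeightDeriv_comp_exp hf] at h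
  simp only [← periodMean_comp_exp]
  exact h

lemma hasDerivAt_deriv_circleAverage_exp (hf : Differentiable ℂ f)
    (hY : ∀ x, 0 ≤ x → ContDiffAt ℝ 2 Y x) (t : ℝ) :
    HasDerivAt (fun t => 2 * (Real.circleAverage
        (fun z => modulusWeightDeriv Y f (fun _ => 1) z * z) 0 (Real.exp t)).re)
      (Real.exp (2 * t) * (4 * Real.circleAverage
        (modulusWeightLaplacian Y f fun _ => 1) 0 (Real.exp t))) t := by
  have hF := hf.comp Complex.differentiable_exp
  have hH : Differentiable ℂ fun _ : ℂ => (1 : ℂ) := differentiable_const 1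
  have hper : ∀ ζ, (f ∘ Complex.exp) (ζ + 2 * π * I) = (f ∘ Complex.exp) ζ := fun ζ =>
    congrArg f (Complex.exp_periodic ζ)
  have h := hasDerivAt_two_mul_re_periodMean (contDiff_modulusWeightDeriv hF hH hY)
    (modulusWeightDeriv_add_period hper fun _ => rfl) (dbar_modulusWeightDeriv hF hH hY) t
  have hnorm : ∀ θ : ℝ, ‖Complex.exp (t + θ * I)‖ ^ 2 = Real.exp (2 * t) := fun θ => by
    simp [Complex.norm_exp, ← Real.exp_nat_mul]
  simp only [Function.comp_def, modulusWeightDeriv_comp_exp hf] at h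
  simp only [← periodMean_comp_exp]
  refine h.congr_deriv ?_
  simp only [periodMean, modulusWeightLaplacian_comp_exp hf, hnorm,
    intervalIntegral.integral_const_mul, smul_eq_mul]
  ring

lemma tendsto_re_circleAverage_mul_exp_atBot {g : ℂ → ℂ} (hg : Continuous g) :
    Tendsto (fun t => 2 * (Real.circleAverage (fun z => g z * z) 0 (Real.exp t)).re) atBot
      (𝓝 0) := by
  simpa using! ((Complex.continuous_re.tendsto _).comp
    (tendsto_circleAverage_exp_atBot (hg.mul continuous_id))).const_mul 2

end LogarithmicDerivative

section RegularizedPower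

variable {ε κ c x : ℝ}

/-- The family `(x + ε)^(κ-1-c) (κx + cε)`, closed under differentiation up to constants. The
member `c = 0` is `x φ'(x)` for `φ(x) = (x + ε)^κ`. -/
noncomputable def regWeight (ε κ c x : ℝ) : ℝ := (x + ε) ^ (κ - 1 - c) * (κ * x + c * ε)

lemma regWeight_pos (hε : 0 < ε) (hκ : 0 ≤ κ) (hc : 0 < c) (hx : 0 ≤ x) :
    0 < regWeight ε κ c x := by
  rw [regWeight]
  positivity

lemma hasDerivAt_regWeight (hx : 0 < x + ε) :
    HasDerivAt (regWeight ε κ c) ((κ - c) * regWeight ε κ (c + 1) x) x := by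
  have hpow := ((hasDerivAt_id x).add_const ε).rpow_const (p := κ - 1 - c) (.inl hx.ne')
  have hlin := ((hasDerivAt_id x).const_mul κ).add_const (c * ε)
  refine (hpow.mul hlin).congr_deriv ?_
  rw [regWeight, show κ - 1 - c = κ - 1 - (c + 1) + 1 by ring, add_sub_cancel_right, id,
    Real.rpow_add_one hx.ne']
  ring

lemma deriv_deriv_regWeight (hx : 0 < x + ε) :
    deriv (deriv (regWeight ε κ c)) x =
      (κ - c) * ((κ - (c + 1)) * regWeight ε κ (c + 1 + 1) x) := by
  have hnear : ∀ᶠ y in 𝓝 x, 0 < y + ε :=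
    (continuous_add_const ε).continuousAt.eventually (lt_mem_nhds hx)
  have hderiv : deriv (regWeight ε κ c) =ᶠ[𝓝 x] fun y => (κ - c) * regWeight ε κ (c + 1) y :=
    hnear.mono fun y hy => (hasDerivAt_regWeight hy).deriv
  rw [hderiv.deriv_eq]
  exact ((hasDerivAt_regWeight hx).const_mul _).deriv

lemma contDiffAt_add_rpow {n : WithTop ℕ∞} (hx : 0 < x + ε) :
    ContDiffAt ℝ n (fun x => (x + ε) ^ κ) x :=
  (contDiffAt_id.add contDiffAt_const).rpow_const_of_ne hx.ne'

lemma contDiffAt_regWeight {n : WithTop ℕ∞} (hx : 0 < x + ε) :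
    ContDiffAt ℝ n (regWeight ε κ c) x :=
  (contDiffAt_add_rpow hx).mul ((contDiffAt_const.mul contDiffAt_id).add contDiffAt_const)

lemma rpow_sub_one_mul_self (hx : x ≠ 0) (s : ℝ) : x ^ (s - 1) * x = x ^ s := by
  rw [← Real.rpow_add_one hx, sub_add_cancel]

lemma deriv_add_rpow :
    deriv (fun x => (x + ε) ^ κ) = fun x => κ * (x + ε) ^ (κ - 1) := by
  ext x
  rw [deriv_comp_add_const (fun x => x ^ κ), Real.deriv_rpow_const]

lemma deriv_add_mul_deriv_deriv_add_rpow (hx : 0 < x + ε) :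
    deriv (fun x => (x + ε) ^ κ) x + x * deriv (deriv fun x => (x + ε) ^ κ) x =
      κ * regWeight ε κ 1 x := by
  rw [deriv_add_rpow, deriv_const_mul_field, deriv_add_rpow, regWeight]
  beta_reduce
  rw [← rpow_sub_one_mul_self hx.ne' (κ - 1)]
  ring

lemma mul_deriv_add_rpow_sq_le (hε : 0 < ε) (hκ : 0 ≤ κ) (hx : 0 ≤ x) :
    x * deriv (fun x => (x + ε) ^ κ) x ^ 2 ≤ (x + ε) ^ κ *
      (deriv (fun x => (x + ε) ^ κ) x + x * deriv (deriv fun x => (x + ε) ^ κ) x) := by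
  have hu : 0 < x + ε := by positivity
  rw [deriv_add_mul_deriv_deriv_add_rpow hu, deriv_add_rpow, regWeight, ← sub_nonneg]
  beta_reduce
  rw [← rpow_sub_one_mul_self hu.ne' κ, ← rpow_sub_one_mul_self hu.ne' (κ - 1)]
  calc 0 ≤ κ * ε * ((x + ε) ^ (κ - 1 - 1) * (x + ε)) ^ 2 := by positivity
    _ = _ := by ring

lemma mul_deriv_regWeight_sq_le (hε : 0 < ε) (hκ : 1 ≤ κ) (hx : 0 ≤ x) :
    x * deriv (regWeight ε κ 1) x ^ 2 ≤ regWeight ε κ 1 x *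
      (deriv (regWeight ε κ 1) x + x * deriv (deriv (regWeight ε κ 1)) x) := by
  have hu : 0 < x + ε := by positivity
  have : 0 ≤ κ - 1 := sub_nonneg.2 hκ
  rw [(hasDerivAt_regWeight hu).deriv, deriv_deriv_regWeight hu, ← sub_nonneg]
  simp only [regWeight]
  rw [← rpow_sub_one_mul_self hu.ne' (κ - 1 - 1), sub_sub (κ - 1) 1 1,
    ← rpow_sub_one_mul_self hu.ne' (κ - 1 - (1 + 1)), sub_sub (κ - 1) (1 + 1) 1]
  calc 0 ≤ ((x + ε) ^ (κ - 1 - (1 + 1 + 1)) * (x + ε)) ^ 2 * (κ - 1) * ε *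
        (κ * (κ - 1) * x ^ 2 + 2 * κ * x * ε + 2 * ε ^ 2) := by positivity
    _ = _ := by ring

end RegularizedPower

section ConvexInExp

variable {n n' k : ℝ → ℝ}

lemma hasDerivAt_exp_two_mul (t : ℝ) :
    HasDerivAt (fun t => Real.exp (2 * t)) (2 * Real.exp (2 * t)) t := by
  simpa [mul_comm] using ((hasDerivAt_id t).const_mul 2).exp

lemma le_exp_two_mul_mul_half (hn' : ∀ t, HasDerivAt n' (Real.exp (2 * t) * k t) t)
    (hk : Monotone k) (hlim : Tendsto n' atBot (𝓝 0)) (t : ℝ) :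
    n' t ≤ Real.exp (2 * t) * k t / 2 := by
  have hderiv : ∀ s, HasDerivAt (fun s => n' s - Real.exp (2 * s) * (k t / 2))
      (Real.exp (2 * s) * k s - 2 * Real.exp (2 * s) * (k t / 2)) s := fun s =>
    (hn' s).sub ((hasDerivAt_exp_two_mul s).mul_const _)
  have hanti : AntitoneOn (fun s => n' s - Real.exp (2 * s) * (k t / 2)) (Iic t) := by
    refine antitoneOn_of_deriv_nonpos (convex_Iic t)
      (fun s _ => (hderiv s).continuousAt.continuousWithinAt)
      (fun s _ => (hderiv s).differentiableAt.differentiableWithinAt) fun s hs => ?_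
    rw [interior_Iic] at hs
    rw [(hderiv s).deriv]
    linarith [mul_le_mul_of_nonneg_left (hk (le_of_lt hs)) (Real.exp_pos (2 * s)).le]
  have hexp : Tendsto (fun s : ℝ => Real.exp (2 * s)) atBot (𝓝 0) :=
    Real.tendsto_exp_atBot.comp (tendsto_id.const_mul_atBot two_pos)
  have hlim' : Tendsto (fun s => n' s - Real.exp (2 * s) * (k t / 2)) atBot (𝓝 0) := by
    simpa using hlim.sub (hexp.mul_const (k t / 2))
  have hle := ge_of_tendsto hlim'
    ((eventually_le_atBot t).mono fun s hs => hanti hs self_mem_Iic hs)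
  linarith

lemma monotone_mul_exp_neg_two_mul (hn' : ∀ t, HasDerivAt n' (Real.exp (2 * t) * k t) t)
    (hle : ∀ t, n' t ≤ Real.exp (2 * t) * k t / 2) :
    Monotone fun t => n' t * Real.exp (-(2 * t)) := by
  have hderiv : ∀ t, HasDerivAt (fun t => n' t * Real.exp (-(2 * t)))
      (Real.exp (2 * t) * k t * Real.exp (-(2 * t)) + n' t * (Real.exp (-(2 * t)) * -(2 * 1))) t :=
    fun t => (hn' t).mul (((hasDerivAt_id t).const_mul 2).neg.exp)
  refine monotone_of_deriv_nonneg (fun t => (hderiv t).differentiableAt) fun t => ?_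
  rw [(hderiv t).deriv]
  calc 0 ≤ 2 * Real.exp (-(2 * t)) * (Real.exp (2 * t) * k t / 2 - n' t) :=
        mul_nonneg (by positivity) (sub_nonneg.2 (hle t))
    _ = _ := by ring

lemma convexOn_comp_log_div_two (hn : ∀ t, HasDerivAt n (n' t) t)
    (hmono : Monotone fun t => n' t * Real.exp (-(2 * t))) :
    ConvexOn ℝ (Ioi 0) fun x => n (Real.log x / 2) := by
  have hderiv : ∀ x ∈ Ioi (0 : ℝ), HasDerivAt (fun x => n (Real.log x / 2))
      (n' (Real.log x / 2) * (x⁻¹ / 2)) x := fun x hx =>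
    (hn _).comp x ((Real.hasDerivAt_log (ne_of_gt hx)).div_const 2)
  have hexp : ∀ x ∈ Ioi (0 : ℝ), Real.exp (-(2 * (Real.log x / 2))) = x⁻¹ := fun x hx => by
    rw [mul_div_cancel₀ _ two_ne_zero, Real.exp_neg, Real.exp_log hx]
  refine MonotoneOn.convexOn_of_deriv (convex_Ioi 0)
    (fun x hx => (hderiv x hx).continuousAt.continuousWithinAt)
    (fun x hx => (hderiv x (interior_subset hx)).differentiableAt.differentiableWithinAt) ?_
  rw [interior_Ioi]
  intro x hx y hy hxy
  rw [(hderiv x hx).deriv, (hderiv y hy).deriv]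
  have hslope := hmono (div_le_div_of_nonneg_right (Real.log_le_log hx hxy) zero_le_two)
  simp only [hexp x hx, hexp y hy] at hslope
  linarith

end ConvexInExp

section ExtendToIci

variable {g : ℝ → ℝ} {a : ℝ}

lemma tendsto_comp_add_right_nhdsGT (hg : Continuous g) (x : ℝ) :
    Tendsto (fun δ => g (x + δ)) (𝓝[>] 0) (𝓝 (g x)) := by
  simpa using! ((hg.comp (continuous_const_add x)).tendsto 0).mono_left nhdsWithin_le_nhds

lemma monotoneOn_Ici_of_monotoneOn_Ioi (hg : Continuous g) (hmono : MonotoneOn g (Ioi a)) :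
    MonotoneOn g (Ici a) := by
  intro x hx y hy hxy
  refine le_of_tendsto_of_tendsto (tendsto_comp_add_right_nhdsGT hg x)
    (tendsto_comp_add_right_nhdsGT hg y) ?_
  filter_upwards [self_mem_nhdsWithin] with δ hδ
  have hshift : ∀ u ∈ Ici a, u + δ ∈ Ioi a := fun u hu =>
    lt_of_le_of_lt hu (lt_add_of_pos_right u hδ)
  exact hmono (hshift x hx) (hshift y hy) (by gcongr)

lemma convexOn_Ici_of_convexOn_Ioi (hg : Continuous g) (hconv : ConvexOn ℝ (Ioi a) g) :
    ConvexOn ℝ (Ici a) g := by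
  refine ⟨convex_Ici a, fun x hx y hy b c hb hc hbc => ?_⟩
  refine le_of_tendsto_of_tendsto (tendsto_comp_add_right_nhdsGT hg _)
    (((tendsto_comp_add_right_nhdsGT hg x).const_smul b).add
      ((tendsto_comp_add_right_nhdsGT hg y).const_smul c)) ?_
  filter_upwards [self_mem_nhdsWithin] with δ hδ
  have hshift : ∀ u ∈ Ici a, u + δ ∈ Ioi a := fun u hu =>
    lt_of_le_of_lt hu (lt_add_of_pos_right u hδ)
  have hcomb : b • x + c • y + δ = b • (x + δ) + c • (y + δ) := by
    rw [smul_add, smul_add, add_add_add_comm, ← add_smul, hbc, one_smul]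
  rw [hcomb]
  exact hconv.2 (hshift x hx) (hshift y hy) hb hc hbc

end ExtendToIci

section CircleAverage

variable {f : ℂ → ℂ} {ε κ : ℝ}

lemma modulusWeight_one (Y : ℝ → ℝ) (f : ℂ → ℂ) :
    modulusWeight Y f (fun _ => 1) = fun z => Y (‖f z‖ ^ 2) := by
  ext z
  rw [modulusWeight, norm_one, one_pow, mul_one]

lemma modulusWeightLaplacian_add_rpow (hε : 0 < ε) (f : ℂ → ℂ) :
    modulusWeightLaplacian (fun x => (x + ε) ^ κ) f (fun _ => 1) =
      κ • modulusWeight (regWeight ε κ 1) f (deriv f) := by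
  ext z
  rw [modulusWeightLaplacian, deriv_add_mul_deriv_deriv_add_rpow (by positivity), deriv_const,
    Pi.smul_apply, modulusWeight, smul_eq_mul]
  simp only [norm_one, map_zero, mul_zero, Complex.zero_re, norm_zero]
  ring

lemma monotone_circleAverage_norm_sq_add_rpow_exp (hf : Differentiable ℂ f) (hε : 0 < ε)
    (hκ : 0 ≤ κ) :
    Monotone fun t => Real.circleAverage (fun z => (‖f z‖ ^ 2 + ε) ^ κ) 0 (Real.exp t) := by
  have h := monotone_circleAverage_modulusWeight_exp (Y := fun x => (x + ε) ^ κ) hf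
    (differentiable_const 1) (fun x hx => contDiffAt_add_rpow (by positivity))
    (fun x hx => by positivity) fun x hx => mul_deriv_add_rpow_sq_le hε hκ hx
  rwa [modulusWeight_one] at h

lemma convexOn_circleAverage_norm_sq_add_rpow_exp (hf : Differentiable ℂ f) (hε : 0 < ε)
    (hκ : 1 ≤ κ) :
    ConvexOn ℝ (Ioi 0) fun x =>
      Real.circleAverage (fun z => (‖f z‖ ^ 2 + ε) ^ κ) 0 (Real.exp (Real.log x / 2)) := by
  have hκ0 : 0 ≤ κ := zero_le_one.trans hκ
  have hY : ∀ x, 0 ≤ x → ContDiffAt ℝ 2 (fun x => (x + ε) ^ κ) x := fun x hx =>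
    contDiffAt_add_rpow (by positivity)
  have hn' := hasDerivAt_deriv_circleAverage_exp hf hY
  have hweight : Monotone fun t =>
      Real.circleAverage (modulusWeight (regWeight ε κ 1) f (deriv f)) 0 (Real.exp t) :=
    monotone_circleAverage_modulusWeight_exp hf hf.deriv
      (fun x hx => contDiffAt_regWeight (by positivity))
      (fun x hx => regWeight_pos hε hκ0 one_pos hx) fun x hx => mul_deriv_regWeight_sq_le hε hκ hx
  have hk : Monotone fun t => 4 * Real.circleAverage
      (modulusWeightLaplacian (fun x => (x + ε) ^ κ) f fun _ => 1) 0 (Real.exp t) := by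
    simp only [modulusWeightLaplacian_add_rpow hε, Real.circleAverage_smul]
    exact (hweight.const_smul hκ0).const_mul zero_le_four
  have hlim := tendsto_re_circleAverage_mul_exp_atBot
    (contDiff_modulusWeightDeriv hf (differentiable_const 1) hY).continuous
  have hconv := convexOn_comp_log_div_two
    (hasDerivAt_circleAverage_exp hf fun x hx => (hY x hx).of_le one_le_two)
    (monotone_mul_exp_neg_two_mul hn' (le_exp_two_mul_mul_half hn' hk hlim))
  rwa [modulusWeight_one] at hconv

lemma tendsto_circleAverage_norm_sq_add_rpow (hf : Continuous f) {p : ℝ} (hp : 0 ≤ p) (ρ : ℝ) :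
    Tendsto (fun ε => Real.circleAverage (fun z => (‖f z‖ ^ 2 + ε) ^ (p / 2)) 0 ρ) (𝓝[>] 0)
      (𝓝 (Real.circleAverage (fun z => ‖f z‖ ^ p) 0 ρ)) := by
  have hcont : Continuous fun ε =>
      Real.circleAverage (fun z => (‖f z‖ ^ 2 + ε) ^ (p / 2)) 0 ρ := by
    have hint : Continuous fun x : ℝ × ℝ => (‖f (circleMap 0 ρ x.2)‖ ^ 2 + x.1) ^ (p / 2) :=
      Continuous.rpow_const (by fun_prop) fun _ => .inr (by positivity)
    simp only [Real.circleAverage]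
    exact (intervalIntegral.continuous_parametric_intervalIntegral_of_continuous'
      hint _ _).const_smul (2 * π)⁻¹
  have hzero : ∀ z, (‖f z‖ ^ 2 + 0) ^ (p / 2) = ‖f z‖ ^ p := fun z => by
    rw [add_zero, ← Real.rpow_natCast, ← Real.rpow_mul (norm_nonneg _), Nat.cast_two,
      mul_div_cancel₀ _ two_ne_zero]
  simpa only [hzero] using (hcont.tendsto 0).mono_left nhdsWithin_le_nhds

lemma continuous_circleAverage_norm_rpow (hf : Continuous f) {p : ℝ} (hp : 0 ≤ p) :
    Continuous (Real.circleAverage (fun z => ‖f z‖ ^ p) 0) :=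
  Real.Continuous.circleAverage (hf.norm.rpow_const fun _ => .inr hp)

lemma monotoneOn_circleAverage_norm_rpow (hf : Differentiable ℂ f) {p : ℝ} (hp : 0 ≤ p) :
    MonotoneOn (Real.circleAverage (fun z => ‖f z‖ ^ p) 0) (Ici 0) := by
  refine monotoneOn_Ici_of_monotoneOn_Ioi (continuous_circleAverage_norm_rpow hf.continuous hp) ?_
  intro ρ hρ σ hσ hρσ
  refine le_of_tendsto_of_tendsto (tendsto_circleAverage_norm_sq_add_rpow hf.continuous hp ρ)
    (tendsto_circleAverage_norm_sq_add_rpow hf.continuous hp σ) ?_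
  filter_upwards [self_mem_nhdsWithin] with ε hε
  have h := monotone_circleAverage_norm_sq_add_rpow_exp hf hε (κ := p / 2) (by positivity)
    (Real.log_le_log hρ hρσ)
  simpa only [Real.exp_log hρ, Real.exp_log hσ] using h

lemma convexOn_circleAverage_norm_rpow_sqrt (hf : Differentiable ℂ f) {q : ℝ} (hq : 2 ≤ q) :
    ConvexOn ℝ (Ici 0) fun x => Real.circleAverage (fun z => ‖f z‖ ^ q) 0 √x := by
  have hq0 : 0 ≤ q := zero_le_two.trans hq
  refine convexOn_Ici_of_convexOn_Ioi
    ((continuous_circleAverage_norm_rpow hf.continuous hq0).comp Real.continuous_sqrt)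
    ⟨convex_Ioi 0, fun x hx y hy a b ha hb hab => ?_⟩
  have hlim := fun x : ℝ => tendsto_circleAverage_norm_sq_add_rpow hf.continuous hq0 √x
  refine le_of_tendsto_of_tendsto (hlim _) (((hlim x).const_smul a).add ((hlim y).const_smul b)) ?_
  filter_upwards [self_mem_nhdsWithin] with ε hε
  have hsqrt : ∀ x ∈ Ioi (0 : ℝ), Real.exp (Real.log x / 2) = √x := fun x hx => by
    rw [← Real.log_sqrt (le_of_lt hx), Real.exp_log (Real.sqrt_pos.2 hx)]
  have h := (convexOn_circleAverage_norm_sq_add_rpow_exp hf hε (κ := q / 2) (by linarith)).2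
    hx hy ha hb hab
  simpa only [hsqrt _ hx, hsqrt _ hy, hsqrt _ (convex_Ioi 0 hx hy ha hb hab)] using h

end CircleAverage

section BetaDistribution

open ProbabilityTheory

variable {a b c : ℝ}

lemma beta_add_one_left (ha : 0 < a) (hb : 0 < b) :
    beta (a + 1) b = a / (a + b) * beta a b := by
  have hab : a + b ≠ 0 := by positivity
  rw [beta, beta, add_right_comm, Real.Gamma_add_one ha.ne', Real.Gamma_add_one hab,
    mul_assoc, mul_div_mul_comm]

lemma beta_one_left (hb : 0 < b) : beta 1 b = b⁻¹ := by
  rw [beta, Real.Gamma_one, one_mul, add_comm, Real.Gamma_add_one hb.ne',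
    div_mul_cancel_right₀ (Real.Gamma_pos_of_pos hb).ne']

lemma beta_mul_beta_add (ha : 0 < a) (hb : 0 < b) (hc : 0 < c) :
    beta a b * beta (a + b) c = beta b c * beta a (b + c) := by
  have hab := (Real.Gamma_pos_of_pos (add_pos ha hb)).ne'
  have hbc := (Real.Gamma_pos_of_pos (add_pos hb hc)).ne'
  simp only [beta, add_assoc]
  field_simp

lemma lintegral_rpow_mul_one_sub_rpow (ha : 0 < a) (hb : 0 < b) :
    ∫⁻ u in Ioo (0 : ℝ) 1, ENNReal.ofReal (u ^ (a - 1) * (1 - u) ^ (b - 1)) =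
      ENNReal.ofReal (beta a b) := by
  have hB := beta_pos ha hb
  have hone := lintegral_betaPDF_eq_one ha hb
  simp only [lintegral_betaPDF, mul_assoc, ENNReal.ofReal_mul (one_div_nonneg.2 hB.le)] at hone
  rw [lintegral_const_mul' _ _ ENNReal.ofReal_ne_top, one_div, ENNReal.ofReal_inv_of_pos hB] at hone
  exact (ENNReal.eq_inv_of_mul_eq_one_left ((mul_comm _ _).trans hone)).trans (inv_inv _)

lemma measurable_betaPDF (a b : ℝ) : Measurable (betaPDF a b) :=
  (measurable_betaPDFReal a b).ennreal_ofReal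

lemma lintegral_betaMeasure (ha : 0 < a) (hb : 0 < b) (g : ℝ → ℝ≥0∞) :
    ∫⁻ u, g u ∂(betaMeasure a b) = ENNReal.ofReal (beta a b)⁻¹ *
      ∫⁻ u in Ioo (0 : ℝ) 1, ENNReal.ofReal (u ^ (a - 1) * (1 - u) ^ (b - 1)) * g u := by
  have hB := beta_pos ha hb
  rw [betaMeasure, lintegral_withDensity_eq_lintegral_mul_non_measurable _
      (measurable_betaPDF a b) (.of_forall fun _ => ENNReal.ofReal_lt_top),
    ← lintegral_const_mul' _ _ ENNReal.ofReal_ne_top, ← lintegral_indicator measurableSet_Ioo]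
  refine lintegral_congr fun u => ?_
  by_cases hu : u ∈ Ioo (0 : ℝ) 1
  · rw [indicator_of_mem hu, Pi.mul_apply, betaPDF_of_pos_lt_one hu.1 hu.2, ← mul_assoc,
      ← ENNReal.ofReal_mul (inv_nonneg.2 hB.le), one_div, mul_assoc]
  · rw [indicator_of_notMem hu, Pi.mul_apply, betaPDF, betaPDFReal, if_neg (mem_Ioo.not.1 hu),
      ENNReal.ofReal_zero, zero_mul]

lemma ae_betaMeasure_mem_Ioo (a b : ℝ) : ∀ᵐ u ∂(betaMeasure a b), u ∈ Ioo (0 : ℝ) 1 := by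
  rw [betaMeasure, ae_withDensity_iff (measurable_betaPDF a b)]
  refine .of_forall fun u => not_imp_comm.1 fun hu => ?_
  rw [betaPDF, betaPDFReal, if_neg (mem_Ioo.not.1 hu), ENNReal.ofReal_zero]

lemma integral_id_betaMeasure (ha : 0 < a) (hb : 0 < b) :
    ∫ u, u ∂(betaMeasure a b) = a / (a + b) := by
  have hB := beta_pos ha hb
  have hmoment : ∫⁻ u in Ioo (0 : ℝ) 1,
      ENNReal.ofReal (u ^ (a - 1) * (1 - u) ^ (b - 1)) * ENNReal.ofReal u =
      ENNReal.ofReal (beta (a + 1) b) := by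
    rw [← lintegral_rpow_mul_one_sub_rpow (by positivity) hb]
    refine setLIntegral_congr_fun measurableSet_Ioo fun u ⟨hu0, hu1⟩ => ?_
    have : 0 < 1 - u := sub_pos.2 hu1
    rw [← ENNReal.ofReal_mul (by positivity), mul_right_comm, ← Real.rpow_add_one hu0.ne',
      sub_add_cancel, add_sub_cancel_right]
  rw [integral_eq_lintegral_of_nonneg_ae
      ((ae_betaMeasure_mem_Ioo a b).mono fun u hu => hu.1.le) (by fun_prop),
    lintegral_betaMeasure ha hb, hmoment, beta_add_one_left ha hb,
    ← ENNReal.ofReal_mul (by positivity), ENNReal.toReal_ofReal (by positivity)]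
  field_simp

lemma setLIntegral_Ioo_comp_affine (hab : a < b) (g : ℝ → ℝ≥0∞) :
    ∫⁻ y in Ioo a b, g y =
      ENNReal.ofReal (b - a) * ∫⁻ u in Ioo (0 : ℝ) 1, g ((b - a) * u + a) := by
  have hlen : 0 < b - a := sub_pos.2 hab
  have himage : (fun u => (b - a) * u + a) '' Ioo 0 1 = Ioo a b := by
    rw [image_affine_Ioo hlen, mul_zero, mul_one, zero_add, sub_add_cancel]
  rw [← himage, lintegral_image_eq_lintegral_abs_deriv_mul measurableSet_Ioo
    (f' := fun _ => b - a)
    (fun u _ => by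
      simpa using! (((hasDerivAt_id u).const_mul (b - a)).add_const a).hasDerivWithinAt)
    (fun u _ v _ h => mul_left_cancel₀ hlen.ne' (add_right_cancel h)), abs_of_pos hlen,
    lintegral_const_mul' _ _ ENNReal.ofReal_ne_top]

lemma lintegral_sub_rpow_mul_one_sub_rpow (ha : 0 < a) (hb : 0 < b) {y : ℝ} (hy : y < 1) :
    ∫⁻ t in Ioo y 1, ENNReal.ofReal ((t - y) ^ (a - 1) * (1 - t) ^ (b - 1)) =
      ENNReal.ofReal ((1 - y) ^ (a + b - 1) * beta a b) := by
  have hy' : 0 < 1 - y := sub_pos.2 hy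
  rw [setLIntegral_Ioo_comp_affine hy, ENNReal.ofReal_mul (by positivity),
    ← lintegral_rpow_mul_one_sub_rpow ha hb, ← lintegral_const_mul' _ _ ENNReal.ofReal_ne_top,
    ← lintegral_const_mul' _ _ ENNReal.ofReal_ne_top]
  refine setLIntegral_congr_fun measurableSet_Ioo fun u ⟨hu0, hu1⟩ => ?_
  have hu' : 0 < 1 - u := sub_pos.2 hu1
  have hsub : 1 - ((1 - y) * u + y) = (1 - y) * (1 - u) := by ring
  have hexp : (1 - y) ^ (a + b - 1) = (1 - y) * ((1 - y) ^ (a - 1) * (1 - y) ^ (b - 1)) := by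
    nth_rw 2 [← Real.rpow_one (1 - y)]
    rw [← Real.rpow_add hy', ← Real.rpow_add hy']
    congr 1
    ring
  simp only [add_sub_cancel_right, hsub]
  rw [← ENNReal.ofReal_mul hy'.le, ← ENNReal.ofReal_mul (by positivity),
    Real.mul_rpow hy'.le hu0.le, Real.mul_rpow hy'.le hu'.le, hexp]
  congr 1
  ring

lemma lintegral_rpow_mul_one_sub_rpow_comp_mul {t : ℝ} (ht : 0 < t) (g : ℝ → ℝ≥0∞) :
    ENNReal.ofReal (t ^ (a + b - 1)) *
        ∫⁻ x in Ioo (0 : ℝ) 1, ENNReal.ofReal (x ^ (a - 1) * (1 - x) ^ (b - 1)) * g (t * x) =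
      ∫⁻ y in Ioo 0 t, ENNReal.ofReal (y ^ (a - 1) * (t - y) ^ (b - 1)) * g y := by
  rw [setLIntegral_Ioo_comp_affine ht, ← lintegral_const_mul' _ _ ENNReal.ofReal_ne_top,
    ← lintegral_const_mul' _ _ ENNReal.ofReal_ne_top]
  refine setLIntegral_congr_fun measurableSet_Ioo fun x ⟨hx0, hx1⟩ => ?_
  have hx' : 0 < 1 - x := sub_pos.2 hx1
  have hsub : t - t * x = t * (1 - x) := by ring
  have hexp : t ^ (a + b - 1) = t * (t ^ (a - 1) * t ^ (b - 1)) := by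
    nth_rw 2 [← Real.rpow_one t]
    rw [← Real.rpow_add ht, ← Real.rpow_add ht]
    congr 1
    ring
  simp only [sub_zero, add_zero, ← mul_assoc, hsub]
  rw [← ENNReal.ofReal_mul (by positivity), ← ENNReal.ofReal_mul ht.le,
    Real.mul_rpow ht.le hx0.le, Real.mul_rpow ht.le hx'.le, hexp]
  congr 2
  ring

lemma setLIntegral_Ioo_setLIntegral_Ioo_swap {G : ℝ → ℝ → ℝ≥0∞}
    (hG : Measurable (Function.uncurry G)) :
    ∫⁻ t in Ioo a b, ∫⁻ y in Ioo a t, G t y = ∫⁻ y in Ioo a b, ∫⁻ t in Ioo y b, G t y := by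
  have hmeas : Measurable (Function.uncurry fun t => (Iio t).indicator (G t)) :=
    hG.indicator (measurableSet_lt measurable_snd measurable_fst)
  calc ∫⁻ t in Ioo a b, ∫⁻ y in Ioo a t, G t y
      = ∫⁻ t in Ioo a b, ∫⁻ y in Ioo a b, (Iio t).indicator (G t) y :=
        setLIntegral_congr_fun measurableSet_Ioo fun t ht => by
          rw [setLIntegral_indicator measurableSet_Iio, Iio_inter_Ioo, min_eq_left ht.2.le]
    _ = ∫⁻ y in Ioo a b, ∫⁻ t in Ioo a b, (Ioi y).indicator (fun t => G t y) t :=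
        lintegral_lintegral_swap hmeas.aemeasurable
    _ = ∫⁻ y in Ioo a b, ∫⁻ t in Ioo y b, G t y :=
        setLIntegral_congr_fun measurableSet_Ioo fun y hy => by
          rw [setLIntegral_indicator measurableSet_Ioi, Ioi_inter_Ioo, max_eq_left hy.1.le]

lemma lintegral_rpow_mul_lintegral_comp_mul (hb : 0 < b) (hc : 0 < c) {g : ℝ → ℝ≥0∞}
    (hg : Measurable g) :
    ∫⁻ t in Ioo (0 : ℝ) 1, ENNReal.ofReal (t ^ (a + b - 1) * (1 - t) ^ (c - 1)) *
        ∫⁻ x in Ioo (0 : ℝ) 1, ENNReal.ofReal (x ^ (a - 1) * (1 - x) ^ (b - 1)) * g (t * x) =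
      ENNReal.ofReal (beta b c) *
        ∫⁻ y in Ioo (0 : ℝ) 1, ENNReal.ofReal (y ^ (a - 1) * (1 - y) ^ (b + c - 1)) * g y := by
  calc _ = ∫⁻ t in Ioo (0 : ℝ) 1, ∫⁻ y in Ioo 0 t, ENNReal.ofReal (y ^ (a - 1)) * g y *
          ENNReal.ofReal ((t - y) ^ (b - 1) * (1 - t) ^ (c - 1)) := by
        refine setLIntegral_congr_fun measurableSet_Ioo fun t ⟨ht0, ht1⟩ => ?_
        have : 0 ≤ 1 - t := sub_nonneg.2 ht1.le
        rw [ENNReal.ofReal_mul (by positivity), mul_right_comm,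
          lintegral_rpow_mul_one_sub_rpow_comp_mul ht0,
          ← lintegral_mul_const' _ _ ENNReal.ofReal_ne_top]
        refine setLIntegral_congr_fun measurableSet_Ioo fun y ⟨hy0, hyt⟩ => ?_
        have : 0 ≤ t - y := sub_nonneg.2 hyt.le
        rw [ENNReal.ofReal_mul (by positivity), ENNReal.ofReal_mul (by positivity)]
        ring
    _ = ∫⁻ y in Ioo (0 : ℝ) 1, ENNReal.ofReal (beta b c) *
          (ENNReal.ofReal (y ^ (a - 1) * (1 - y) ^ (b + c - 1)) * g y) := by
        rw [setLIntegral_Ioo_setLIntegral_Ioo_swap (by fun_prop)]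
        refine setLIntegral_congr_fun measurableSet_Ioo fun y ⟨hy0, hy1⟩ => ?_
        have : 0 ≤ 1 - y := sub_nonneg.2 hy1.le
        rw [lintegral_const_mul _ (by fun_prop), lintegral_sub_rpow_mul_one_sub_rpow hb hc hy1,
          ENNReal.ofReal_mul' (beta_pos hb hc).le, ENNReal.ofReal_mul (by positivity)]
        ring
    _ = _ := lintegral_const_mul' _ _ ENNReal.ofReal_ne_top

lemma lintegral_lintegral_betaMeasure_comp_mul (ha : 0 < a) (hb : 0 < b) (hc : 0 < c)
    {g : ℝ → ℝ≥0∞} (hg : Measurable g) :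
    ∫⁻ x, ∫⁻ t, g (t * x) ∂(betaMeasure (a + b) c) ∂(betaMeasure a b) =
      ∫⁻ y, g y ∂(betaMeasure a (b + c)) := by
  have := isProbabilityMeasureBeta ha hb
  have := isProbabilityMeasureBeta (add_pos ha hb) hc
  have hab := beta_pos ha hb
  have hab_c := beta_pos (add_pos ha hb) hc
  have hbc := beta_pos hb hc
  have hnorm : (beta a b)⁻¹ * (beta (a + b) c)⁻¹ * beta b c = (beta a (b + c))⁻¹ := by
    rw [← mul_inv, beta_mul_beta_add ha hb hc, mul_inv, mul_right_comm, inv_mul_cancel₀ hbc.ne',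
      one_mul]
  have hmeas : Measurable fun t => ∫⁻ x in Ioo (0 : ℝ) 1,
      ENNReal.ofReal (x ^ (a - 1) * (1 - x) ^ (b - 1)) * g (t * x) := by fun_prop
  rw [lintegral_lintegral_swap (by fun_prop)]
  simp only [lintegral_betaMeasure ha hb]
  rw [lintegral_const_mul _ hmeas, lintegral_betaMeasure (add_pos ha hb) hc,
    lintegral_rpow_mul_lintegral_comp_mul hb hc hg, ← mul_assoc, ← mul_assoc,
    ← ENNReal.ofReal_mul (by positivity), ← ENNReal.ofReal_mul (by positivity), hnorm,
    lintegral_betaMeasure ha (add_pos hb hc)]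

section ConvexOrder

variable {M : ℝ → ℝ}

lemma ofReal_map_mean_le_lintegral_betaMeasure (ha : 0 < a) (hb : 0 < b) (hM : Continuous M)
    (hM0 : ∀ x, 0 ≤ M x) (hconv : ConvexOn ℝ (Ici 0) M) {x : ℝ} (hx : 0 ≤ x) :
    ENNReal.ofReal (M (a / (a + b) * x)) ≤
      ∫⁻ t, ENNReal.ofReal (M (t * x)) ∂(betaMeasure a b) := by
  have := isProbabilityMeasureBeta ha hb
  have hmem := ae_betaMeasure_mem_Ioo a b
  have hint : ∀ g : ℝ → ℝ, Continuous g → Integrable g (betaMeasure a b) := fun g hg => by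
    obtain ⟨C, hC⟩ := (isCompact_Icc (a := (0 : ℝ)) (b := 1)).exists_bound_of_continuousOn
      hg.continuousOn
    exact .of_bound hg.aestronglyMeasurable C
      (hmem.mono fun t ht => hC t (Ioo_subset_Icc_self ht))
  have hjensen := hconv.map_integral_le (f := fun t => t * x) hM.continuousOn isClosed_Ici
    (hmem.mono fun t ht => mul_nonneg ht.1.le hx) (hint _ (by fun_prop)) (hint _ (by fun_prop))
  rw [integral_mul_const, integral_id_betaMeasure ha hb] at hjensen
  rw [← ofReal_integral_eq_lintegral_ofReal (hint _ (by fun_prop)) (.of_forall fun _ => hM0 _)]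
  exact ENNReal.ofReal_le_ofReal hjensen

-- For independent `X ~ Beta(a, b)` and `T ~ Beta(a + b, c)` one has `T X ~ Beta(a, b + c)` and
-- `E T = (a + b) / (a + b + c)`, so this is Jensen's inequality conditionally on `X`.
lemma lintegral_map_mul_le_lintegral_betaMeasure (ha : 0 < a) (hb : 0 < b) (hc : 0 < c)
    (hM : Continuous M) (hM0 : ∀ x, 0 ≤ M x) (hconv : ConvexOn ℝ (Ici 0) M) :
    ∫⁻ x, ENNReal.ofReal (M ((a + b) / (a + b + c) * x)) ∂(betaMeasure a b) ≤
      ∫⁻ x, ENNReal.ofReal (M x) ∂(betaMeasure a (b + c)) := by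
  rw [← lintegral_lintegral_betaMeasure_comp_mul ha hb hc (by fun_prop)]
  refine lintegral_mono_ae ((ae_betaMeasure_mem_Ioo a b).mono fun x hx => ?_)
  exact ofReal_map_mean_le_lintegral_betaMeasure (add_pos ha hb) hc hM hM0 hconv hx.1.le

end ConvexOrder

end BetaDistribution

section RadialIntegration

variable {f : ℂ → ℂ} {p α : ℝ}

lemma ae_bergmanMeasure_mem_ball (α : ℝ) : ∀ᵐ z ∂(bergmanMeasure α), z ∈ ball (0 : ℂ) 1 :=
  (withDensity_absolutelyContinuous _ _).ae_le (ae_restrict_mem measurableSet_ball)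

lemma aemeasurable_bergmanMeasure_of_continuousOn {F : ℂ → ℝ≥0∞} (hF : ContinuousOn F (ball 0 1))
    (α : ℝ) : AEMeasurable F (bergmanMeasure α) :=
  (hF.aemeasurable measurableSet_ball).mono_ac (withDensity_absolutelyContinuous _ _)

lemma lintegral_bergmanMeasure {F : ℂ → ℝ≥0∞} (hF : ContinuousOn F (ball 0 1)) (α : ℝ) :
    ∫⁻ z, F z ∂(bergmanMeasure α) =
      ∫⁻ t in Ioo (0 : ℝ) 1, ENNReal.ofReal t *
        (ENNReal.ofReal ((α - 1) * (1 - t ^ 2) ^ (α - 2) / π) *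
          ∫⁻ θ in Ioo (-π) π, F (t * Complex.exp (θ * I))) := by
  have hmeas : Measurable ((ball 0 1).indicator F) := by
    classical
    rw [← piecewise_eq_indicator]
    exact hF.measurable_piecewise continuousOn_const measurableSet_ball
  have hind : F =ᵐ[bergmanMeasure α] (ball 0 1).indicator F :=
    (ae_bergmanMeasure_mem_ball α).mono fun z hz => (indicator_of_mem hz F).symm
  rw [lintegral_congr_ae hind, bergmanMeasure, lintegral_radial_withDensity
    (w := fun t => (α - 1) * (1 - t ^ 2) ^ (α - 2) / π) (by fun_prop) hmeas]
  refine setLIntegral_congr_fun measurableSet_Ioo fun t ht => ?_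
  have hmem : ∀ θ : ℝ, (t : ℂ) * Complex.exp (θ * I) ∈ ball 0 1 := fun θ => by
    rw [mem_ball_zero_iff, norm_ofReal_mul_exp_mul_I ht.1.le]
    exact ht.2
  simp only [indicator_of_mem (hmem _)]

lemma setLIntegral_Ioo_ofReal_eq_circleAverage {g : ℂ → ℝ} (hg : ContinuousOn g (ball 0 1))
    (hg0 : ∀ z, 0 ≤ g z) {t : ℝ} (ht : t ∈ Ico (0 : ℝ) 1) :
    ∫⁻ θ in Ioo (-π) π, ENNReal.ofReal (g (t * Complex.exp (θ * I))) =
      ENNReal.ofReal (2 * π * Real.circleAverage g 0 t) := by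
  have hcircle : ∀ θ : ℝ, (t : ℂ) * Complex.exp (θ * I) = circleMap 0 t θ := fun θ =>
    (circleMap_zero t θ).symm
  have hmem : ∀ θ : ℝ, circleMap 0 t θ ∈ ball 0 1 := fun θ => by
    rw [mem_ball_zero_iff, norm_circleMap_zero, abs_of_nonneg ht.1]
    exact ht.2
  have hcont : Continuous fun θ => g (circleMap 0 t θ) :=
    hg.comp_continuous (continuous_circleMap 0 t) hmem
  have hint : ∫ θ in -π..π, g (circleMap 0 t θ) = 2 * π * Real.circleAverage g 0 t := by
    rw [Real.circleAverage_eq_integral_add (-π), smul_eq_mul, mul_inv_cancel_left₀ (by positivity),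
      intervalIntegral.integral_comp_add_right (fun θ => g (circleMap 0 t θ)), zero_add,
      show 2 * π + -π = π by ring]
  simp only [hcircle]
  rw [← hint, intervalIntegral.integral_of_le (by linarith [Real.pi_pos]),
    integral_Ioc_eq_integral_Ioo, ofReal_integral_eq_lintegral_ofReal
      (hcont.integrableOn_Icc.mono_set Ioo_subset_Icc_self) (.of_forall fun _ => hg0 _)]

lemma setLIntegral_Ioo_comp_sq (g : ℝ → ℝ≥0∞) :
    ∫⁻ x in Ioo (0 : ℝ) 1, g x =
      ∫⁻ t in Ioo (0 : ℝ) 1, ENNReal.ofReal (2 * t) * g (t ^ 2) := by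
  have himage : (fun t : ℝ => t ^ 2) '' Ioo 0 1 = Ioo 0 1 := by
    refine Subset.antisymm (image_subset_iff.2 fun t ht => ⟨pow_pos ht.1 2,
      pow_lt_one₀ ht.1.le ht.2 two_ne_zero⟩) fun x hx => ⟨√x, ⟨Real.sqrt_pos.2 hx.1, ?_⟩,
      Real.sq_sqrt hx.1.le⟩
    rw [Real.sqrt_lt' one_pos, one_pow]
    exact hx.2
  conv_lhs => rw [← himage]
  rw [lintegral_image_eq_lintegral_abs_deriv_mul measurableSet_Ioo (f' := fun t => 2 * t)
    (fun t _ => by simpa using! (hasDerivAt_pow 2 t).hasDerivWithinAt)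
    (fun s hs t ht h => (sq_eq_sq₀ hs.1.le ht.1.le).1 h)]
  refine setLIntegral_congr_fun measurableSet_Ioo fun t ht => ?_
  simp only [abs_of_pos (mul_pos two_pos ht.1)]

-- For `z` distributed according to `dA_α`, the random variable `|z|²` is `Beta(1, α - 1)`.
lemma lintegral_norm_rpow_bergmanMeasure_eq_betaMeasure (hf : ContinuousOn f (ball 0 1))
    (hp : 0 ≤ p) (hα : 1 < α) :
    ∫⁻ z, ENNReal.ofReal (‖f z‖ ^ p) ∂(bergmanMeasure α) =
      ∫⁻ x, ENNReal.ofReal (Real.circleAverage (fun z => ‖f z‖ ^ p) 0 √x)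
        ∂(ProbabilityTheory.betaMeasure 1 (α - 1)) := by
  have hα' : 0 < α - 1 := sub_pos.2 hα
  have hcont : ContinuousOn (fun z => ‖f z‖ ^ p) (ball 0 1) := hf.norm.rpow_const fun _ _ => .inr hp
  have havg : ∀ t, 0 ≤ Real.circleAverage (fun z => ‖f z‖ ^ p) 0 t := fun t =>
    Real.circleAverage_nonneg_of_nonneg fun _ _ => by positivity
  rw [lintegral_betaMeasure one_pos hα', beta_one_left hα', inv_inv, setLIntegral_Ioo_comp_sq,
    ← lintegral_const_mul' _ _ ENNReal.ofReal_ne_top,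
    lintegral_bergmanMeasure (F := fun z => ENNReal.ofReal (‖f z‖ ^ p))
      (ENNReal.continuous_ofReal.comp_continuousOn hcont)]
  refine setLIntegral_congr_fun measurableSet_Ioo fun t ⟨ht0, ht1⟩ => ?_
  have ht' : 0 < 1 - t ^ 2 := by nlinarith
  have hexp : α - 1 - 1 = α - 2 := by ring
  have := havg t
  rw [setLIntegral_Ioo_ofReal_eq_circleAverage hcont (fun _ => by positivity) ⟨ht0.le, ht1⟩,
    sub_self, Real.rpow_zero, one_mul, hexp, Real.sqrt_sq ht0.le]
  have hw : 0 ≤ (1 - t ^ 2) ^ (α - 2) := Real.rpow_nonneg ht'.le _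
  rw [← ENNReal.ofReal_mul (by positivity), ← ENNReal.ofReal_mul ht0.le,
    ← ENNReal.ofReal_mul hw, ← ENNReal.ofReal_mul (by positivity), ← ENNReal.ofReal_mul hα'.le]
  congr 1
  field_simp

lemma isProbabilityMeasure_bergmanMeasure (hα : 1 < α) :
    IsProbabilityMeasure (bergmanMeasure α) := by
  have := ProbabilityTheory.isProbabilityMeasureBeta one_pos (sub_pos.2 hα)
  have h := lintegral_norm_rpow_bergmanMeasure_eq_betaMeasure (f := fun _ => 1)
    continuousOn_const zero_le_one hα
  refine ⟨?_⟩
  simpa only [norm_one, Real.one_rpow, Real.circleAverage_const, ENNReal.ofReal_one, lintegral_one,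
    measure_univ] using h

end RadialIntegration

section Dilation

lemma circleAverage_comp_mul (g : ℂ → ℝ) (c ρ : ℝ) :
    Real.circleAverage (fun z => g (c * z)) 0 ρ = Real.circleAverage g 0 (c * ρ) := by
  simp only [Real.circleAverage, circleMap_zero, Complex.ofReal_mul, mul_assoc]

lemma norm_ofReal_mul_le {c : ℝ} (hc0 : 0 ≤ c) (hc1 : c ≤ 1) (z : ℂ) : ‖(c : ℂ) * z‖ ≤ ‖z‖ := by
  rw [norm_mul, Complex.norm_real, Real.norm_of_nonneg hc0]
  exact mul_le_of_le_one_left (norm_nonneg z) hc1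

lemma continuousOn_comp_ofReal_mul {f : ℂ → ℂ} (hf : ContinuousOn f (ball 0 1)) {c : ℝ}
    (hc0 : 0 ≤ c) (hc1 : c ≤ 1) : ContinuousOn (fun z => f (c * z)) (ball 0 1) :=
  hf.comp (by fun_prop) fun z hz => by
    rw [mem_ball_zero_iff] at hz ⊢
    exact (norm_ofReal_mul_le hc0 hc1 z).trans_lt hz

lemma lintegral_circleAverage_betaMeasure_le {f : ℂ → ℂ} (hf : Differentiable ℂ f) {β γ q : ℝ}
    (hβ : 1 < β) (hβγ : β ≤ γ) (hq : 2 ≤ q) :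
    ∫⁻ x, ENNReal.ofReal (Real.circleAverage (fun z => ‖f z‖ ^ q) 0 √(β / γ * x))
        ∂(ProbabilityTheory.betaMeasure 1 (β - 1)) ≤
      ∫⁻ x, ENNReal.ofReal (Real.circleAverage (fun z => ‖f z‖ ^ q) 0 √x)
        ∂(ProbabilityTheory.betaMeasure 1 (γ - 1)) := by
  have hβ0 : 0 < β := one_pos.trans hβ
  rcases hβγ.eq_or_lt with rfl | hlt
  · simp only [div_self hβ0.ne', one_mul, le_refl]
  have hcont := continuous_circleAverage_norm_rpow hf.continuous (zero_le_two.trans hq)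
  have h := lintegral_map_mul_le_lintegral_betaMeasure one_pos (sub_pos.2 hβ) (sub_pos.2 hlt)
    (hcont.comp Real.continuous_sqrt)
    (fun _ => Real.circleAverage_nonneg_of_nonneg fun _ _ => by positivity)
    (convexOn_circleAverage_norm_rpow_sqrt hf hq)
  have hγ : β - 1 + (γ - β) = γ - 1 := by ring
  simpa only [add_sub_cancel, hγ, Function.comp_apply] using h

lemma lintegral_dilation_le {f : ℂ → ℂ} (hf : Differentiable ℂ f) {β γ q r : ℝ} (hβ : 1 < β)
    (hβγ : β ≤ γ) (hq : 2 ≤ q) (hr0 : 0 ≤ r) (hr : r ^ 2 ≤ β / γ) :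
    ∫⁻ z, ENNReal.ofReal (‖f (r * z)‖ ^ q) ∂(bergmanMeasure β) ≤
      ∫⁻ z, ENNReal.ofReal (‖f z‖ ^ q) ∂(bergmanMeasure γ) := by
  have hq0 : 0 ≤ q := zero_le_two.trans hq
  have hcont := hf.continuous
  rw [lintegral_norm_rpow_bergmanMeasure_eq_betaMeasure hcont.continuousOn hq0 (hβ.trans_le hβγ),
    lintegral_norm_rpow_bergmanMeasure_eq_betaMeasure (f := fun z => f (r * z)) (by fun_prop)
      hq0 hβ]
  refine (lintegral_mono fun x => ENNReal.ofReal_le_ofReal ?_).trans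
    (lintegral_circleAverage_betaMeasure_le hf hβ hβγ hq)
  rw [circleAverage_comp_mul fun z => ‖f z‖ ^ q, Real.sqrt_mul ((sq_nonneg r).trans hr)]
  refine monotoneOn_circleAverage_norm_rpow hf hq0 (mem_Ici.2 (by positivity))
    (mem_Ici.2 (by positivity)) ?_
  gcongr
  exact Real.le_sqrt_of_sq_le hr

lemma lintegral_hypercontractive_of_differentiable {f : ℂ → ℂ} (hf : Differentiable ℂ f)
    {α β p q r : ℝ} (hα : 1 < α) (hβ : 1 < β) (hp : 0 < p) (hpq : p ≤ q) (hq : 2 ≤ q)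
    (hβpαq : β * p ≤ α * q) (hr0 : 0 ≤ r) (hr : r ^ 2 ≤ β * p / (α * q)) :
    ∫⁻ z, ENNReal.ofReal (‖f (r * z)‖ ^ q) ∂(bergmanMeasure β) ≤
      (∫⁻ z, ENNReal.ofReal (‖f z‖ ^ p) ∂(bergmanMeasure α)) ^ (q / p) := by
  have hγ : β ≤ α * (q / p) := by rwa [← mul_div_assoc, le_div_iff₀ hp]
  have hratio : β / (α * (q / p)) = β * p / (α * q) := by field_simp
  have hembed := lintegral_bergmanMeasure_mul_le hf hp hα ((one_le_div hp).2 hpq)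
  rw [mul_div_cancel₀ _ hp.ne'] at hembed
  exact (lintegral_dilation_le hf hβ hγ hq hr0 (hr.trans_eq hratio.symm)).trans hembed

end Dilation

section Approximation

variable {f : ℂ → ℂ} {p t α : ℝ}

lemma exists_differentiable_approx (hf : AnalyticOnNhd ℂ f (ball 0 1)) (ht : t ∈ Ioo (0 : ℝ) 1) :
    ∃ (P : ℕ → ℂ → ℂ) (C : ℝ), (∀ n, Differentiable ℂ (P n)) ∧
      (∀ n, ∀ z ∈ closedBall (0 : ℂ) 1, ‖P n z‖ ≤ C) ∧
      ∀ z ∈ closedBall (0 : ℂ) 1, Tendsto (fun n => P n z) atTop (𝓝 (f (t * z))) := by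
  obtain ⟨a, hta, ha1⟩ := exists_between ht.2
  obtain ⟨b, hab, hb1⟩ := exists_between ha1
  have ha0 : 0 < a := ht.1.trans hta
  have hb0 : 0 < b := ha0.trans hab
  lift a to NNReal using ha0.le
  lift b to NNReal using hb0.le
  have hdiff : DifferentiableOn ℂ f (closedBall 0 b) :=
    hf.differentiableOn.mono (closedBall_subset_ball hb1)
  have hunif := (hdiff.hasFPowerSeriesOnBall (mod_cast hb0)).tendstoUniformlyOn' (r' := a)
    (mod_cast hab)
  set S := cauchyPowerSeries f 0 b
  have hmem : ∀ z ∈ closedBall (0 : ℂ) 1, (t : ℂ) * z ∈ ball (0 : ℂ) a := fun z hz => by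
    rw [mem_closedBall_zero_iff] at hz
    rw [mem_ball_zero_iff, norm_mul, Complex.norm_real, Real.norm_of_nonneg ht.1.le]
    exact (mul_le_of_le_one_right ht.1.le hz).trans_lt hta
  have hcont : ContinuousOn (fun z => f (t * z)) (closedBall (0 : ℂ) 1) :=
    hf.continuousOn.comp (by fun_prop) fun z hz => ball_subset_ball ha1.le (hmem z hz)
  obtain ⟨C, hC⟩ := (isCompact_closedBall (0 : ℂ) 1).exists_bound_of_continuousOn hcont
  obtain ⟨N, hN⟩ := eventually_atTop.1 (Metric.tendstoUniformlyOn_iff.1 hunif 1 one_pos)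
  refine ⟨fun n z => S.partialSum (n + N) (t * z - 0), C + 1, fun n => ?_, fun n z hz => ?_,
    fun z hz => (hunif.tendsto_at (hmem z hz)).comp (tendsto_add_atTop_nat N)⟩
  · simp only [FormalMultilinearSeries.partialSum,
      FormalMultilinearSeries.apply_eq_pow_smul_coeff]
    fun_prop
  · have hclose := hN (n + N) (Nat.le_add_left N n) _ (hmem z hz)
    rw [dist_comm, dist_eq_norm] at hclose
    exact (norm_le_norm_add_norm_sub' _ _).trans (add_le_add (hC z hz) hclose.le)

section BoundedConvergence

variable {g : ℂ → ℂ} {P : ℕ → ℂ → ℂ} {C : ℝ}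

lemma tendsto_lintegral_norm_rpow (hP : ∀ n, Continuous (P n))
    (hC : ∀ n, ∀ z ∈ closedBall (0 : ℂ) 1, ‖P n z‖ ≤ C)
    (hlim : ∀ z ∈ closedBall (0 : ℂ) 1, Tendsto (fun n => P n z) atTop (𝓝 (g z)))
    (hp : 0 ≤ p) (hα : 1 < α) :
    Tendsto (fun n => ∫⁻ z, ENNReal.ofReal (‖P n z‖ ^ p) ∂(bergmanMeasure α)) atTop
      (𝓝 (∫⁻ z, ENNReal.ofReal (‖g z‖ ^ p) ∂(bergmanMeasure α))) := by
  have := isProbabilityMeasure_bergmanMeasure hα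
  have hmem := (ae_bergmanMeasure_mem_ball α).mono fun z hz => ball_subset_closedBall hz
  refine tendsto_lintegral_of_dominated_convergence (fun _ => ENNReal.ofReal (C ^ p))
    (fun n => ?_) (fun n => hmem.mono fun z hz => ?_) ?_ (hmem.mono fun z hz => ?_)
  · have := (hP n).measurable
    fun_prop
  · exact ENNReal.ofReal_le_ofReal (Real.rpow_le_rpow (norm_nonneg _) (hC n z hz) hp)
  · rw [lintegral_const, measure_univ, mul_one]
    exact ENNReal.ofReal_ne_top
  · exact ENNReal.tendsto_ofReal ((hlim z hz).norm.rpow_const (.inr hp))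

lemma tendsto_circleAverage_norm_rpow (hP : ∀ n, Continuous (P n))
    (hC : ∀ n, ∀ z ∈ closedBall (0 : ℂ) 1, ‖P n z‖ ≤ C)
    (hlim : ∀ z ∈ closedBall (0 : ℂ) 1, Tendsto (fun n => P n z) atTop (𝓝 (g z)))
    (hp : 0 ≤ p) {ρ : ℝ} (hρ : ρ ∈ Icc (0 : ℝ) 1) :
    Tendsto (fun n => Real.circleAverage (fun z => ‖P n z‖ ^ p) 0 ρ) atTop
      (𝓝 (Real.circleAverage (fun z => ‖g z‖ ^ p) 0 ρ)) := by
  have hmem : ∀ θ, circleMap 0 ρ θ ∈ closedBall 0 1 := fun θ => by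
    rw [mem_closedBall_zero_iff, norm_circleMap_zero, abs_of_nonneg hρ.1]
    exact hρ.2
  refine (intervalIntegral.tendsto_integral_filter_of_dominated_convergence (fun _ => C ^ p)
    (.of_forall fun n => ?_) (.of_forall fun n => .of_forall fun θ _ => ?_)
    intervalIntegrable_const (.of_forall fun θ _ => ?_)).const_smul _
  · exact (((hP n).comp (continuous_circleMap 0 ρ)).norm.rpow_const
      fun _ => .inr hp).aestronglyMeasurable
  · rw [Real.norm_of_nonneg (by positivity)]
    exact Real.rpow_le_rpow (norm_nonneg _) (hC n _ (hmem θ)) hp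
  · exact (hlim _ (hmem θ)).norm.rpow_const (.inr hp)

end BoundedConvergence

lemma circleAverage_norm_rpow_mul_le (hf : AnalyticOnNhd ℂ f (ball 0 1)) (hp : 0 ≤ p)
    (ht : t ∈ Icc (0 : ℝ) 1) {ρ : ℝ} (hρ : ρ ∈ Ioo (0 : ℝ) 1) :
    Real.circleAverage (fun z => ‖f z‖ ^ p) 0 (ρ * t) ≤
      Real.circleAverage (fun z => ‖f z‖ ^ p) 0 ρ := by
  obtain ⟨P, C, hP, hC, hlim⟩ := exists_differentiable_approx hf hρ
  have hconv : ∀ s ∈ Icc (0 : ℝ) 1,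
      Tendsto (fun n => Real.circleAverage (fun z => ‖P n z‖ ^ p) 0 s) atTop
        (𝓝 (Real.circleAverage (fun z => ‖f z‖ ^ p) 0 (ρ * s))) := fun s hs => by
    rw [← circleAverage_comp_mul fun z => ‖f z‖ ^ p]
    exact tendsto_circleAverage_norm_rpow (fun n => (hP n).continuous) hC hlim hp hs
  have hone := hconv 1 (right_mem_Icc.2 zero_le_one)
  rw [mul_one] at hone
  exact le_of_tendsto_of_tendsto' (hconv t ht) hone fun n =>
    monotoneOn_circleAverage_norm_rpow (hP n) hp ht.1 (mem_Ici.2 zero_le_one) ht.2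

lemma lintegral_dilation_le_self (hf : AnalyticOnNhd ℂ f (ball 0 1)) (hp : 0 ≤ p) (hα : 1 < α)
    (ht : t ∈ Icc (0 : ℝ) 1) :
    ∫⁻ z, ENNReal.ofReal (‖f (t * z)‖ ^ p) ∂(bergmanMeasure α) ≤
      ∫⁻ z, ENNReal.ofReal (‖f z‖ ^ p) ∂(bergmanMeasure α) := by
  rw [lintegral_norm_rpow_bergmanMeasure_eq_betaMeasure hf.continuousOn hp hα,
    lintegral_norm_rpow_bergmanMeasure_eq_betaMeasure
      (continuousOn_comp_ofReal_mul hf.continuousOn ht.1 ht.2) hp hα]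
  refine lintegral_mono_ae ((ae_betaMeasure_mem_Ioo 1 (α - 1)).mono fun x hx =>
    ENNReal.ofReal_le_ofReal ?_)
  rw [circleAverage_comp_mul fun z => ‖f z‖ ^ p, mul_comm]
  refine circleAverage_norm_rpow_mul_le hf hp ht ⟨Real.sqrt_pos.2 hx.1, ?_⟩
  rw [Real.sqrt_lt' one_pos, one_pow]
  exact hx.2

lemma lintegral_norm_rpow_le_of_forall_dilation_le (hf : ContinuousOn f (ball 0 1)) (hp : 0 ≤ p)
    {C : ℝ≥0∞}
    (h : ∀ t ∈ Ioo (0 : ℝ) 1, ∫⁻ z, ENNReal.ofReal (‖f (t * z)‖ ^ p) ∂(bergmanMeasure α) ≤ C) :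
    ∫⁻ z, ENNReal.ofReal (‖f z‖ ^ p) ∂(bergmanMeasure α) ≤ C := by
  obtain ⟨t, -, ht, htlim⟩ := exists_seq_strictMono_tendsto' (zero_lt_one' ℝ)
  have hlim : ∀ z ∈ ball (0 : ℂ) 1, Tendsto (fun n => ENNReal.ofReal (‖f (t n * z)‖ ^ p)) atTop
      (𝓝 (ENNReal.ofReal (‖f z‖ ^ p))) := fun z hz => by
    have hmul : Tendsto (fun n => (t n : ℂ) * z) atTop (𝓝 z) := by
      simpa using! ((Complex.continuous_ofReal.tendsto 1).comp htlim).mul_const z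
    exact ENNReal.tendsto_ofReal (((hf.continuousAt (isOpen_ball.mem_nhds hz)).tendsto.comp
      hmul).norm.rpow_const (.inr hp))
  calc ∫⁻ z, ENNReal.ofReal (‖f z‖ ^ p) ∂(bergmanMeasure α)
      = ∫⁻ z, liminf (fun n => ENNReal.ofReal (‖f (t n * z)‖ ^ p)) atTop ∂(bergmanMeasure α) :=
        lintegral_congr_ae ((ae_bergmanMeasure_mem_ball α).mono fun z hz =>
          (hlim z hz).liminf_eq.symm)
    _ ≤ liminf (fun n => ∫⁻ z, ENNReal.ofReal (‖f (t n * z)‖ ^ p) ∂(bergmanMeasure α)) atTop :=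
        lintegral_liminf_le' fun n => aemeasurable_bergmanMeasure_of_continuousOn
          (ENNReal.continuous_ofReal.comp_continuousOn
            ((continuousOn_comp_ofReal_mul hf (ht n).1.le (ht n).2.le).norm.rpow_const
              fun _ _ => .inr hp)) α
    _ ≤ C := liminf_le_of_frequently_le' (.of_forall fun n => h _ (ht n))

lemma lintegral_hypercontractive_dilation (hf : AnalyticOnNhd ℂ f (ball 0 1)) {β q r : ℝ}
    (hα : 1 < α) (hβ : 1 < β) (hp : 0 < p) (hpq : p ≤ q) (hq : 2 ≤ q) (hβpαq : β * p ≤ α * q)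
    (hr0 : 0 ≤ r) (hr1 : r ≤ 1) (hr : r ^ 2 ≤ β * p / (α * q)) (ht : t ∈ Ioo (0 : ℝ) 1) :
    ∫⁻ z, ENNReal.ofReal (‖f (t * (r * z))‖ ^ q) ∂(bergmanMeasure β) ≤
      (∫⁻ z, ENNReal.ofReal (‖f (t * z)‖ ^ p) ∂(bergmanMeasure α)) ^ (q / p) := by
  obtain ⟨P, C, hP, hC, hlim⟩ := exists_differentiable_approx hf ht
  have hcont := fun n => (hP n).continuous
  have hmem : ∀ z ∈ closedBall (0 : ℂ) 1, (r : ℂ) * z ∈ closedBall (0 : ℂ) 1 := fun z hz => by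
    rw [mem_closedBall_zero_iff] at hz ⊢
    exact (norm_ofReal_mul_le hr0 hr1 z).trans hz
  have hleft := tendsto_lintegral_norm_rpow (P := fun n z => P n (r * z))
    (fun n => (hcont n).comp (by fun_prop)) (fun n z hz => hC n _ (hmem z hz))
    (fun z hz => hlim _ (hmem z hz)) (zero_le_two.trans hq) hβ
  have hright := tendsto_lintegral_norm_rpow hcont hC hlim hp.le hα
  exact le_of_tendsto_of_tendsto' hleft (hright.ennrpow_const (q / p)) fun n =>
    lintegral_hypercontractive_of_differentiable (hP n) hα hβ hp hpq hq hβpαq hr0 hr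

end Approximation

/-- Sufficiency in Theorem 1.1: for `1 < α, β < ∞`, `0 < p ≤ q < ∞`, `q ≥ 2`,
`βp ≤ αq` and `0 ≤ r < 1` with `r² ≤ βp/(αq)`, the dilation `T_r f(z) = f(rz)`
satisfies `‖T_r f‖_{A_β^q} ≤ ‖f‖_{A_α^p}` for every analytic `f` on the disk. -/
theorem hypercontractive_sufficiency
    (α β p q : ℝ) (hα : 1 < α) (hβ : 1 < β) (hp : 0 < p) (hpq : p ≤ q)
    (hq2 : 2 ≤ q) (hβpαq : β * p ≤ α * q)
    (r : ℝ) (hr0 : 0 ≤ r) (hr1 : r < 1) (hr : r ^ 2 ≤ β * p / (α * q))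
    (f : ℂ → ℂ) (hf : AnalyticOnNhd ℂ f (ball (0 : ℂ) 1)) :
    (∫⁻ z, ENNReal.ofReal (‖f ((r : ℂ) * z)‖ ^ q) ∂(bergmanMeasure β)) ^ (1 / q) ≤
      (∫⁻ z, ENNReal.ofReal (‖f z‖ ^ p) ∂(bergmanMeasure α)) ^ (1 / p) := by
  have hq0 : 0 < q := hp.trans_le hpq
  have hpow : ∫⁻ z, ENNReal.ofReal (‖f (r * z)‖ ^ q) ∂(bergmanMeasure β) ≤
      (∫⁻ z, ENNReal.ofReal (‖f z‖ ^ p) ∂(bergmanMeasure α)) ^ (q / p) := by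
    refine lintegral_norm_rpow_le_of_forall_dilation_le
      (continuousOn_comp_ofReal_mul hf.continuousOn hr0 hr1.le) hq0.le fun t ht => ?_
    simp only [mul_left_comm (r : ℂ)]
    exact (lintegral_hypercontractive_dilation hf hα hβ hp hpq hq2 hβpαq hr0 hr1.le hr ht).trans
      (ENNReal.rpow_le_rpow (lintegral_dilation_le_self hf hp.le hα (Ioo_subset_Icc_self ht))
        (by positivity))
  calc (∫⁻ z, ENNReal.ofReal (‖f (r * z)‖ ^ q) ∂(bergmanMeasure β)) ^ (1 / q)
      ≤ ((∫⁻ z, ENNReal.ofReal (‖f z‖ ^ p) ∂(bergmanMeasure α)) ^ (q / p)) ^ (1 / q) :=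
        ENNReal.rpow_le_rpow hpow (by positivity)
    _ = (∫⁻ z, ENNReal.ofReal (‖f z‖ ^ p) ∂(bergmanMeasure α)) ^ (1 / p) := by
        rw [← ENNReal.rpow_mul, div_mul_div_cancel₀' hq0.ne']
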